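/- Let (W,S) be a Coxeter system of finite rank with Coxeter matrix m, and let B be a base of (W,S). Then ⟨B⟩ is unreduced if and only if either (i) B has type C_{2q+1} for some q ≥ 1 and, with a the element of B lying on the end of the 4-labelled edge of the C-diagram of B, m(s,t) = 2 for all (s,t) ∈ (S−B)×B with m(s,a) < ∞; or (ii) B = {a,b} has type D_2(4q+2) for some q ≥ 1 and either v = a or v = b has the property that m(s,a) = m(s,b) = 2 for all s ∈ S−B with m(s,v) < ∞. In particular, every special base {a,b} (with (a,b) a special pair) is unreduced. -/

import Mathlib

/-!
A base `J` is unreduced exactly when `⟨J⟩` splits off a central factor of order two in a way that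
extends to all of `W`. Throughout, `W` acts by its geometric representation, which preserves the
Tits form, and `par cs J` is the visual subgroup `⟨J⟩`; the form is positive definite on the span
`VJ J` of the simple roots of a base (`posDef`), and `J^⊥` is the set of generators commuting with
all of `J` (`perp`).

An unreduced base satisfies one of the two conditions (`forward`). After conjugation there is a
base `J'` of another Coxeter system of `W` with `⁅⟨J⟩, ⟨J⟩⁆ = ⁅⟨J'⟩, ⟨J'⟩⁆` and `|⟨J'⟩| < |⟨J⟩|`.
The normalizer of this commutator subgroup is `⟨J⟩ × ⟨J^⊥⟩` (`nrm_eq`), hence also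
`⟨J'⟩ × ⟨J'^⊥⟩`. The projection `⟨J⟩ → ⟨J'⟩` is not injective, and its kernel is central, hence
generated by an element `z` acting as `-1` on `VJ J` (`center_par`). From the two decompositions
come two linear characters of `⟨J⟩` (`exists_characters`): one, `φ`, with `φ z = -1`, and one, `ψ`,
with `ψ z = 1` but `ψ ≠ 1`. If `v ∈ J` has `φ v = -1` and `s ∉ J` has a finite label with `v`, then
`s` commutes with `J`: finite subgroups lie in finite stabilizers of linear forms (`exists_stab`),
and such a stabilizer containing `s` and `v` leads to one containing `J ∪ {s}`, which contradicts
the maximality of `J` unless `s ∈ J^⊥`. Two distinct nontrivial characters exist only if some label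
greater than `2` is even, and positive definiteness then leaves the dihedral diagrams, the chains
with labels `4, 3, …, 3`, and `F₄`. As `z` is an explicit power of a product of generators
(`dihedral_neg`, `Chain.neg`, `F4_neg`), the equation `φ z = -1` excludes `F₄`, makes the rank of
the chain odd or the dihedral label congruent to `2` mod `4`, and singles out the end with `φ = -1`.

Conversely, under either condition `J` has an end `a`, joined only to `b ∈ J` and by an even label
`2k`, such that generators outside `J` have label `∞` with `a` or commute with `J` (`Leaf`). The
element `ζ` acting as `-1` is a central involution of `⟨J⟩` sent to `-1` by the character of `W`
with `a ↦ -1` and all other generators mapping to `1`. Replacing the generator `a` of `W` by the two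
generators `aba` and `ζ` again gives Coxeter generators (`newM`, `newSys`). The inverse homomorphism
exists because `⟨J⟩` is the semidirect product of the kernel of that character, a Coxeter group on
`J` with `a` replaced by `aba`, and `⟨a⟩` acting by the diagram automorphism `aba ↔ b` (`Fold`,
`tau`), so that `a` is `ζ` times the first component of `ζ`. The set `J` with `a` replaced by `aba`
is a base of the new system (`new_base`); it generates a proper subgroup of `⟨J⟩` (`new_card`)
which together with the central element `ζ` generates `⟨J⟩`, and therefore has the same commutator
subgroup (`new_commutator`).
-/

variable {W : Type*} [Group W]

/-- `S` is a set of Coxeter generators of the group `W`, with Coxeter matrix given by the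
restriction of `m` to `S × S` (the value `0` of `m` encodes `∞`). -/
def IsCoxeterSystemOn (m : W → W → ℕ) (S : Set W) : Prop :=
  ∃ (cm : CoxeterMatrix S) (cs : CoxeterSystem cm W),
    (∀ s : S, cs.simple s = (s : W)) ∧ ∀ s t : S, cm.M s t = m s t

/-- The subset `B` is irreducible: its Coxeter diagram (edges between distinct `x, y` with
`m x y > 2`, including `m x y = ∞`, i.e. `m x y = 0`) is nonempty and connected. -/
def IsIrreducibleOn (m : W → W → ℕ) (B : Set W) : Prop :=
  B.Nonempty ∧ ∀ u ∈ B, ∀ v ∈ B,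
    Relation.ReflTransGen
      (fun x y => x ∈ B ∧ y ∈ B ∧ x ≠ y ∧ (m x y = 0 ∨ 2 < m x y)) u v

/-- `B` is a base of the Coxeter system `(W, S)`: the visual subgroup `⟨B⟩` is a noncyclic,
maximal, finite, irreducible visual subgroup. -/
def IsBase (m : W → W → ℕ) (S B : Set W) : Prop :=
  B ⊆ S ∧ IsIrreducibleOn m B ∧ (Subgroup.closure B : Set W).Finite ∧
    ¬ IsCyclic ↥(Subgroup.closure B) ∧
    ∀ B' : Set W, B' ⊆ S → B ⊆ B' → IsIrreducibleOn m B' →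
      (Subgroup.closure B' : Set W).Finite → B' = B

/-- The base `B` matches the base `B'`: the commutator subgroups of the visual subgroups
`⟨B⟩` and `⟨B'⟩` are conjugate in `W`. -/
def Matches (B B' : Set W) : Prop :=
  ∃ w : W,
    Subgroup.map ((MulAut.conj w).toMonoidHom)
        (⁅Subgroup.closure B, Subgroup.closure B⁆ : Subgroup W)
      = ⁅Subgroup.closure B', Subgroup.closure B'⁆

/-- `(⟨B⟩, B)` has the isomorphism type of the Coxeter system of the Coxeter matrix `std`. -/
def HasType (m : W → W → ℕ) (B : Set W) {n : ℕ} (std : Fin n → Fin n → ℕ) : Prop :=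
  ∃ e : ↥B ≃ Fin n, ∀ u v : ↥B, m u v = std (e u) (e v)

/-- The Coxeter matrix of type `Aₙ` (Coxeter's notation): linear diagram, all labels 3. -/
def aMat (n : ℕ) : Fin n → Fin n → ℕ := fun i j =>
  if i = j then 1 else if i.val + 1 = j.val ∨ j.val + 1 = i.val then 3 else 2

/-- The Coxeter matrix of type `Cₙ` in Coxeter's notation (Bourbaki's `Bₙ`):
linear diagram with labels 3, …, 3, 4. -/
def cMat (n : ℕ) : Fin n → Fin n → ℕ := fun i j =>
  if i = j then 1
  else if i.val + 1 = j.val ∨ j.val + 1 = i.val then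
    (if i.val + 1 = n ∨ j.val + 1 = n then 4 else 3)
  else 2

/-- The Coxeter matrix of type `Bₙ` in Coxeter's notation (Bourbaki's `Dₙ`), for `n ≥ 3`:
a chain `0, …, n-2` with labels 3 together with the edge `{n-3, n-1}` labelled 3. -/
def bMat (n : ℕ) : Fin n → Fin n → ℕ := fun i j =>
  if i = j then 1
  else if ((i.val + 1 = j.val ∧ j.val + 2 ≤ n) ∨ (j.val + 1 = i.val ∧ i.val + 2 ≤ n))
      ∨ (i.val + 3 = n ∧ j.val + 1 = n) ∨ (j.val + 3 = n ∧ i.val + 1 = n) then 3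
  else 2

/-- The dihedral Coxeter matrix `D₂(k)` (i.e. `I₂(k)`). -/
def d2Mat (k : ℕ) : Fin 2 → Fin 2 → ℕ := fun i j => if i = j then 1 else k

/-- The Coxeter matrix of type `G₃` in Coxeter's notation (i.e. `H₃`). -/
def g3Mat : Fin 3 → Fin 3 → ℕ := ![![1,3,2], ![3,1,5], ![2,5,1]]

/-- The Coxeter matrix of type `G₄` in Coxeter's notation (i.e. `H₄`). -/
def g4Mat : Fin 4 → Fin 4 → ℕ := ![![1,3,2,2], ![3,1,3,2], ![2,3,1,5], ![2,2,5,1]]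

/-- The Coxeter matrix of type `F₄`. -/
def f4Mat : Fin 4 → Fin 4 → ℕ := ![![1,3,2,2], ![3,1,4,2], ![2,4,1,3], ![2,2,3,1]]

/-- The 2-part of `k`: the largest power of 2 dividing `k` (with `0` encoding `∞`;
the 2-part of `∞` is `∞`). -/
def twoPart (k : ℕ) : ℕ := if k = 0 then 0 else 2 ^ (k.factorization 2)

/-- The subgroup `N_b`: the normal closure in `W` of the elements `(st) ^ b(s,t)` for
`s, t ∈ S` with `m s t < ∞`, where `b(s,t)` is the 2-part of `m s t`. -/
def NbSubgroup (m : W → W → ℕ) (S : Set W) : Subgroup W :=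
  Subgroup.normalClosure
    {x | ∃ s ∈ S, ∃ t ∈ S, m s t ≠ 0 ∧ x = (s * t) ^ twoPart (m s t)}

instance (m : W → W → ℕ) (S : Set W) : (NbSubgroup m S).Normal :=
  Subgroup.normalClosure_normal

/-- `(a, b)` is a special pair of elements of `S`: `m a b ≡ 2 mod 4` and either `v = a` or
`v = b` has the property that `m s a = m s b = 2` for every `s ∈ S \ {a, b}` with
`m s v < ∞`. -/
def IsSpecialPair (m : W → W → ℕ) (S : Set W) (a b : W) : Prop :=
  a ∈ S ∧ b ∈ S ∧ a ≠ b ∧ m a b % 4 = 2 ∧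
    ((∀ s ∈ S, s ≠ a → s ≠ b → m s a ≠ 0 → m s a = 2 ∧ m s b = 2) ∨
     (∀ s ∈ S, s ≠ a → s ≠ b → m s b ≠ 0 → m s a = 2 ∧ m s b = 2))

open scoped Classical in
/-- `m̄ a b = 2` if `(a, b)` is a special pair and `m̄ a b = m a b` otherwise. -/
noncomputable def mbar (m : W → W → ℕ) (S : Set W) (a b : W) : ℕ :=
  if IsSpecialPair m S a b then 2 else m a b

/-- The subgroup `N_e`: the normal closure in `W` of the elements `st` with `m s t` odd
together with the elements `(ab)²` with `(a, b)` a special pair. -/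
def NeSubgroup (m : W → W → ℕ) (S : Set W) : Subgroup W :=
  Subgroup.normalClosure
    ({x | ∃ s ∈ S, ∃ t ∈ S, Odd (m s t) ∧ x = s * t} ∪
     {x | ∃ a b : W, IsSpecialPair m S a b ∧ x = (a * b) ^ 2})

instance (m : W → W → ℕ) (S : Set W) : (NeSubgroup m S).Normal :=
  Subgroup.normalClosure_normal

/-- The word length of `w` with respect to the generating set `B`. -/
noncomputable def wordLength (B : Set W) (w : W) : ℕ :=
  sInf {n | ∃ l : List W, (∀ x ∈ l, x ∈ B) ∧ l.length = n ∧ l.prod = w}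

/-- `z` is a longest element of the visual subgroup `⟨B⟩`. -/
def IsLongestElement (B : Set W) (z : W) : Prop :=
  z ∈ Subgroup.closure B ∧
    ∀ w ∈ Subgroup.closure B, wordLength B w ≤ wordLength B z

/-- The basic subgroup `⟨B⟩` of `(W, S)` is reduced: for every set of Coxeter generators `S'`
of `W`, any base of `(W, S')` matching `B` generates a subgroup of order at least `|⟨B⟩|`. -/
def IsReducedBase (m : W → W → ℕ) (S B : Set W) : Prop :=
  ∀ (S' : Set W) (m' : W → W → ℕ) (B' : Set W),
    IsCoxeterSystemOn m' S' → S'.Finite → IsBase m' S' B' → Matches B B' →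
      Nat.card ↥(Subgroup.closure B) ≤ Nat.card ↥(Subgroup.closure B')

/-- The isomorphism type of `(⟨B⟩, B)` belongs to the family `F` of isomorphism types of
Coxeter systems (a family of Coxeter matrices). -/
def TypeIn (F : ∀ n : ℕ, (Fin n → Fin n → ℕ) → Prop) (m : W → W → ℕ) (B : Set W) : Prop :=
  ∃ (n : ℕ) (Mt : Fin n → Fin n → ℕ), F n Mt ∧ HasType m B Mt

/-- The subgroup `N(F)`: the normal closure in `W` of the commutator subgroups of all
reduced basic subgroups of `(W, S)` of type in `F` together with the commutator subgroups of
all unreduced basic subgroups of `(W, S)` matching a reduced basic subgroup of type in `F`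
of another system `(W, S')`. -/
def NFSubgroup (F : ∀ n : ℕ, (Fin n → Fin n → ℕ) → Prop)
    (m : W → W → ℕ) (S : Set W) : Subgroup W :=
  Subgroup.normalClosure
    {x | ∃ B : Set W, IsBase m S B ∧
      x ∈ (⁅Subgroup.closure B, Subgroup.closure B⁆ : Subgroup W) ∧
      ((IsReducedBase m S B ∧ TypeIn F m B) ∨
       (¬ IsReducedBase m S B ∧ ∃ (S' : Set W) (m' : W → W → ℕ) (B' : Set W),
          IsCoxeterSystemOn m' S' ∧ S'.Finite ∧ IsBase m' S' B' ∧
          IsReducedBase m' S' B' ∧ TypeIn F m' B' ∧ Matches B B'))}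

instance (F : ∀ n : ℕ, (Fin n → Fin n → ℕ) → Prop) (m : W → W → ℕ) (S : Set W) :
    (NFSubgroup F m S).Normal :=
  Subgroup.normalClosure_normal

/-- The normal closure, within the subgroup `H`, of the subset `X ⊆ H`,
as a subgroup of the ambient group. -/
def nClosIn (H : Subgroup W) (X : Set W) : Subgroup W :=
  Subgroup.map H.subtype (Subgroup.normalClosure ((fun x : H => (x : W)) ⁻¹' X))

/-- The generating set for the subgroup `N(⟨B⟩)` of a basic subgroup `⟨B⟩` of rank at least 3:
the commutator subgroup of `⟨B⟩` if the rank is at least 5 or the type is `A₄`, `G₃` or `G₄`;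
`a₁a₃` for type `A₃`; `b₁b₂, b₂b₃` (products of distinct commuting generators) for type `B₄`;
`(c₂c₃)²` for type `C₃`; `c₁c₃` for type `C₄`; and `(f₂f₃)²` for type `F₄`. -/
def genSetNB (m : W → W → ℕ) (B : Set W) : Set W :=
  {x | ((5 ≤ B.ncard ∨ HasType m B (aMat 4) ∨ HasType m B g3Mat ∨ HasType m B g4Mat) ∧
          x ∈ (⁅Subgroup.closure B, Subgroup.closure B⁆ : Subgroup W)) ∨
       (HasType m B (aMat 3) ∧ ∃ u ∈ B, ∃ v ∈ B, u ≠ v ∧ m u v = 2 ∧ x = u * v) ∨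
       (HasType m B (bMat 4) ∧ ∃ u ∈ B, ∃ v ∈ B, u ≠ v ∧ m u v = 2 ∧ x = u * v) ∨
       (HasType m B (cMat 3) ∧ ∃ u ∈ B, ∃ v ∈ B, m u v = 4 ∧ x = (u * v) ^ 2) ∨
       (HasType m B (cMat 4) ∧ ∃ u ∈ B, ∃ p ∈ B, ∃ v ∈ B, ∃ q ∈ B,
          m u p = 3 ∧ m p v = 3 ∧ m v q = 4 ∧ m u v = 2 ∧ x = u * v) ∨
       (HasType m B f4Mat ∧ ∃ u ∈ B, ∃ v ∈ B, m u v = 4 ∧ x = (u * v) ^ 2)}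

/-- The subgroup `N(⟨B⟩)` of the visual subgroup `⟨B⟩`, viewed as a subgroup of `W`. -/
def NBSubgroup (m : W → W → ℕ) (B : Set W) : Subgroup W :=
  nClosIn (Subgroup.closure B) (genSetNB m B)

/-- The subgroup `N(W)`: the normal closure in `W` of the subgroups `N(⟨B⟩)` over all
bases `B` of `(W, S)` of rank greater than 2. -/
def NWSubgroup (m : W → W → ℕ) (S : Set W) : Subgroup W :=
  Subgroup.normalClosure
    {x | ∃ B : Set W, IsBase m S B ∧ 2 < B.ncard ∧ x ∈ NBSubgroup m B}

instance (m : W → W → ℕ) (S : Set W) : (NWSubgroup m S).Normal :=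
  Subgroup.normalClosure_normal

set_option linter.unusedSectionVars false
set_option linter.unusedSimpArgs false

/-! ### The geometric representation -/

namespace CoxGeom

open Real

/-- The sequence `0, 1, 2c, 4c² - 1, …`; for `c = cos θ` its `n`-th term is
`sin (n θ) / sin θ`. It holds the coefficients of the roots of a dihedral group. -/
def xs (c : ℝ) : ℕ → ℝ
  | 0 => 0
  | 1 => 1
  | (n + 2) => 2 * c * xs c (n + 1) - xs c n

lemma xs_mul_sin (θ : ℝ) (n : ℕ) : xs (cos θ) n * sin θ = sin (n * θ) := by
  induction n using Nat.twoStepInduction with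
  | zero => simp [xs]
  | one => simp [xs]
  | more n h0 h1 =>
    have e1 : sin (((n + 2 : ℕ) : ℝ) * θ) = sin (((n + 1 : ℕ) : ℝ) * θ + θ) := by
      congr 1; push_cast; ring
    have e2 : sin ((n : ℝ) * θ) = sin (((n + 1 : ℕ) : ℝ) * θ - θ) := by
      congr 1; push_cast; ring
    rw [e2, sin_sub] at h0
    rw [e1, sin_add, xs, sub_mul, h0]
    linear_combination 2 * cos θ * h1

lemma xs_one (n : ℕ) : xs 1 n = n := by
  induction n using Nat.twoStepInduction with
  | zero => simp [xs]
  | one => simp [xs]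
  | more n h0 h1 => rw [xs, h0, h1]; push_cast; ring

lemma sin_pi_div_pos {m : ℕ} (hm : 2 ≤ m) : 0 < sin (π / m) := by
  have h2 : (2 : ℝ) ≤ m := by exact_mod_cast hm
  apply sin_pos_of_pos_of_lt_pi
  · positivity
  · rw [div_lt_iff₀ (by linarith)]; nlinarith [pi_pos]

lemma xs_nonneg {m k : ℕ} (hm1 : m ≠ 1) (hk : m = 0 ∨ k ≤ m) : 0 ≤ xs (cos (π / m)) k := by
  rcases Nat.eq_zero_or_pos m with rfl | hpos
  · simp [xs_one]
  · have hm : 2 ≤ m := by omega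
    have hkm : (k : ℝ) ≤ m := by
      have : k ≤ m := by omega
      exact_mod_cast this
    have hs := sin_pi_div_pos hm
    have h := xs_mul_sin (π / m) k
    have : 0 ≤ sin (k * (π / m)) := by
      apply sin_nonneg_of_nonneg_of_le_pi
      · positivity
      · have hm0 : (0 : ℝ) < m := by exact_mod_cast hpos
        rw [← mul_div_assoc, div_le_iff₀ hm0]
        nlinarith [pi_pos]
    by_contra hneg
    push Not at hneg
    nlinarith

lemma xs_period {m : ℕ} (hm : 2 ≤ m) :
    xs (cos (π / m)) (2 * m) = 0 ∧ xs (cos (π / m)) (2 * m + 1) = 1 := by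
  have hs := sin_pi_div_pos hm
  have hm0 : (m : ℝ) ≠ 0 := by positivity
  constructor
  · have h := xs_mul_sin (π / m) (2 * m)
    have : sin (((2 * m : ℕ) : ℝ) * (π / m)) = 0 := by
      rw [← sin_two_pi]; congr 1; push_cast; field_simp
    rw [this] at h
    exact (mul_eq_zero.mp h).resolve_right hs.ne'
  · have h := xs_mul_sin (π / m) (2 * m + 1)
    have : sin (((2 * m + 1 : ℕ) : ℝ) * (π / m)) = sin (π / m) := by
      rw [← sin_add_two_pi (π / m)]; congr 1; push_cast; field_simp; ring
    rw [this] at h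
    exact mul_right_cancel₀ hs.ne' (by rw [h, one_mul])

section Form

variable {I : Type*} [Fintype I] [DecidableEq I] (M : CoxeterMatrix I)

/-- The cosine matrix of `M`; as `π / 0` is `0` here, its entry at `∞` (encoded by `0`)
is `-1`, as it should be. -/
noncomputable def kc (s t : I) : ℝ := -cos (π / M s t)

/-- The Tits form on the span of the simple roots. -/
noncomputable def bil : LinearMap.BilinForm ℝ (I → ℝ) := Matrix.toBilin' (Matrix.of (kc M))

/-- The simple root of `s`. -/
def al (s : I) : I → ℝ := Pi.single s 1

lemma al_same (s : I) : al s s = 1 := by simp [al]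
lemma al_ne {s t : I} (h : t ≠ s) : al s t = 0 := by simp [al, h]
lemma al_nonneg (s t : I) : 0 ≤ al s t := by
  by_cases h : t = s
  · subst h; simp [al]
  · simp [al_ne h]

lemma kc_symm (s t : I) : kc M s t = kc M t s := by simp [kc, M.symmetric s t]

lemma kc_self (s : I) : kc M s s = 1 := by simp [kc]

lemma kc_two {s t : I} (h : M s t = 2) : kc M s t = 0 := by simp [kc, h]

lemma M_ne_one {s t : I} (h : s ≠ t) : M s t ≠ 1 := M.off_diagonal s t h

lemma kc_nonpos {s t : I} (h : s ≠ t) : kc M s t ≤ 0 := by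
  have h1 := M_ne_one M h
  unfold kc
  rcases Nat.eq_zero_or_pos (M s t) with h0 | h0
  · simp [h0]
  · have : (2 : ℝ) ≤ (M s t : ℕ) := by exact_mod_cast (by omega : 2 ≤ M s t)
    have : 0 ≤ cos (π / (M s t : ℕ)) := by
      apply cos_nonneg_of_neg_pi_div_two_le_of_le
      · have : 0 ≤ π / (M s t : ℕ) := by positivity
        linarith [pi_pos]
      · apply div_le_div_of_nonneg_left pi_pos.le (by norm_num) this
    linarith

lemma bil_al (s t : I) : bil M (al s) (al t) = kc M s t := by
  simp [bil, al, Matrix.toBilin'_single]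

lemma sum_al (v : I → ℝ) : v = ∑ s, v s • al s := by
  ext t
  simp [al, Finset.sum_apply, Pi.single_apply]

lemma bil_symm (u v : I → ℝ) : bil M u v = bil M v u := by
  rw [sum_al u, sum_al v]
  simp only [map_sum, map_smul, LinearMap.sum_apply, LinearMap.smul_apply, bil_al, smul_eq_mul,
    Finset.mul_sum]
  rw [Finset.sum_comm]
  refine Finset.sum_congr rfl fun s _ => Finset.sum_congr rfl fun t _ => ?_
  rw [kc_symm]; ring

/-- The reflection in the simple root of `s`. -/
noncomputable def sig (s : I) : Module.End ℝ (I → ℝ) :=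
  LinearMap.id - (2 : ℝ) • (bil M (al s)).smulRight (al s)

lemma sig_apply (s : I) (v : I → ℝ) : sig M s v = v - (2 * bil M (al s) v) • al s := by
  simp [sig, smul_smul]

lemma sig_al (s t : I) : sig M s (al t) = al t - (2 * kc M s t) • al s := by
  rw [sig_apply, bil_al]

lemma sig_al_self (s : I) : sig M s (al s) = - al s := by
  rw [sig_al, kc_self]; module

lemma bil_sig (s : I) (u v : I → ℝ) : bil M (sig M s u) (sig M s v) = bil M u v := by
  simp only [sig_apply, map_sub, LinearMap.sub_apply, map_smul, LinearMap.smul_apply, smul_eq_mul,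
    bil_al, kc_self]
  rw [bil_symm M u (al s)]; ring

lemma sig_sq (s : I) : sig M s * sig M s = 1 := by
  refine LinearMap.ext fun v => ?_
  simp only [Module.End.mul_apply, sig_apply, map_sub, map_smul, smul_eq_mul, bil_al, kc_self,
    Module.End.one_apply]
  module

lemma sig_pow_al {s t : I} (n : ℕ) :
    ((sig M s * sig M t) ^ n) (al s) = xs (-kc M s t) (2 * n + 1) • al s
      + xs (-kc M s t) (2 * n) • al t ∧
    ((sig M s * sig M t) ^ n) (al t) = -xs (-kc M s t) (2 * n) • al s
      + (xs (-kc M s t) (2 * n + 1) + 2 * kc M s t * xs (-kc M s t) (2 * n)) • al t := by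
  induction n with
  | zero => simp [xs]
  | succ n ih =>
    have e1 : xs (-kc M s t) (2 * (n + 1)) = 2 * (-kc M s t) * xs (-kc M s t) (2 * n + 1)
      - xs (-kc M s t) (2 * n) := by
      rw [show 2 * (n + 1) = 2 * n + 2 by ring, xs]
    have e2 : xs (-kc M s t) (2 * (n + 1) + 1) = 2 * (-kc M s t) * xs (-kc M s t) (2 * (n + 1))
      - xs (-kc M s t) (2 * n + 1) := by
      rw [show 2 * (n + 1) + 1 = (2 * n + 1) + 2 by ring, xs]; rfl
    rw [pow_succ', Module.End.mul_apply _ _ (al s), Module.End.mul_apply _ _ (al t), ih.1, ih.2]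
    simp only [Module.End.mul_apply, map_add, map_smul, sig_al, map_sub, kc_self, kc_symm M t s]
    rw [e2, e1]
    constructor <;> module

lemma sig_mul_pow (s t : I) : (sig M s * sig M t) ^ M s t = 1 := by
  by_cases hst : s = t
  · subst hst; simp [sig_sq]
  rcases Nat.eq_zero_or_pos (M s t) with h0 | h0
  · simp [h0]
  have h1 := M_ne_one M hst
  have hm : 2 ≤ M s t := by omega
  have hx := xs_period hm
  have hk : cos (π / (M s t : ℕ)) = - kc M s t := by simp [kc]
  rw [hk] at hx
  have hA := sig_pow_al M (s := s) (t := t) (M s t)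
  rw [hx.1, hx.2] at hA
  have hdet : 1 - kc M s t ^ 2 ≠ 0 := by
    have := sin_pi_div_pos hm
    have h2 := sin_sq_add_cos_sq (π / (M s t : ℕ))
    rw [hk] at h2
    have : 0 < sin (π / (M s t : ℕ)) ^ 2 := by positivity
    nlinarith
  have hperp : ∀ (n : ℕ) (u : I → ℝ), bil M (al s) u = 0 → bil M (al t) u = 0 →
      ((sig M s * sig M t) ^ n) u = u := by
    intro n u hs ht
    induction n with
    | zero => simp
    | succ n ih =>
      rw [pow_succ', Module.End.mul_apply, ih, Module.End.mul_apply, sig_apply M t, ht]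
      simp [sig_apply, hs]
  refine LinearMap.ext fun w => ?_
  rw [Module.End.one_apply]
  -- the component of `w` in the plane of the two roots, by Cramer's rule
  set p := (bil M (al s) w - kc M s t * bil M (al t) w) / (1 - kc M s t ^ 2) with hp
  set q := (bil M (al t) w - kc M s t * bil M (al s) w) / (1 - kc M s t ^ 2) with hq
  have hdec : w = (w - p • al s - q • al t) + p • al s + q • al t := by module
  have := hperp (M s t) (w - p • al s - q • al t)
    (by simp only [map_sub, map_smul, bil_al, kc_self, smul_eq_mul, hp, hq]; field_simp; ring)
    (by simp only [map_sub, map_smul, bil_al, kc_self, smul_eq_mul, hp, hq, kc_symm M t s]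
        field_simp; ring)
  rw [hdec, map_add, map_add, this, map_smul, map_smul, hA.1, hA.2]
  module

end Form
end CoxGeom

/-! ### Roots, and finite subgroups fixing a linear form -/

namespace CoxGeom

open Real CoxeterSystem

section Rep

variable {I : Type*} [Fintype I] [DecidableEq I] {M : CoxeterMatrix I} (cs : CoxeterSystem M W)

/-- The geometric representation. -/
noncomputable def rep : W →* Module.End ℝ (I → ℝ) := cs.lift ⟨sig M, sig_mul_pow M⟩

lemma rep_simple (s : I) : rep cs (cs.simple s) = sig M s := cs.lift_apply_simple _ s

lemma rep_mul (w w' : W) (v : I → ℝ) : rep cs (w * w') v = rep cs w (rep cs w' v) := by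
  rw [map_mul, Module.End.mul_apply]

lemma rep_one (v : I → ℝ) : rep cs 1 v = v := by simp

lemma rep_inv_rep (w : W) (v : I → ℝ) : rep cs w⁻¹ (rep cs w v) = v := by
  rw [← rep_mul, inv_mul_cancel, rep_one]

lemma rep_rep_inv (w : W) (v : I → ℝ) : rep cs w (rep cs w⁻¹ v) = v := by
  rw [← rep_mul, mul_inv_cancel, rep_one]

lemma rep_injective (w : W) : Function.Injective (rep cs w) :=
  Function.LeftInverse.injective (rep_inv_rep cs w)

lemma bil_rep (w : W) (u v : I → ℝ) : bil M (rep cs w u) (rep cs w v) = bil M u v := by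
  induction w using cs.simple_induction_left with
  | one => simp
  | mul_simple_left w i ih => rw [rep_mul, rep_mul, rep_simple, bil_sig, ih]

lemma bil_rep_left (w : W) (u v : I → ℝ) : bil M (rep cs w u) v = bil M u (rep cs w⁻¹ v) := by
  rw [← bil_rep cs w u, rep_rep_inv]

lemma rep_alt (s t : I) (k : ℕ) :
    rep cs (cs.wordProd (alternatingWord s t k)) (al s) =
      if Even k then xs (-kc M s t) (k + 1) • al s + xs (-kc M s t) k • al t
      else xs (-kc M s t) k • al s + xs (-kc M s t) (k + 1) • al t := by
  induction k with
  | zero => simp [xs, alternatingWord]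
  | succ k ih =>
    rw [alternatingWord_succ', wordProd_cons, rep_mul, ih]
    have e : xs (-kc M s t) (k + 1 + 1) = 2 * (-kc M s t) * xs (-kc M s t) (k + 1)
      - xs (-kc M s t) k := by rw [xs]
    by_cases hk : Even k
    · have hk1 : ¬ Even (k + 1) := by simpa [Nat.even_add_one] using hk
      simp only [hk, hk1, if_true, if_false, rep_simple, map_add, map_smul, sig_al, kc_self,
        kc_symm M t s, e]
      module
    · have hk1 : Even (k + 1) := by simpa [Nat.even_add_one] using hk
      simp only [hk, hk1, if_true, if_false, rep_simple, map_add, map_smul, sig_al, kc_self,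
        kc_symm M t s, e]
      module

/-- Splitting off the longest right factor that alternates in `s` and `t`. -/
lemma strip (n : ℕ) : ∀ (w : W) (s t : I), cs.length w = n → ¬ cs.IsRightDescent w s →
    ∃ (v : W) (k : ℕ), w = v * cs.wordProd (alternatingWord s t k) ∧
      cs.length w = cs.length v + k ∧ ¬ cs.IsRightDescent v s ∧ ¬ cs.IsRightDescent v t := by
  induction n using Nat.strong_induction_on with
  | _ n ih =>
    intro w s t hw hs
    by_cases ht : cs.IsRightDescent w t
    · have hl := cs.isRightDescent_iff.mp ht
      have ht' := cs.isRightDescent_iff_not_isRightDescent_mul.mp ht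
      obtain ⟨v, k, hv, hlen, h1, h2⟩ := ih (cs.length (w * cs.simple t)) (by omega) _ t s rfl ht'
      refine ⟨v, k + 1, ?_, by omega, h2, h1⟩
      rw [alternatingWord_succ, wordProd_concat, ← mul_assoc, ← hv,
        simple_mul_simple_cancel_right]
    · exact ⟨w, 0, by simp [alternatingWord], by simp, hs, ht⟩

/-- A simple reflection lengthening `w` from the right belongs to a simple root which `w`
maps to a nonnegative combination of simple roots. -/
theorem rep_al_nonneg : ∀ (n : ℕ) (w : W), cs.length w = n → ∀ s, ¬ cs.IsRightDescent w s →
    0 ≤ rep cs w (al s) := by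
  intro n
  induction n using Nat.strong_induction_on with
  | _ n ih =>
    intro w hw s hs
    by_cases h1 : w = 1
    · subst h1
      rw [rep_one]
      exact fun i => al_nonneg s i
    obtain ⟨t, ht⟩ := cs.exists_rightDescent_of_ne_one h1
    have hst : s ≠ t := by rintro rfl; exact hs ht
    obtain ⟨v, k, hv, hlen, hvs, hvt⟩ := strip cs n w s t hw hs
    have hk0 : k ≠ 0 := by
      rintro rfl
      have : w = v := by simpa [alternatingWord] using hv
      exact hvt (this ▸ ht)
    have hkm : M s t = 0 ∨ k + 1 ≤ M s t := by
      by_contra hcon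
      push Not at hcon
      have hnr := cs.not_isReduced_alternatingWord t s (m := k + 1)
        (by rw [M.symmetric]; exact hcon.1) (by rw [M.symmetric]; omega)
      have hle := cs.length_wordProd_le (alternatingWord t s (k + 1))
      rw [CoxeterSystem.IsReduced] at hnr
      rw [length_alternatingWord] at hnr hle
      have e : w * cs.simple s = v * cs.wordProd (alternatingWord t s (k + 1)) := by
        rw [hv, alternatingWord_succ, wordProd_concat, mul_assoc]
      have h2 := cs.length_mul_le v (cs.wordProd (alternatingWord t s (k + 1)))
      rw [← e] at h2
      have h3 := cs.not_isRightDescent_iff.mp hs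
      omega
    have hc : cos (π / (M s t : ℕ)) = -kc M s t := by simp [kc]
    have hx1 := xs_nonneg (M_ne_one M hst) (k := k) (by omega)
    have hx2 := xs_nonneg (M_ne_one M hst) (k := k + 1) (by omega)
    rw [hc] at hx1 hx2
    have iv := ih _ (by omega) v rfl s hvs
    have it := ih _ (by omega) v rfl t hvt
    rw [hv, rep_mul, rep_alt]
    split_ifs
    · rw [map_add, map_smul, map_smul]
      exact add_nonneg (smul_nonneg hx2 iv) (smul_nonneg hx1 it)
    · rw [map_add, map_smul, map_smul]
      exact add_nonneg (smul_nonneg hx1 iv) (smul_nonneg hx2 it)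

lemma nonneg_of_not_desc {w : W} {s : I} (h : ¬ cs.IsRightDescent w s) : 0 ≤ rep cs w (al s) :=
  rep_al_nonneg cs _ w rfl s h

lemma nonpos_of_desc {w : W} {s : I} (h : cs.IsRightDescent w s) : rep cs w (al s) ≤ 0 := by
  have h1 := nonneg_of_not_desc cs (cs.isRightDescent_iff_not_isRightDescent_mul.mp h)
  rw [rep_mul, rep_simple, sig_al_self, map_neg] at h1
  simpa using h1

lemma not_desc_of_pos {w : W} {s : I} (i : I) (h : 0 < rep cs w (al s) i) :
    ¬ cs.IsRightDescent w s := fun hd => absurd (nonpos_of_desc cs hd i) (not_le.mpr h)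

lemma al_ne_zero (s : I) : (al s : I → ℝ) ≠ 0 := fun h => by
  have := congrFun h s; simp [al_same] at this

lemma eq_one_of_fix {w : W} (h : ∀ s, rep cs w (al s) = al s) : w = 1 := by
  by_contra h1
  obtain ⟨t, ht⟩ := cs.exists_rightDescent_of_ne_one h1
  exact not_desc_of_pos cs t (by rw [h, al_same]; norm_num) ht

lemma eq_of_rep_al {w w' : W} (h : ∀ s, rep cs w (al s) = rep cs w' (al s)) : w = w' := by
  have : w'⁻¹ * w = 1 := eq_one_of_fix cs fun s => by rw [rep_mul, h, rep_inv_rep]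
  exact (inv_mul_eq_one.mp this).symm

lemma conj_simple {w : W} {s t : I} (h : rep cs w (al s) = al t) :
    w * cs.simple s * w⁻¹ = cs.simple t := by
  refine eq_of_rep_al cs fun i => ?_
  rw [rep_mul, rep_mul, rep_simple, rep_simple, sig_apply, map_sub, map_smul, rep_rep_inv, h,
    sig_apply, ← bil_rep_left, h]

lemma simple_inj {s t : I} (h : cs.simple s = cs.simple t) : s = t := by
  by_contra hst
  have h1 : sig M s (al s) = sig M t (al s) := by rw [← rep_simple cs, h, rep_simple cs]
  rw [sig_al_self, sig_al] at h1
  have := congrFun h1 s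
  simp [al_same, al_ne hst] at this
  norm_num at this

lemma kc_neg {s t : I} (h : s ≠ t) (h2 : M s t ≠ 2) : kc M s t < 0 := by
  have h1 := M_ne_one M h
  unfold kc
  rcases Nat.eq_zero_or_pos (M s t) with h0 | h0
  · simp [h0]
  · have h3 : (3 : ℝ) ≤ (M s t : ℕ) := by exact_mod_cast (by omega : 3 ≤ M s t)
    have : 0 < cos (π / (M s t : ℕ)) := by
      apply cos_pos_of_mem_Ioo
      constructor
      · have : 0 ≤ π / (M s t : ℕ) := by positivity
        linarith [pi_pos]
      · apply div_lt_div_of_pos_left pi_pos (by norm_num); linarith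
    linarith

lemma not_commute {s t : I} (h : s ≠ t) (h2 : M s t ≠ 2) :
    cs.simple s * cs.simple t ≠ cs.simple t * cs.simple s := by
  intro hc
  have h3 := kc_neg h h2
  have h1 : rep cs (cs.simple s * cs.simple t) (al s) = rep cs (cs.simple t * cs.simple s) (al s) :=
    by rw [hc]
  simp only [rep_mul, rep_simple, sig_al, sig_al_self, map_sub, map_neg, map_smul,
    kc_symm M t s] at h1
  have := congrFun h1 t
  simp [al_same, al_ne h, al_ne (Ne.symm h), kc_self] at this
  linarith

lemma pow_ne_one_of_zero {s t : I} (h : M s t = 0) {n : ℕ} (hn : n ≠ 0) :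
    (cs.simple s * cs.simple t) ^ n ≠ 1 := by
  intro h1
  have hst : s ≠ t := by rintro rfl; simp at h
  have h2 := (sig_pow_al M (s := s) (t := t) n).1
  have hk : -kc M s t = 1 := by simp [kc, h]
  rw [← rep_simple cs, ← rep_simple cs, ← map_mul, ← map_pow, h1, rep_one, hk, xs_one, xs_one]
    at h2
  have := congrFun h2 t
  simp [al_same, al_ne hst, al_ne (Ne.symm hst)] at this
  exact hn this

lemma simple_ne_one (s : I) : cs.simple s ≠ 1 := by
  intro h
  have := cs.length_simple s
  rw [h] at this; simp at this

/-- The roots, that is, the images of the simple roots. -/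
def IsRoot (β : I → ℝ) : Prop := ∃ (w : W) (s : I), β = rep cs w (al s)

variable {cs} in
lemma IsRoot.rep {β : I → ℝ} (h : IsRoot cs β) (w : W) : IsRoot cs (rep cs w β) := by
  obtain ⟨v, s, rfl⟩ := h
  exact ⟨w * v, s, by rw [rep_mul]⟩

lemma isRoot_al (s : I) : IsRoot cs (al s) := ⟨1, s, by simp⟩

variable {cs} in
lemma IsRoot.pos_or_neg {β : I → ℝ} (h : IsRoot cs β) : 0 ≤ β ∨ β ≤ 0 := by
  obtain ⟨v, s, rfl⟩ := h
  by_cases hd : cs.IsRightDescent v s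
  · exact Or.inr (nonpos_of_desc cs hd)
  · exact Or.inl (nonneg_of_not_desc cs hd)

variable {cs} in
lemma IsRoot.norm {β : I → ℝ} (h : IsRoot cs β) : bil M β β = 1 := by
  obtain ⟨v, s, rfl⟩ := h
  rw [bil_rep, bil_al, kc_self]

variable {cs} in
lemma IsRoot.ne_zero {β : I → ℝ} (h : IsRoot cs β) : β ≠ 0 := by
  rintro rfl
  have := h.norm
  simp at this

variable {cs} in
lemma IsRoot.neg {β : I → ℝ} (h : IsRoot cs β) : IsRoot cs (-β) := by
  obtain ⟨v, s, rfl⟩ := h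
  exact ⟨v * cs.simple s, s, by rw [rep_mul, rep_simple, sig_al_self, map_neg]⟩

variable {cs} in
lemma IsRoot.nonneg_of_pos {β : I → ℝ} (h : IsRoot cs β) (i : I) (hi : 0 < β i) : 0 ≤ β :=
  h.pos_or_neg.resolve_right fun h' => absurd (h' i) (not_le.mpr hi)

variable {cs} in
lemma IsRoot.eq_al {β : I → ℝ} (h : IsRoot cs β) (h0 : 0 ≤ β) (s : I)
    (hs : ∀ i, i ≠ s → β i = 0) : β = al s := by
  have h1 : β = β s • al s := by
    ext i
    by_cases hi : i = s
    · subst hi; simp [al_same]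
    · simp [al_ne hi, hs i hi]
  have h2 := h.norm
  rw [h1] at h2
  simp only [map_smul, LinearMap.smul_apply, bil_al, kc_self, smul_eq_mul, mul_one] at h2
  have h3 : β s = 1 := by nlinarith [h0 s, sq_nonneg (β s - 1), show (0 : ℝ) ≤ β s from h0 s]
  rw [h1, h3, one_smul]

lemma sig_apply_ne {s i : I} (h : i ≠ s) (v : I → ℝ) : sig M s v i = v i := by
  simp [sig_apply, al_ne h]

variable {cs} in
lemma IsRoot.sig_nonneg {β : I → ℝ} (h : IsRoot cs β) (h0 : 0 ≤ β) {s : I} (hs : β ≠ al s) :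
    0 ≤ sig M s β := by
  have : ∃ i, i ≠ s ∧ β i ≠ 0 := by
    by_contra hcon
    push Not at hcon
    exact hs (h.eq_al h0 s hcon)
  obtain ⟨i, his, hi⟩ := this
  have hr := h.rep (cs.simple s)
  rw [rep_simple] at hr
  refine hr.nonneg_of_pos i ?_
  rw [sig_apply_ne his]
  exact lt_of_le_of_ne (h0 i) (Ne.symm hi)

/-- The positive roots made negative by `g`. -/
def inv (g : W) : Set (I → ℝ) := {β | IsRoot cs β ∧ 0 ≤ β ∧ rep cs g β ≤ 0}

lemma inv_one : inv cs 1 = ∅ := by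
  ext β
  simp only [inv, rep_one, Set.mem_ofPred_eq, Set.mem_empty_iff_false, iff_false]
  rintro ⟨h, h0, h1⟩
  exact h.ne_zero (le_antisymm h1 h0)

lemma inv_desc {g : W} {s : I} (hs : cs.IsRightDescent g s) :
    inv cs g = insert (al s) (sig M s '' inv cs (g * cs.simple s)) := by
  have hss : ∀ v, sig M s (sig M s v) = v := fun v => by
    rw [← Module.End.mul_apply, sig_sq, Module.End.one_apply]
  have hroot : ∀ β, IsRoot cs β → IsRoot cs (sig M s β) := fun β h => by
    have := h.rep (cs.simple s); rwa [rep_simple] at this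
  ext β
  constructor
  · rintro ⟨h, h0, h1⟩
    by_cases hβ : β = al s
    · exact Or.inl hβ
    · refine Or.inr ⟨sig M s β, ⟨hroot _ h, h.sig_nonneg h0 hβ, ?_⟩, hss β⟩
      rw [rep_mul, rep_simple, hss]; exact h1
  · rintro (rfl | ⟨γ, ⟨h, h0, h1⟩, rfl⟩)
    · exact ⟨isRoot_al cs s, fun i => al_nonneg s i, nonpos_of_desc cs hs⟩
    · have hγ : γ ≠ al s := by
        rintro rfl
        have h2 := nonneg_of_not_desc cs (cs.isRightDescent_iff_not_isRightDescent_mul.mp hs)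
        exact (h.rep (g * cs.simple s)).ne_zero (le_antisymm h1 h2)
      refine ⟨hroot _ h, h.sig_nonneg h0 hγ, ?_⟩
      rw [rep_mul, rep_simple] at h1
      exact h1

/-- The length of `g` is the number of positive roots made negative by `g`. -/
theorem inv_finite (n : ℕ) : ∀ g : W, cs.length g = n →
    (inv cs g).Finite ∧ (inv cs g).ncard = n := by
  induction n with
  | zero =>
    intro g hg
    rw [cs.length_eq_zero_iff.mp hg, inv_one]
    simp
  | succ n ih =>
    intro g hg
    have h1 : g ≠ 1 := by rintro rfl; simp at hg
    obtain ⟨s, hs⟩ := cs.exists_rightDescent_of_ne_one h1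
    have hl := cs.isRightDescent_iff.mp hs
    obtain ⟨hf, hc⟩ := ih (g * cs.simple s) (by omega)
    have hinj : Function.Injective (sig M s) := by
      rw [← rep_simple cs]; exact rep_injective cs _
    have hnot : al s ∉ sig M s '' inv cs (g * cs.simple s) := by
      rintro ⟨γ, ⟨h, h0, h1⟩, hγ⟩
      have : γ = - al s := hinj (by rw [hγ, map_neg, sig_al_self, neg_neg])
      have h3 := h0 s
      rw [this] at h3
      simp [al_same] at h3
      norm_num at h3
    rw [inv_desc cs hs]
    refine ⟨(hf.image _).insert _, ?_⟩
    rw [Set.ncard_insert_of_notMem hnot (hf.image _), Set.ncard_image_of_injective _ hinj, hc]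

lemma finite_inv (g : W) : (inv cs g).Finite := (inv_finite cs _ g rfl).1
lemma ncard_inv (g : W) : (inv cs g).ncard = cs.length g := (inv_finite cs _ g rfl).2

lemma finite_length_le (n : ℕ) : {w : W | cs.length w ≤ n}.Finite := by
  refine ((List.finite_length_le I n).image cs.wordProd).subset ?_
  intro w hw
  obtain ⟨ω, h1, h2⟩ := cs.exists_isReduced w
  refine ⟨ω, ?_, h2.symm⟩
  change cs.length w ≤ n at hw
  rwa [h2, h1.eq] at hw

/-- The stabilizer of a linear form. -/
def stab (l : Module.Dual ℝ (I → ℝ)) : Subgroup W where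
  carrier := {g | ∀ v, l (rep cs g v) = l v}
  one_mem' v := by rw [rep_one]
  mul_mem' {a b} ha hb v := by rw [rep_mul, ha, hb]
  inv_mem' {a} ha v := by rw [← ha, rep_rep_inv]

lemma mem_stab {l : Module.Dual ℝ (I → ℝ)} {g : W} :
    g ∈ stab cs l ↔ ∀ v, l (rep cs g v) = l v := Iff.rfl

/-- Every finite subgroup fixes a linear form with finite stabilizer. -/
theorem exists_stab (F : Subgroup W) [Finite F] :
    ∃ l : Module.Dual ℝ (I → ℝ), F ≤ stab cs l ∧ (stab cs l : Set W).Finite := by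
  have := Fintype.ofFinite F
  let l : Module.Dual ℝ (I → ℝ) := ∑ f : F, ∑ i, (LinearMap.proj i).comp (rep cs (f : W))
  have hl : ∀ v, l v = ∑ f : F, ∑ i, rep cs (f : W) v i := fun v => by simp [l]
  refine ⟨l, fun g hg v => ?_, ?_⟩
  · rw [hl, hl]
    refine Fintype.sum_equiv (Equiv.mulRight (⟨g, hg⟩ : F)) _ _ fun f => ?_
    simp [rep_mul]
  -- only finitely many positive roots are not positive under the averaged form
  let Z : Set (I → ℝ) := {β | IsRoot cs β ∧ 0 ≤ β ∧ l β ≤ 0}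
  have hZ : Z.Finite := by
    refine (Set.finite_iUnion fun f : F => finite_inv cs (f : W)).subset ?_
    rintro β ⟨h, h0, h1⟩
    rw [Set.mem_iUnion]
    by_contra hcon
    push Not at hcon
    refine absurd h1 (not_le.mpr ?_)
    rw [hl]
    refine Finset.sum_pos (fun f _ => ?_) ⟨1, Finset.mem_univ _⟩
    have hr := h.rep (f : W)
    have hn : 0 ≤ rep cs (f : W) β := hr.pos_or_neg.resolve_right fun h' => hcon f ⟨h, h0, h'⟩
    obtain ⟨i, hi⟩ := Function.ne_iff.mp hr.ne_zero
    exact Finset.sum_pos' (fun i _ => hn i)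
      ⟨i, Finset.mem_univ _, lt_of_le_of_ne (hn i) (Ne.symm hi)⟩
  refine (finite_length_le cs (Z.ncard + Z.ncard)).subset fun g hg => ?_
  have hsub : inv cs g ⊆ Z ∪ (fun β => - rep cs g⁻¹ β) '' Z := by
    rintro α ⟨h, h0, h1⟩
    by_cases hα : l α ≤ 0
    · exact Or.inl ⟨h, h0, hα⟩
    · refine Or.inr ⟨-rep cs g α, ⟨(h.rep g).neg, by simpa using h1, ?_⟩, ?_⟩
      · rw [map_neg, hg α]; linarith
      · simp only [map_neg, rep_inv_rep, neg_neg]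
  have h1 := Set.ncard_le_ncard hsub (hZ.union (hZ.image _))
  have h2 := Set.ncard_union_le Z ((fun β => - rep cs g⁻¹ β) '' Z)
  have h3 := Set.ncard_image_le (f := fun β => - rep cs g⁻¹ β) hZ
  rw [ncard_inv] at h1
  show cs.length g ≤ _
  omega

end Rep
end CoxGeom

/-! ### Visual subgroups -/

namespace CoxGeom

open Real CoxeterSystem

section Par

variable {I : Type*} [Fintype I] [DecidableEq I] {M : CoxeterMatrix I} (cs : CoxeterSystem M W)

/-- The visual subgroup generated by the simple reflections in `J`. -/
def par (J : Set I) : Subgroup W := Subgroup.closure (cs.simple '' J)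

lemma simple_mem_par {J : Set I} {s : I} (h : s ∈ J) : cs.simple s ∈ par cs J :=
  Subgroup.subset_closure ⟨s, h, rfl⟩

lemma par_mono {J K : Set I} (h : J ⊆ K) : par cs J ≤ par cs K :=
  Subgroup.closure_mono (Set.image_mono h)

lemma par_le {J : Set I} {H : Subgroup W} (h : ∀ s ∈ J, cs.simple s ∈ H) : par cs J ≤ H :=
  (Subgroup.closure_le H).mpr (by rintro _ ⟨s, hs, rfl⟩; exact h s hs)

lemma par_induction {J : Set I} {p : W → Prop} (one : p 1)
    (mul : ∀ s ∈ J, ∀ w ∈ par cs J, p w → p (cs.simple s * w)) {g : W} (hg : g ∈ par cs J) : p g := by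
  induction hg using Subgroup.closure_induction_left with
  | one => exact one
  | mul_left x hx y hy ih => obtain ⟨s, hs, rfl⟩ := hx; exact mul s hs y hy ih
  | inv_mul_cancel x hx y hy ih =>
    obtain ⟨s, hs, rfl⟩ := hx
    rw [inv_simple]; exact mul s hs y hy ih

/-- The span of the simple roots in `J`. -/
def VJ (J : Set I) : Submodule ℝ (I → ℝ) where
  carrier := {v | ∀ i, i ∉ J → v i = 0}
  zero_mem' _ _ := rfl
  add_mem' ha hb i hi := by rw [Pi.add_apply, ha i hi, hb i hi, add_zero]
  smul_mem' c v hv i hi := by rw [Pi.smul_apply, hv i hi, smul_zero]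

lemma mem_VJ {J : Set I} {v : I → ℝ} : v ∈ VJ J ↔ ∀ i, i ∉ J → v i = 0 := Iff.rfl

lemma al_mem_VJ {J : Set I} {j : I} (h : j ∈ J) : (al j : I → ℝ) ∈ VJ J := by
  intro i hi
  exact al_ne (by rintro rfl; exact hi h)

lemma VJ_induction {J : Set I} {U : Submodule ℝ (I → ℝ)} (h : ∀ j ∈ J, (al j : I → ℝ) ∈ U) :
    VJ J ≤ U := by
  intro v hv
  rw [sum_al v]
  refine U.sum_mem fun s _ => ?_
  by_cases hs : s ∈ J
  · exact U.smul_mem _ (h s hs)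
  · rw [hv s hs, zero_smul]; exact U.zero_mem

variable (M) in
/-- The orthogonal complement of the simple roots in `J`. -/
def OJ (J : Set I) : Submodule ℝ (I → ℝ) where
  carrier := {v | ∀ j ∈ J, bil M (al j) v = 0}
  zero_mem' _ _ := by simp
  add_mem' ha hb j hj := by rw [map_add, ha j hj, hb j hj, add_zero]
  smul_mem' c v hv j hj := by rw [map_smul, hv j hj, smul_zero]

lemma bil_VJ_OJ {J : Set I} {u v : I → ℝ} (hu : u ∈ VJ J) (hv : v ∈ OJ M J) : bil M u v = 0 := by
  rw [sum_al u]
  simp only [map_sum, map_smul, LinearMap.sum_apply, LinearMap.smul_apply, smul_eq_mul]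
  refine Finset.sum_eq_zero fun s _ => ?_
  by_cases hs : s ∈ J
  · rw [hv s hs, mul_zero]
  · rw [hu s hs, zero_mul]

lemma rep_par_sub_mem {J : Set I} {g : W} (hg : g ∈ par cs J) (v : I → ℝ) :
    rep cs g v - v ∈ VJ J := by
  refine par_induction cs (p := fun g => rep cs g v - v ∈ VJ J) (by simp) ?_ hg
  intro s hs w _ ih i hi
  have := ih i hi
  rw [Pi.sub_apply] at this ⊢
  rw [rep_mul, rep_simple, sig_apply_ne (by rintro rfl; exact hi hs), this]

lemma rep_par_apply {J : Set I} {g : W} (hg : g ∈ par cs J) (v : I → ℝ) {i : I} (hi : i ∉ J) :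
    rep cs g v i = v i := by
  have := rep_par_sub_mem cs hg v i hi
  rwa [Pi.sub_apply, sub_eq_zero] at this

lemma rep_par_mem_VJ {J : Set I} {g : W} (hg : g ∈ par cs J) {v : I → ℝ} (hv : v ∈ VJ J) :
    rep cs g v ∈ VJ J := fun i hi => by rw [rep_par_apply cs hg v hi, hv i hi]

lemma rep_par_OJ {J : Set I} {g : W} (hg : g ∈ par cs J) {v : I → ℝ} (hv : v ∈ OJ M J) :
    rep cs g v = v := by
  refine par_induction cs (p := fun g => rep cs g v = v) (by simp) ?_ hg
  intro s hs w _ ih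
  rw [rep_mul, ih, rep_simple, sig_apply, hv s hs]
  simp

lemma par_eq_one {J : Set I} {g : W} (hg : g ∈ par cs J)
    (h : ∀ j ∈ J, ¬ cs.IsRightDescent g j) : g = 1 := by
  by_contra h1
  obtain ⟨s, hs⟩ := cs.exists_rightDescent_of_ne_one h1
  by_cases hsJ : s ∈ J
  · exact h s hsJ hs
  · exact not_desc_of_pos cs s (by rw [rep_par_apply cs hg _ hsJ, al_same]; norm_num) hs

lemma par_eq_one_of_fix {J : Set I} {g : W} (hg : g ∈ par cs J)
    (h : ∀ v ∈ VJ J, rep cs g v = v) : g = 1 :=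
  par_eq_one cs hg fun j hj =>
    not_desc_of_pos cs j (by rw [h _ (al_mem_VJ hj), al_same]; norm_num)

lemma par_eq_of_rep {J : Set I} {g h : W} (hg : g ∈ par cs J) (hh : h ∈ par cs J)
    (e : ∀ v ∈ VJ J, rep cs g v = rep cs h v) : g = h := by
  have : h⁻¹ * g = 1 := par_eq_one_of_fix cs (mul_mem (inv_mem hh) hg) fun v hv => by
    rw [rep_mul, e v hv, rep_inv_rep]
  exact (inv_mul_eq_one.mp this).symm

variable (M) in
/-- The simple reflections commuting with all of `J`, not counting elements of `J`. -/
def perp (J : Set I) : Set I := {s | ∀ j ∈ J, M s j = 2}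

lemma rep_perp {J : Set I} {g : W} (hg : g ∈ par cs (perp M J)) {v : I → ℝ} (hv : v ∈ VJ J) :
    rep cs g v = v := by
  refine rep_par_OJ cs hg fun s hs => ?_
  rw [bil_symm]
  refine bil_VJ_OJ hv fun j hj => ?_
  rw [bil_al, kc_symm, kc_two M (hs j hj)]

lemma commute_of_two {s t : I} (h : M s t = 2) : Commute (cs.simple s) (cs.simple t) := by
  have h1 := cs.simple_mul_simple_pow s t
  rw [h, pow_two, mul_eq_one_iff_eq_inv] at h1
  rw [Commute, SemiconjBy, h1, mul_inv_rev, inv_simple, inv_simple]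

lemma commute_perp {J : Set I} {g h : W} (hg : g ∈ par cs J) (hh : h ∈ par cs (perp M J)) :
    Commute g h := by
  refine par_induction cs (p := fun g => Commute g h) (Commute.one_left h) ?_ hg
  intro s hs w _ ih
  refine Commute.mul_left ?_ ih
  refine par_induction cs (p := fun h => Commute (cs.simple s) h) (Commute.one_right _) ?_ hh
  intro t ht w _ ih
  exact Commute.mul_right (commute_of_two cs (ht s hs)).symm ih

lemma par_inf_perp {J : Set I} {g : W} (hg : g ∈ par cs J) (hh : g ∈ par cs (perp M J)) : g = 1 :=
  par_eq_one_of_fix cs hg fun _ hv => rep_perp cs hh hv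

variable (M) in
/-- Irreducibility of `J`: its Coxeter diagram is nonempty and connected. -/
def Irr (J : Set I) : Prop :=
  J.Nonempty ∧ ∀ u ∈ J, ∀ v ∈ J,
    Relation.ReflTransGen (fun x y => x ∈ J ∧ y ∈ J ∧ x ≠ y ∧ M x y ≠ 2) u v

variable {cs} in
lemma Irr.induct {J : Set I} (h : Irr M J) {p : I → Prop} {s : I} (hs : s ∈ J) (ps : p s)
    (step : ∀ x ∈ J, ∀ y ∈ J, x ≠ y → M x y ≠ 2 → p x → p y) : ∀ t ∈ J, p t := by
  intro t ht
  have := h.2 s hs t ht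
  induction this with
  | refl => exact ps
  | tail _ hbc ih => exact step _ hbc.1 _ hbc.2.1 hbc.2.2.1 hbc.2.2.2 (ih hbc.1)

/-- The Tits form is positive definite on the span of the simple roots of an irreducible `J`
generating a finite group: there it is proportional to the average of the standard scalar
product. -/
theorem posDef {J : Set I} (hJ : Irr M J) (hfin : (par cs J : Set W).Finite) {v : I → ℝ}
    (hv : v ∈ VJ J) (hv0 : v ≠ 0) : 0 < bil M v v := by
  have : Finite (par cs J) := hfin
  have := Fintype.ofFinite (par cs J)
  let Q : LinearMap.BilinForm ℝ (I → ℝ) :=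
    ∑ g : par cs J, (Matrix.toBilin' (1 : Matrix I I ℝ)).compl₁₂ (rep cs (g : W)) (rep cs (g : W))
  have hQ : ∀ u v, Q u v = ∑ g : par cs J, rep cs (g : W) u ⬝ᵥ rep cs (g : W) v := fun u v => by
    simp [Q, LinearMap.sum_apply, Matrix.toBilin'_apply']
  have hinv : ∀ h ∈ par cs J, ∀ u v, Q (rep cs h u) (rep cs h v) = Q u v := fun h hh u v => by
    rw [hQ, hQ]
    refine Fintype.sum_equiv (Equiv.mulRight (⟨h, hh⟩ : par cs J)) _ _ fun f => ?_
    simp [rep_mul]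
  have hpos : ∀ v, v ≠ 0 → 0 < Q v v := fun v hv => by
    rw [hQ]
    refine Finset.sum_pos (fun g _ => ?_) ⟨1, Finset.mem_univ _⟩
    have hne : rep cs (g : W) v ≠ 0 := fun h => hv (rep_injective cs _ (by rw [h, map_zero]))
    exact lt_of_le_of_ne (Finset.sum_nonneg fun i _ => mul_self_nonneg _)
      (fun h => hne (dotProduct_self_eq_zero.mp h.symm))
  have hal : ∀ j ∈ J, ∀ v, Q (al j) v = Q (al j) (al j) * bil M (al j) v := fun j hj v => by
    have h1 := hinv _ (simple_mem_par cs hj) (al j) v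
    rw [rep_simple, sig_al_self, sig_apply] at h1
    simp only [map_neg, LinearMap.neg_apply, map_sub, map_smul, smul_eq_mul] at h1
    linarith
  obtain ⟨j₀, hj₀⟩ := hJ.1
  have hc : ∀ j ∈ J, Q (al j) (al j) = Q (al j₀) (al j₀) := by
    refine hJ.induct hj₀ rfl fun x hx y hy hxy hM ih => ?_
    have hs : Q (al x) (al y) = Q (al y) (al x) := by
      rw [hQ, hQ]; exact Finset.sum_congr rfl fun g _ => dotProduct_comm _ _
    rw [hal x hx, hal y hy, bil_al, bil_al, kc_symm M y x] at hs
    rw [← ih]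
    exact (mul_right_cancel₀ (kc_neg hxy hM).ne hs).symm
  have hQB : Q v v = Q (al j₀) (al j₀) * bil M v v := by
    have hexp : ∀ L : (I → ℝ) →ₗ[ℝ] ℝ, L v = ∑ s, v s * L (al s) := fun L => by
      conv_lhs => rw [sum_al v, map_sum]
      exact Finset.sum_congr rfl fun s _ => by rw [map_smul, smul_eq_mul]
    have e1 : Q v v = ∑ s, v s * Q (al s) v := hexp (LinearMap.flip Q v)
    have e2 : bil M v v = ∑ s, v s * bil M (al s) v := hexp (LinearMap.flip (bil M) v)
    rw [e1, e2, Finset.mul_sum]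
    refine Finset.sum_congr rfl fun s _ => ?_
    by_cases hs : s ∈ J
    · rw [hal s hs, hc s hs]; ring
    · rw [hv s hs]; ring
  have h1 := hpos v hv0
  rw [hQB] at h1
  exact (pos_iff_pos_of_mul_pos h1).mp (hpos _ (al_ne_zero j₀))

/-- Averaging over a finite visual subgroup projects onto the vectors orthogonal to its roots. -/
lemma exists_proj {J : Set I} (hfin : (par cs J : Set W).Finite) (v : I → ℝ) :
    ∃ p ∈ OJ M J, v - p ∈ VJ J := by
  have : Finite (par cs J) := hfin
  have := Fintype.ofFinite (par cs J)
  have hn : (Fintype.card (par cs J) : ℝ) ≠ 0 := by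
    have := Fintype.card_pos (α := par cs J)
    positivity
  refine ⟨(Fintype.card (par cs J) : ℝ)⁻¹ • ∑ g : par cs J, rep cs (g : W) v, ?_, ?_⟩
  · intro j hj
    rw [map_smul, smul_eq_mul]
    have h1 : rep cs (cs.simple j) (∑ g : par cs J, rep cs (g : W) v)
        = ∑ g : par cs J, rep cs (g : W) v := by
      rw [map_sum]
      refine Fintype.sum_equiv (Equiv.mulLeft (⟨_, simple_mem_par cs hj⟩ : par cs J)) _ _ fun f => ?_
      simp [rep_mul]
    rw [rep_simple, sig_apply, sub_eq_self, smul_eq_zero] at h1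
    have h2 := h1.resolve_right (al_ne_zero j)
    rw [(mul_eq_zero.mp h2).resolve_left two_ne_zero, mul_zero]
  · have : v - (Fintype.card (par cs J) : ℝ)⁻¹ • ∑ g : par cs J, rep cs (g : W) v
        = -((Fintype.card (par cs J) : ℝ)⁻¹ • ∑ g : par cs J, (rep cs (g : W) v - v)) := by
      rw [Finset.sum_sub_distrib, Finset.sum_const, Finset.card_univ, smul_sub,
        ← Nat.cast_smul_eq_nsmul ℝ, smul_smul, inv_mul_cancel₀ hn, one_smul]
      abel
    rw [this]
    exact neg_mem (Submodule.smul_mem _ _ (Submodule.sum_mem _ fun g _ =>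
      rep_par_sub_mem cs g.2 v))

/-- A linear form fixed by a product of commuting elements of `⟨J⟩` and of `⟨J^⊥⟩` is fixed by
both factors. -/
lemma stab_split {J : Set I} (hfin : (par cs J : Set W).Finite) {w y : W} (hw : w ∈ par cs J)
    (hy : y ∈ par cs (perp M J)) {l : Module.Dual ℝ (I → ℝ)} (h : w * y ∈ stab cs l) :
    w ∈ stab cs l ∧ y ∈ stab cs l := by
  have key : y ∈ stab cs l := by
    intro v
    obtain ⟨p, hp, hu⟩ := exists_proj cs hfin v
    have hyp : rep cs y p ∈ OJ M J := fun j hj => by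
      rw [← bil_rep cs y⁻¹, rep_inv_rep, rep_perp cs (inv_mem hy) (al_mem_VJ hj), hp j hj]
    have h1 := h p
    rw [rep_mul, rep_par_OJ cs hw hyp] at h1
    have h2 := rep_perp cs hy hu
    rw [map_sub, sub_eq_iff_eq_add] at h2
    rw [h2, map_add, h1, ← map_add]; congr 1; abel
  refine ⟨?_, key⟩
  have := mul_mem h (inv_mem key)
  rwa [mul_inv_cancel_right] at this

lemma exists_longest {J : Set I} (hfin : (par cs J : Set W).Finite) :
    ∃ x ∈ par cs J, ∀ j ∈ J, rep cs x (al j) ≤ 0 := by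
  obtain ⟨x, hx, hmax⟩ := Set.exists_max_image _ cs.length hfin ⟨1, one_mem _⟩
  refine ⟨x, hx, fun j hj => nonpos_of_desc cs ?_⟩
  by_contra hd
  have h1 := cs.not_isRightDescent_iff.mp hd
  have h2 := hmax _ (mul_mem hx (simple_mem_par cs hj))
  omega

lemma nonpos_of_VJ {J : Set I} {h : W} (hh : ∀ j ∈ J, rep cs h (al j) ≤ 0) {v : I → ℝ}
    (hv : v ∈ VJ J) (h0 : 0 ≤ v) : rep cs h v ≤ 0 := by
  rw [sum_al v, map_sum]
  refine Finset.sum_nonpos fun s _ => ?_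
  rw [map_smul]
  by_cases hs : s ∈ J
  · exact smul_nonpos_of_nonneg_of_nonpos (h0 s) (hh s hs)
  · rw [hv s hs, zero_smul]

lemma nonneg_of_VJ {J : Set I} {h : W} (hh : ∀ j ∈ J, 0 ≤ rep cs h (al j)) {v : I → ℝ}
    (hv : v ∈ VJ J) (h0 : 0 ≤ v) : 0 ≤ rep cs h v := by
  rw [sum_al v, map_sum]
  refine Finset.sum_nonneg fun s _ => ?_
  rw [map_smul]
  by_cases hs : s ∈ J
  · exact smul_nonneg (h0 s) (hh s hs)
  · rw [hv s hs, zero_smul]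

/-- `⟨J⟩` is finite as soon as one element of `W` makes all simple roots in `J` negative. -/
lemma par_finite_of_neg {J : Set I} {h : W} (hh : ∀ j ∈ J, rep cs h (al j) ≤ 0) :
    (par cs J : Set W).Finite := by
  refine (finite_length_le cs (cs.length h)).subset fun g hg => ?_
  change cs.length g ≤ cs.length h
  rw [← ncard_inv cs g, ← ncard_inv cs h]
  refine Set.ncard_le_ncard ?_ (finite_inv cs h)
  rintro β ⟨hr, h0, h1⟩
  refine ⟨hr, h0, nonpos_of_VJ cs hh (fun i hi => ?_) h0⟩
  have h2 := h1 i
  rw [rep_par_apply cs hg _ hi] at h2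
  exact le_antisymm h2 (h0 i)

lemma finite_par_pair {s t : I} (h : M s t ≠ 0) : (par cs {s, t} : Set W).Finite := by
  set r := cs.simple s * cs.simple t with hr
  have hfin : (Subgroup.zpowers r : Set W).Finite := by
    rw [finite_zpowers, isOfFinOrder_iff_pow_eq_one]
    exact ⟨M s t, Nat.pos_of_ne_zero h, cs.simple_mul_simple_pow s t⟩
  have hsr : ∀ n : ℤ, cs.simple s * r ^ n = r ^ (-n) * cs.simple s := fun n => by
    have h1 : cs.simple s * r * (cs.simple s)⁻¹ = r⁻¹ := by
      rw [hr, mul_inv_rev, inv_simple, inv_simple, simple_mul_simple_cancel_left]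
    have h2 := conj_zpow (i := n) (a := cs.simple s) (b := r)
    rw [h1, inv_zpow'] at h2
    rw [h2, inv_mul_cancel_right]
  have ht : cs.simple t = cs.simple s * r := by simp [hr]
  refine (hfin.union (hfin.image (· * cs.simple s))).subset fun g hg => ?_
  refine par_induction cs (p := fun g => g ∈ (Subgroup.zpowers r : Set W) ∪
    (· * cs.simple s) '' (Subgroup.zpowers r : Set W)) (Or.inl (one_mem _)) ?_ hg
  have hstep : ∀ w, w ∈ (Subgroup.zpowers r : Set W) ∪
      (· * cs.simple s) '' (Subgroup.zpowers r : Set W) → cs.simple s * w ∈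
      (Subgroup.zpowers r : Set W) ∪ (· * cs.simple s) '' (Subgroup.zpowers r : Set W) := by
    rintro w (⟨n, rfl⟩ | ⟨_, ⟨n, rfl⟩, rfl⟩)
    · exact Or.inr ⟨r ^ (-n), ⟨-n, rfl⟩, (hsr n).symm⟩
    · refine Or.inl ⟨-n, ?_⟩
      simp only
      rw [← mul_assoc, hsr, simple_mul_simple_cancel_right]
  rintro x (rfl | rfl) w _ ih
  · exact hstep w ih
  · rw [ht, mul_assoc]
    refine hstep _ ?_
    rcases ih with ⟨n, rfl⟩ | ⟨_, ⟨n, rfl⟩, rfl⟩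
    · exact Or.inl ⟨1 + n, by simp [zpow_add]⟩
    · exact Or.inr ⟨r ^ (1 + n), ⟨1 + n, rfl⟩, by simp [zpow_add, mul_assoc]⟩

lemma ne_zero_of_finite {J : Set I} (hfin : (par cs J : Set W).Finite) {s t : I} (hs : s ∈ J)
    (ht : t ∈ J) : M s t ≠ 0 := by
  intro h
  have : Finite (par cs J) := hfin
  have h1 := isOfFinOrder_of_finite
    (⟨_, mul_mem (simple_mem_par cs hs) (simple_mem_par cs ht)⟩ : par cs J)
  rw [isOfFinOrder_iff_pow_eq_one] at h1
  obtain ⟨n, hn, h2⟩ := h1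
  refine pow_ne_one_of_zero cs h hn.ne' ?_
  simpa using congrArg Subtype.val h2

/-- A central element of an irreducible `⟨J⟩` is trivial or acts as `-1` on the span of the
roots. -/
theorem center_par {J : Set I} (hJ : Irr M J) {z : W} (hz : z ∈ par cs J)
    (hc : ∀ j ∈ J, Commute z (cs.simple j)) : z = 1 ∨ ∀ v ∈ VJ J, rep cs z v = -v := by
  have h1 : ∀ j ∈ J, rep cs z (al j) = bil M (al j) (rep cs z (al j)) • al j := fun j hj => by
    have h2 : rep cs (z * cs.simple j) (al j) = rep cs (cs.simple j * z) (al j) := by rw [hc j hj]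
    rw [rep_mul, rep_mul, rep_simple, sig_al_self, sig_apply, map_neg] at h2
    have h3 : (2 : ℝ) • rep cs z (al j) = (2 : ℝ) • (bil M (al j) (rep cs z (al j)) • al j) := by
      rw [smul_smul, two_smul]
      calc _ = rep cs z (al j) - -rep cs z (al j) := by abel
        _ = _ := by rw [h2]; abel
    exact smul_right_injective _ two_ne_zero h3
  have hsq : ∀ j ∈ J, bil M (al j) (rep cs z (al j)) * bil M (al j) (rep cs z (al j)) = 1 := by
    intro j hj
    have h2 := bil_rep cs z (al j) (al j)
    rw [h1 j hj] at h2
    simp only [map_smul, LinearMap.smul_apply, smul_eq_mul, bil_al, kc_self, mul_one] at h2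
    rw [h2]
  obtain ⟨j₀, hj₀⟩ := hJ.1
  have hconst : ∀ j ∈ J, bil M (al j) (rep cs z (al j)) = bil M (al j₀) (rep cs z (al j₀)) := by
    refine hJ.induct hj₀ rfl fun x hx y hy hxy hM ih => ?_
    have h2 := bil_rep cs z (al x) (al y)
    rw [h1 x hx, h1 y hy] at h2
    simp only [map_smul, LinearMap.smul_apply, smul_eq_mul] at h2
    rw [bil_al M x y] at h2
    have hk := (kc_neg hxy hM).ne
    have h3 := hsq x hx
    have h4 : bil M (al x) (rep cs z (al x)) * bil M (al y) (rep cs z (al y)) = 1 := by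
      apply mul_right_cancel₀ hk
      linear_combination h2
    rw [← ih]
    set A := bil M (al x) (rep cs z (al x))
    set B := bil M (al y) (rep cs z (al y))
    linear_combination A * h4 - B * h3
  set c := bil M (al j₀) (rep cs z (al j₀)) with hcdef
  have hall : ∀ v ∈ VJ J, rep cs z v = c • v := by
    have := VJ_induction (J := J) (U := LinearMap.ker (rep cs z - c • LinearMap.id)) fun j hj => by
      rw [LinearMap.mem_ker, LinearMap.sub_apply, h1 j hj, hconst j hj]; simp
    intro v hv
    have := this hv
    rw [LinearMap.mem_ker, LinearMap.sub_apply, sub_eq_zero] at this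
    simpa using this
  rcases mul_self_eq_one_iff.mp (hsq j₀ hj₀) with h | h
  · left
    exact par_eq_one_of_fix cs hz fun v hv => by rw [hall v hv, hcdef, h, one_smul]
  · right
    intro v hv
    rw [hall v hv, hcdef, h, neg_one_smul]

end Par
end CoxGeom

/-! ### Normalizers of commutator subgroups of bases -/

namespace CoxGeom

open Real CoxeterSystem
open scoped commutatorElement

/-- The normalizer of the commutator subgroup of `A`. -/
def nrm (A : Subgroup W) : Subgroup W := Subgroup.normalizer ((⁅A, A⁆ : Subgroup W) : Set W)

lemma mem_nrm_iff {A : Subgroup W} {g : W} :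
    g ∈ nrm A ↔ ∀ h, h ∈ ⁅A, A⁆ ↔ g * h * g⁻¹ ∈ ⁅A, A⁆ := Iff.rfl

lemma mem_nrm_of_conj {A : Subgroup W} (H : Subgroup W)
    (h : ∀ g ∈ H, ∀ k ∈ ⁅A, A⁆, g * k * g⁻¹ ∈ ⁅A, A⁆) : H ≤ nrm A := fun g hg k =>
  ⟨h g hg k, fun hk => by
    have := h g⁻¹ (inv_mem hg) _ hk
    simpa [mul_assoc] using this⟩

lemma le_nrm (A : Subgroup W) : A ≤ nrm A := mem_nrm_of_conj A fun g hg k hk => by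
  have h1 : ⁅g, k⁆ ∈ ⁅A, A⁆ := Subgroup.commutator_mem_commutator hg (A.commutator_le_self hk)
  have h2 := mul_mem h1 hk
  rwa [commutatorElement_def, inv_mul_cancel_right] at h2

section Norm

variable {I : Type*} [Fintype I] [DecidableEq I] {M : CoxeterMatrix I} (cs : CoxeterSystem M W)

/-- The set `J` of indices is a base. -/
structure Base (J : Set I) : Prop where
  irr : Irr M J
  fin : (par cs J : Set W).Finite
  two : J.Nontrivial
  max : ∀ s, s ∉ J → (par cs (insert s J) : Set W).Finite → s ∈ perp M J

variable {cs} in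
lemma Irr.exists_edge {J : Set I} (h : Irr M J) (h2 : J.Nontrivial) {s : I} (hs : s ∈ J) :
    ∃ t ∈ J, s ≠ t ∧ M s t ≠ 2 := by
  obtain ⟨t, ht, hts⟩ := h2.exists_ne s
  rcases Relation.ReflTransGen.cases_head (h.2 s hs t ht) with rfl | ⟨c, hc, -⟩
  · exact absurd rfl hts
  · exact ⟨c, hc.2.1, hc.2.2⟩

lemma perp_le_nrm (J : Set I) : par cs (perp M J) ≤ nrm (par cs J) :=
  mem_nrm_of_conj _ fun g hg k hk => by
    have := commute_perp cs ((par cs J).commutator_le_self hk) hg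
    rwa [← this.eq, mul_inv_cancel_right]

/-- The normalizer of the commutator subgroup of a base preserves the span of its roots, this
span being generated by the vectors `k v - v`, with `k` in the commutator subgroup. -/
lemma nrm_VJ {J : Set I} (hJ : Base cs J) {w : W} (hw : w ∈ nrm (par cs J)) {v : I → ℝ}
    (hv : v ∈ VJ J) : rep cs w v ∈ VJ J := by
  set K : Subgroup W := ⁅par cs J, par cs J⁆ with hK
  let U : Submodule ℝ (I → ℝ) := Submodule.span ℝ {x | ∃ k ∈ K, ∃ v, x = rep cs k v - v}
  have hUJ : U ≤ VJ J := Submodule.span_le.mpr (by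
    rintro _ ⟨k, hk, v, rfl⟩
    exact rep_par_sub_mem cs ((par cs J).commutator_le_self hk) v)
  have hUw : ∀ g ∈ nrm (par cs J), ∀ u ∈ U, rep cs g u ∈ U := fun g hg u hu => by
    have : U ≤ U.comap (rep cs g) := Submodule.span_le.mpr (by
      rintro _ ⟨k, hk, v, rfl⟩
      refine Submodule.subset_span ⟨g * k * g⁻¹, (mem_nrm_iff.mp hg k).mp hk, rep cs g v, ?_⟩
      rw [← rep_mul, inv_mul_cancel_right, rep_mul, map_sub])
    exact this hu
  have hstep : ∀ j ∈ J, ∀ u ∈ U, bil M (al j) u ≠ 0 → (al j : I → ℝ) ∈ U := fun j hj u hu hne => by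
    have h1 := U.sub_mem (hUw _ (le_nrm _ (simple_mem_par cs hj)) u hu) hu
    rw [rep_simple, sig_apply] at h1
    have h2 := U.smul_mem (-(2 * bil M (al j) u))⁻¹ h1
    rwa [show u - (2 * bil M (al j) u) • al j - u = (-(2 * bil M (al j) u)) • al j by module,
      smul_smul, inv_mul_cancel₀ (by simpa using hne), one_smul] at h2
  have hex : ∃ j ∈ J, (al j : I → ℝ) ∈ U := by
    by_contra hcon
    push Not at hcon
    have hzero : ∀ u ∈ U, u = 0 := fun u hu => by
      by_contra hu0
      have h1 := posDef cs hJ.irr hJ.fin (hUJ hu) hu0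
      have h2 : u ∈ OJ M J := fun j hj => by
        by_contra hne
        exact hcon j hj (hstep j hj u hu hne)
      rw [bil_VJ_OJ (hUJ hu) h2] at h1
      exact lt_irrefl _ h1
    obtain ⟨s, hs⟩ := hJ.irr.1
    obtain ⟨t, ht, hst, hM⟩ := hJ.irr.exists_edge hJ.two hs
    have hk : ⁅cs.simple s, cs.simple t⁆ ∈ K :=
      Subgroup.commutator_mem_commutator (simple_mem_par cs hs) (simple_mem_par cs ht)
    have h1 : ⁅cs.simple s, cs.simple t⁆ = 1 := eq_one_of_fix cs fun i =>
      sub_eq_zero.mp (hzero _ (Submodule.subset_span ⟨_, hk, al i, rfl⟩))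
    exact not_commute cs hst hM (commutatorElement_eq_one_iff_mul_comm.mp h1)
  obtain ⟨j₀, hj₀, hU⟩ := hex
  have hall : ∀ j ∈ J, (al j : I → ℝ) ∈ U := by
    refine hJ.irr.induct hj₀ hU fun x hx y hy hxy hM ih => hstep y hy _ ih ?_
    rw [bil_al, kc_symm]
    exact (kc_neg hxy hM).ne
  exact hUJ (hUw w hw v (VJ_induction hall hv))

/-- An element permuting the simple roots of a base is a product of simple reflections commuting
with the base. -/
lemma mem_perp_of_perm {J : Set I} (hJ : Base cs J) (n : ℕ) : ∀ v : W, cs.length v = n →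
    (∀ j ∈ J, ∃ i ∈ J, rep cs v (al j) = al i) → (∀ x, rep cs v x ∈ VJ J → x ∈ VJ J) →
    v ∈ par cs (perp M J) := by
  induction n with
  | zero => intro v hv _ _; rw [cs.length_eq_zero_iff.mp hv]; exact one_mem _
  | succ n ih =>
    intro v hv hperm hVJ
    have hv1 : v ≠ 1 := by rintro rfl; simp at hv
    obtain ⟨s, hs⟩ := cs.exists_rightDescent_of_ne_one hv1
    have hpos : ∀ j ∈ J, 0 ≤ rep cs v (al j) := fun j hj => by
      obtain ⟨i, -, hi⟩ := hperm j hj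
      rw [hi]; exact fun k => al_nonneg i k
    have hsJ : s ∉ J := fun h => by
      have h1 := nonpos_of_desc cs hs
      exact (isRoot_al cs s).rep v |>.ne_zero (le_antisymm h1 (hpos s h))
    obtain ⟨x, hx, hxneg⟩ := exists_longest cs hJ.fin
    have hneg : ∀ j ∈ insert s J, rep cs (v * x) (al j) ≤ 0 := by
      rintro j (rfl | hj)
      · -- outside of `J`, `v x α_s` has the same coordinates as `v α_s`
        obtain ⟨i, hi, hi0⟩ : ∃ i ∉ J, rep cs v (al j) i ≠ 0 := by
          by_contra hcon
          push Not at hcon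
          have h1 := hVJ (al j) hcon j hsJ
          rw [al_same] at h1
          exact one_ne_zero h1
        have h1 := nonpos_of_desc cs hs i
        have h2 : rep cs (v * x) (al j) i = rep cs v (al j) i := by
          have h3 := rep_par_sub_mem cs hx (al j)
          have h4 : rep cs v (rep cs x (al j) - al j) ∈ VJ J := by
            have : VJ J ≤ (VJ J).comap (rep cs v) := VJ_induction fun k hk => by
              obtain ⟨i, hi, h5⟩ := hperm k hk
              rw [Submodule.mem_comap, h5]; exact al_mem_VJ hi
            exact this h3
          have h5 := h4 i hi
          rw [map_sub, Pi.sub_apply, sub_eq_zero] at h5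
          rw [rep_mul, h5]
        have hr := (isRoot_al cs j).rep (v * x)
        refine hr.pos_or_neg.resolve_left fun h3 => ?_
        have h4 := h3 i
        rw [h2] at h4
        exact hi0 (le_antisymm h1 h4)
      · rw [rep_mul]
        have h1 := nonneg_of_VJ cs hpos (v := -rep cs x (al j))
          (neg_mem (rep_par_mem_VJ cs hx (al_mem_VJ hj))) (by simpa using hxneg j hj)
        rw [map_neg] at h1
        simpa using h1
    have hsp := hJ.max s hsJ (par_finite_of_neg cs hneg)
    have hfix : ∀ x ∈ VJ J, sig M s x = x := fun x hx => by
      have := rep_perp cs (simple_mem_par cs hsp) hx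
      rwa [rep_simple] at this
    have hl := cs.isRightDescent_iff.mp hs
    have := ih (v * cs.simple s) (by omega)
      (fun j hj => by
        rw [rep_mul, rep_simple, hfix _ (al_mem_VJ hj)]; exact hperm j hj)
      (fun x hx => by
        rw [rep_mul, rep_simple] at hx
        have h1 := hVJ _ hx
        have h2 := hfix _ h1
        rw [← Module.End.mul_apply, sig_sq, Module.End.one_apply] at h2
        rwa [← h2] at h1)
    have h2 := mul_mem this (simple_mem_par cs hsp)
    rwa [simple_mul_simple_cancel_right] at h2

/-- The normalizer of the commutator subgroup of a base `J` is `⟨J⟩ × ⟨J^⊥⟩`. -/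
theorem nrm_eq {J : Set I} (hJ : Base cs J) {w : W} (hw : w ∈ nrm (par cs J)) :
    ∃ a ∈ par cs J, ∃ y ∈ par cs (perp M J), w = a * y := by
  -- an element of minimal length in the double coset of `w` permutes the simple roots of `J`
  let T : Set W := {v | ∃ a ∈ par cs J, ∃ b ∈ par cs J, v = a * w * b}
  obtain ⟨v, ⟨a, ha, b, hb, hv⟩, hmin⟩ : ∃ v ∈ T, ∀ v' ∈ T, cs.length v ≤ cs.length v' := by
    obtain ⟨v, hvT, hv⟩ := WellFounded.has_min (measure cs.length).wf T
      ⟨w, 1, one_mem _, 1, one_mem _, by simp⟩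
    exact ⟨v, hvT, fun v' hv' => not_lt.mp (hv v' hv')⟩
  have hvn : v ∈ nrm (par cs J) := by
    rw [hv]; exact mul_mem (mul_mem (le_nrm _ ha) hw) (le_nrm _ hb)
  have hpos : ∀ j ∈ J, 0 ≤ rep cs v (al j) := fun j hj => nonneg_of_not_desc cs fun hd => by
    have h1 := cs.isRightDescent_iff.mp hd
    have h2 := hmin (v * cs.simple j) ⟨a, ha, b * cs.simple j, mul_mem hb (simple_mem_par cs hj),
      by rw [hv]; simp only [mul_assoc]⟩
    omega
  have hpos' : ∀ j ∈ J, 0 ≤ rep cs v⁻¹ (al j) := fun j hj => nonneg_of_not_desc cs fun hd => by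
    rw [isRightDescent_inv_iff] at hd
    have h1 := cs.isLeftDescent_iff.mp hd
    have h2 := hmin (cs.simple j * v) ⟨cs.simple j * a, mul_mem (simple_mem_par cs hj) ha, b, hb,
      by rw [hv]; simp only [mul_assoc]⟩
    omega
  have hperm : ∀ j ∈ J, ∃ i ∈ J, rep cs v (al j) = al i := fun j hj => by
    have hV := nrm_VJ cs hJ hvn (al_mem_VJ hj)
    have hr := (isRoot_al cs j).rep v
    obtain ⟨i, hi⟩ := Function.ne_iff.mp hr.ne_zero
    have hi0 : 0 < rep cs v (al j) i := lt_of_le_of_ne (hpos j hj i) (Ne.symm hi)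
    have hiJ : i ∈ J := by
      by_contra h; exact hi (hV i h)
    refine ⟨i, hiJ, ?_⟩
    have hr' := (isRoot_al cs i).rep v⁻¹
    have : rep cs v⁻¹ (al i) = al j := hr'.eq_al (hpos' i hiJ) j fun k hk => by
      -- the coordinates of `α_j = ∑ c_i v⁻¹ α_i` other than the `j`-th vanish
      have h1 : al j k = ∑ s, rep cs v (al j) s * rep cs v⁻¹ (al s) k := by
        conv_lhs => rw [← rep_inv_rep cs v (al j), sum_al (rep cs v (al j)), map_sum]
        simp [Finset.sum_apply]
      rw [al_ne hk] at h1
      have h2 := (Finset.sum_eq_zero_iff_of_nonneg (fun s _ => ?_)).mp h1.symm i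
        (Finset.mem_univ _)
      · exact (mul_eq_zero.mp h2).resolve_left hi
      · by_cases hs : s ∈ J
        · exact mul_nonneg (hpos j hj s) (hpos' s hs k)
        · rw [hV s hs, zero_mul]
    rw [← this, rep_rep_inv]
  have hvp := mem_perp_of_perm cs hJ _ v rfl hperm fun x hx => by
    have := nrm_VJ cs hJ (inv_mem hvn) hx
    rwa [rep_inv_rep] at this
  have e : w = a⁻¹ * v * b⁻¹ := by rw [hv]; group
  refine ⟨a⁻¹ * b⁻¹, mul_mem (inv_mem ha) (inv_mem hb), v, hvp, ?_⟩
  rw [e, mul_assoc, mul_assoc, (commute_perp cs (inv_mem hb) hvp).eq]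

end Norm

/-- Projections of a subgroup which is an internal direct product. -/
lemma exists_projections {A P N : Subgroup W} (hc : ∀ a ∈ A, ∀ y ∈ P, Commute a y)
    (hd : ∀ g ∈ A, g ∈ P → g = 1) (hN : ∀ n ∈ N, ∃ a ∈ A, ∃ y ∈ P, n = a * y) :
    ∃ p f : N →* W, (∀ n : N, p n ∈ A) ∧ (∀ n : N, f n ∈ P) ∧ (∀ n : N, (n : W) = p n * f n) ∧
      ∀ n : N, ∀ a ∈ A, ∀ y ∈ P, (n : W) = a * y → p n = a ∧ f n = y := by
  have uniq : ∀ a ∈ A, ∀ y ∈ P, ∀ a' ∈ A, ∀ y' ∈ P, a * y = a' * y' → a = a' ∧ y = y' := by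
    intro a ha y hy a' ha' y' hy' h
    have h1 : a'⁻¹ * a = y' * y⁻¹ := by
      rw [inv_mul_eq_iff_eq_mul, ← mul_assoc, eq_mul_inv_iff_mul_eq, h]
    have h2 := hd _ (mul_mem (inv_mem ha') ha) (h1 ▸ mul_mem hy' (inv_mem hy))
    have h3 := h1.symm.trans h2
    exact ⟨(inv_mul_eq_one.mp h2).symm, (mul_inv_eq_one.mp h3).symm⟩
  choose p hp f hf hpf using fun n : N => hN n n.2
  have hmul : ∀ m n : N, p (m * n) = p m * p n ∧ f (m * n) = f m * f n := fun m n =>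
    uniq _ (hp _) _ (hf _) _ (mul_mem (hp m) (hp n)) _ (mul_mem (hf m) (hf n)) (by
      rw [← hpf, Subgroup.coe_mul, hpf m, hpf n, mul_assoc, mul_assoc, ← mul_assoc (f m),
        ← (hc _ (hp n) _ (hf m)).eq, mul_assoc])
  exact ⟨MonoidHom.mk' p fun m n => (hmul m n).1, MonoidHom.mk' f fun m n => (hmul m n).2,
    hp, hf, hpf, fun n a ha y hy h => uniq _ (hp n) _ (hf n) _ ha _ hy ((hpf n).symm.trans h)⟩

/-- A homomorphism with values in a group `{1, z}` of order two, as a linear character. -/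
lemma exists_sign_hom {G : Type*} [Group G] (g : G →* W) {z : W} (hz1 : z ≠ 1) (hz2 : z * z = 1)
    (hg : ∀ x, g x = 1 ∨ g x = z) : ∃ φ : G →* ℤˣ, ∀ x, φ x = -1 ↔ g x = z := by
  classical
  refine ⟨MonoidHom.mk' (fun x => if g x = z then -1 else 1) fun x y => ?_, fun x => ?_⟩
  · rcases hg x with hx | hx <;> rcases hg y with hy | hy <;>
      simp [hx, hy, hz2, Ne.symm hz1]
  · simp only [MonoidHom.mk'_apply]
    split_ifs with h <;> simp [h]

section Compare

variable {I : Type*} [Fintype I] [DecidableEq I] {M : CoxeterMatrix I} (cs : CoxeterSystem M W)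
variable {I' : Type*} [Fintype I'] [DecidableEq I'] {M' : CoxeterMatrix I'}
  (cs' : CoxeterSystem M' W)

/-- Two bases with the same commutator subgroup, the second one being smaller: the first one has
a central element `z` acting as `-1`, and two different linear characters `φ` and `ψ`, such that
a generator outside the base commutes with the base as soon as its label with some `v` in the base
satisfying `φ v = -1` is finite. -/
theorem exists_characters {J : Set I} {J' : Set I'} (hJ : Base cs J) (hJ' : Base cs' J')
    (hK : ⁅par cs J, par cs J⁆ = ⁅par cs' J', par cs' J'⁆)
    (hcard : Nat.card (par cs' J') < Nat.card (par cs J)) :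
    ∃ (z : par cs J) (φ ψ : par cs J →* ℤˣ), (∀ v ∈ VJ J, rep cs (z : W) v = -v) ∧
      φ z = -1 ∧ ψ z = 1 ∧ (∃ a, ψ a = -1) ∧
      ∀ v (hv : v ∈ J), φ ⟨cs.simple v, simple_mem_par cs hv⟩ = -1 → ∀ s, s ∉ J → M s v ≠ 0 →
        s ∈ perp M J := by
  have hN : nrm (par cs J) = nrm (par cs' J') := by rw [nrm, nrm, hK]
  obtain ⟨q, r, hq, hr, hqr, hqu⟩ := exists_projections (A := par cs J) (P := par cs (perp M J))
    (N := nrm (par cs J)) (fun a ha y hy => commute_perp cs ha hy)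
    (fun g h h' => par_inf_perp cs h h') (fun n hn => nrm_eq cs hJ hn)
  obtain ⟨p, f, hp, hf, hpf, hpu⟩ := exists_projections (A := par cs' J')
    (P := par cs' (perp M' J')) (N := nrm (par cs J)) (fun a ha y hy => commute_perp cs' ha hy)
    (fun g h h' => par_inf_perp cs' h h') (fun n hn => nrm_eq cs' hJ' (hN ▸ hn))
  have hPN : par cs' (perp M' J') ≤ nrm (par cs J) := hN ▸ perp_le_nrm cs' J'
  have hfinA : Finite (par cs J) := hJ.fin
  have hfinA' : Finite (par cs' J') := hJ'.fin
  let i : par cs J →* nrm (par cs J) := Subgroup.inclusion (le_nrm _)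
  have hi : ∀ a, (i a : W) = a := fun a => rfl
  have hKA' : ∀ a b : par cs J, ⁅(a : W), (b : W)⁆ ∈ par cs' J' := fun a b => by
    have : ⁅(a : W), (b : W)⁆ ∈ ⁅par cs J, par cs J⁆ :=
      Subgroup.commutator_mem_commutator a.2 b.2
    rw [hK] at this
    exact (par cs' J').commutator_le_self this
  have hfcomm : ∀ a b : par cs J, Commute (f (i a)) (f (i b)) := fun a b => by
    have h1 : f ⁅i a, i b⁆ = 1 := by
      refine (hpu ⁅i a, i b⁆ _ (hKA' a b) 1 (one_mem _) ?_).2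
      rw [mul_one]; rfl
    rw [map_commutatorElement, commutatorElement_eq_one_iff_mul_comm] at h1
    exact h1
  have hfA : ∀ a b : par cs J, Commute (f (i a)) (b : W) := fun a b => by
    rw [← hi b, hpf (i b)]
    exact (commute_perp cs' (hp _) (hf _)).symm.mul_right (hfcomm a b)
  -- an element of `⟨J⟩` killed by `p` is central in `⟨J⟩`
  have hker : ∀ a : par cs J, p (i a) = 1 → a = 1 ∨ ∀ v ∈ VJ J, rep cs (a : W) v = -v := by
    intro a ha
    have h1 : (a : W) = f (i a) := by
      have := hpf (i a)
      rwa [ha, one_mul] at this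
    rcases center_par cs hJ.irr a.2 (fun j hj => by
      rw [h1]; exact hfA a ⟨_, simple_mem_par cs hj⟩) with h2 | h2
    · exact Or.inl (Subtype.ext h2)
    · exact Or.inr h2
  let pA : par cs J →* par cs' J' := (p.comp i).codRestrict _ fun a => hp _
  have hninj : ¬ Function.Injective pA := fun h =>
    absurd (Nat.card_le_card_of_injective pA h) (not_le.mpr hcard)
  obtain ⟨z, hz, hz1⟩ : ∃ z : par cs J, p (i z) = 1 ∧ z ≠ 1 := by
    rw [injective_iff_map_eq_one] at hninj
    push Not at hninj
    obtain ⟨z, h1, h2⟩ := hninj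
    exact ⟨z, congrArg Subtype.val h1, h2⟩
  have hzneg := (hker z hz).resolve_left hz1
  have huniq : ∀ a ∈ par cs J, (∀ v ∈ VJ J, rep cs a v = -v) → a = z := fun a ha h =>
    par_eq_of_rep cs ha z.2 fun v hv => by rw [h v hv, hzneg v hv]
  have hz2 : (z : W) * z = 1 := par_eq_one_of_fix cs (mul_mem z.2 z.2) fun v hv => by
    rw [rep_mul, hzneg v hv, map_neg, hzneg v hv, neg_neg]
  have hz1' : (z : W) ≠ 1 := fun h => hz1 (Subtype.ext h)
  -- the first character: `φ a` is the sign by which the `⟨J⟩`-part of the `⟨J'^⊥⟩`-part of `a` acts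
  let fA : par cs J →* nrm (par cs J) := (f.comp i).codRestrict _ fun a => hPN (hf _)
  obtain ⟨φ, hφ⟩ := exists_sign_hom (q.comp fA) hz1' hz2 fun a => by
    rcases center_par cs hJ.irr (hq (fA a)) (fun j hj => by
      have h1 := hqr (fA a)
      have h2 : q (fA a) = (fA a : W) * (r (fA a))⁻¹ := by rw [h1, mul_inv_cancel_right]
      rw [h2]
      exact (hfA a ⟨_, simple_mem_par cs hj⟩).mul_left
        (commute_perp cs (simple_mem_par cs hj) (inv_mem (hr _))).symm) with h | h
    · exact Or.inl h
    · exact Or.inr (huniq _ (hq _) h)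
  -- the second character is the sign character of `⟨J'⟩`, pulled back along `pA`; it is nontrivial
  -- because `pA` is onto: its kernel has order at most two, while the order of `⟨J'⟩` is smaller
  -- than that of `⟨J⟩`
  let sgn : W →* ℤˣ := cs'.lift ⟨fun _ => -1, fun _ _ => by simp⟩
  have hsurj : Function.Surjective pA := by
    rw [← MonoidHom.range_eq_top]
    by_contra hne
    have h1 : Nat.card pA.ker ≤ 2 := by
      have : (pA.ker : Set (par cs J)) ⊆ {1, z} := fun a ha => by
        rcases hker a (congrArg Subtype.val (MonoidHom.mem_ker.mp ha)) with h | h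
        · exact Or.inl h
        · exact Or.inr (Subtype.ext (huniq _ a.2 h))
      calc Nat.card pA.ker = (pA.ker : Set (par cs J)).ncard := rfl
        _ ≤ ({1, z} : Set (par cs J)).ncard := Set.ncard_le_ncard this (Set.toFinite _)
        _ ≤ 2 := by
          have := Set.ncard_insert_le (1 : par cs J) {z}
          rwa [Set.ncard_singleton] at this
    have h2 := pA.ker.card_mul_index
    rw [Subgroup.index_ker] at h2
    have h3 := pA.range.card_mul_index
    have h4 : 2 ≤ pA.range.index := by
      have h5 : pA.range.index ≠ 1 := fun h => hne (Subgroup.index_eq_one.mp h)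
      have h6 : pA.range.index ≠ 0 := Subgroup.index_ne_zero_of_finite
      omega
    nlinarith [Nat.card_pos (α := pA.range)]
  refine ⟨z, φ, sgn.comp ((par cs' J').subtype.comp pA), hzneg, ?_, ?_, ?_, ?_⟩
  · rw [hφ]
    have h1 : (fA z : W) = z := by
      have := hpf (i z)
      rw [hz, one_mul] at this
      exact this.symm
    exact (hqu (fA z) z z.2 1 (one_mem _) (by rw [h1, mul_one])).1
  · have : pA z = 1 := Subtype.ext hz
    simp [this]
  · obtain ⟨j, hj⟩ := hJ'.irr.1
    obtain ⟨a, ha⟩ := hsurj ⟨_, simple_mem_par cs' hj⟩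
    refine ⟨a, ?_⟩
    simp only [MonoidHom.comp_apply, ha, Subgroup.subtype_apply]
    exact cs'.lift_apply_simple _ j
  · intro v hv hφv s hs hM
    rw [hφ] at hφv
    -- the finite group `⟨s, v⟩` lies in a finite stabilizer which contains, with the `⟨J'^⊥⟩`-part
    -- of `v`, also `z`; the stabilized form vanishes on the roots of `J`, so the stabilizer
    -- contains `⟨J ∪ {s}⟩`, contradicting the maximality of `J` unless `s` commutes with `J`
    have hF : Finite (par cs {s, v}) := finite_par_pair cs hM
    obtain ⟨l', hl', hfin'⟩ := exists_stab cs' (par cs {s, v})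
    have hv' := hl' (simple_mem_par cs (show v ∈ ({s, v} : Set I) by simp))
    set a : par cs J := ⟨cs.simple v, simple_mem_par cs hv⟩ with ha
    have hy : f (i a) ∈ stab cs' l' := by
      have h1 : cs.simple v = p (i a) * f (i a) := hpf (i a)
      rw [h1] at hv'
      exact (stab_split cs' hJ'.fin (hp _) (hf _) hv').2
    have hG : Finite (stab cs' l') := hfin'
    obtain ⟨l, hl, hfin⟩ := exists_stab cs (stab cs' l')
    have hzl : (z : W) ∈ stab cs l := by
      have h1 := hl hy
      have h2 : f (i a) = q (fA a) * r (fA a) := hqr (fA a)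
      rw [h2] at h1
      have := (stab_split cs hJ.fin (hq _) (hr _) h1).1
      rwa [show q (fA a) = z from hφv] at this
    have hl0 : ∀ v ∈ VJ J, l v = 0 := fun v hv => by
      have := hzl v
      rw [hzneg v hv, map_neg] at this
      linarith
    refine hJ.max s hs (hfin.subset (par_le cs ?_))
    rintro j (rfl | hj)
    · exact hl (hl' (simple_mem_par cs (by simp)))
    · intro x
      rw [rep_simple, sig_apply, map_sub, map_smul, hl0 _ (al_mem_VJ hj), smul_zero, sub_zero]

end Compare
end CoxGeom

/-! ### Positive definite diagrams with an even label -/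

namespace CoxGeom

open Real CoxeterSystem

section Diagram

variable {I : Type*} [Fintype I] [DecidableEq I] {M : CoxeterMatrix I}

lemma kc_le {s t : I} {n : ℕ} (hn : 1 ≤ n) (h : M s t = 0 ∨ n ≤ M s t) :
    kc M s t ≤ -cos (π / n) := by
  rw [kc, neg_le_neg_iff]
  have hn' : (0 : ℝ) < n := by exact_mod_cast hn
  rcases h with h | h
  · simp [h, cos_le_one]
  · have h' : (n : ℝ) ≤ (M s t : ℕ) := by exact_mod_cast h
    apply cos_le_cos_of_nonneg_of_le_pi
    · positivity
    · rw [div_le_iff₀ hn']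
      have : (1 : ℝ) ≤ n := by exact_mod_cast hn
      nlinarith [pi_pos]
    · gcongr

lemma kc_le_three {s t : I} (hst : s ≠ t) (h : M s t ≠ 2) : kc M s t ≤ -(1 / 2) := by
  have h1 := M_ne_one M hst
  have := kc_le (M := M) (s := s) (t := t) (n := 3) (by norm_num) (by omega)
  simpa using this

lemma kc_le_four {s t : I} (hst : s ≠ t) (h : M s t ≠ 2) (h3 : M s t ≠ 3) :
    kc M s t ≤ -(√2 / 2) := by
  have h1 := M_ne_one M hst
  have := kc_le (M := M) (s := s) (t := t) (n := 4) (by norm_num) (by omega)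
  simpa using this

lemma kc_le_six {s t : I} (h : 6 ≤ M s t) : kc M s t ≤ -(√3 / 2) := by
  have := kc_le (M := M) (s := s) (t := t) (n := 6) (by norm_num) (by omega)
  simpa using this

lemma kc_three {s t : I} (h : M s t = 3) : kc M s t = -(1 / 2) := by simp [kc, h]

lemma kc_four {s t : I} (h : M s t = 4) : kc M s t = -(√2 / 2) := by simp [kc, h]

variable (M) in
/-- The Tits form is positive definite on the span of the simple roots of `J`. -/
def PosDef (J : Set I) : Prop := ∀ v ∈ VJ J, v ≠ 0 → 0 < bil M v v

lemma PosDef.pos {J : Set I} (h : PosDef M J) {v : I → ℝ} (hv : v ∈ VJ J) (x : I)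
    (hx : 0 < v x) : 0 < bil M v v :=
  h v hv fun h0 => by simp [h0] at hx

variable {J : Set I}

/-- Exclusion of the affine diagram of type `G̃₂`. -/
lemma not_G2 (h : PosDef M J) {x y u : I} (hx : x ∈ J) (hy : y ∈ J) (hu : u ∈ J) (hxu : x ≠ u)
    (hyu : y ≠ u) (hM : M y u ≠ 2) (h6 : 6 ≤ M x y) : False := by
  have h1 := kc_le_six h6
  have h2 := kc_le_three hyu hM
  have h3 := kc_nonpos M hxu
  have := h.pos (v := √3 • al x + (2 : ℝ) • al y + al u) (add_mem (add_mem
    (Submodule.smul_mem _ _ (al_mem_VJ hx)) (Submodule.smul_mem _ _ (al_mem_VJ hy))) (al_mem_VJ hu))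
    u (by
      simp only [Pi.add_apply, Pi.smul_apply, smul_eq_mul, al_same]
      have := al_nonneg x u; have := al_nonneg y u; positivity)
  simp only [map_add, LinearMap.add_apply, map_smul, LinearMap.smul_apply, bil_al, kc_self,
    smul_eq_mul, kc_symm M y x, kc_symm M u x, kc_symm M u y] at this
  have h3' : (0 : ℝ) ≤ √3 := sqrt_nonneg _
  have h4 : √3 * √3 = 3 := mul_self_sqrt (by norm_num)
  nlinarith [mul_nonneg h3' (neg_nonneg.mpr h3), mul_nonneg h3' (sub_nonneg.mpr h1)]

/-- Exclusion of cycles containing an edge with label at least `4`: triangles. -/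
lemma not_triangle (h : PosDef M J) {x y u : I} (hx : x ∈ J) (hy : y ∈ J) (hu : u ∈ J)
    (hxu : x ≠ u) (hyu : y ≠ u) (h1 : M x y = 4) (h2 : M y u ≠ 2)
    (h3 : M x u ≠ 2) : False := by
  have h1 := kc_four h1
  have h2 := kc_le_three hyu h2
  have h3 := kc_le_three hxu h3
  have := h.pos (v := al x + al y + al u) (add_mem (add_mem (al_mem_VJ hx) (al_mem_VJ hy))
    (al_mem_VJ hu)) u (by
      simp only [Pi.add_apply, al_same]
      have := al_nonneg x u; have := al_nonneg y u; positivity)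
  simp only [map_add, LinearMap.add_apply, bil_al, kc_self,
    smul_eq_mul, kc_symm M y x, kc_symm M u x, kc_symm M u y] at this
  have h4 : √2 * √2 = 2 := mul_self_sqrt (by norm_num)
  nlinarith [sqrt_nonneg 2]

/-- Exclusion of the affine diagram of type `C̃₂`. -/
lemma not_C2 (h : PosDef M J) {x y u : I} (hx : x ∈ J) (hy : y ∈ J) (hu : u ∈ J)
    (hxu : x ≠ u) (hyu : y ≠ u) (h1 : M x y = 4) (h3 : M x u ≠ 2) :
    M x u = 3 := by
  by_contra hcon
  have h1 := kc_four h1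
  have h2 := kc_nonpos M hyu
  have h3 := kc_le_four hxu h3 hcon
  have := h.pos (v := √2 • al x + al y + al u) (add_mem (add_mem
    (Submodule.smul_mem _ _ (al_mem_VJ hx)) (al_mem_VJ hy)) (al_mem_VJ hu)) u (by
      simp only [Pi.add_apply, al_same, Pi.smul_apply, smul_eq_mul]
      have := al_nonneg x u; have := al_nonneg y u; positivity)
  simp only [map_add, LinearMap.add_apply, map_smul, LinearMap.smul_apply, bil_al, kc_self,
    smul_eq_mul, kc_symm M y x, kc_symm M u x, kc_symm M u y] at this
  have h4 : √2 * √2 = 2 := mul_self_sqrt (by norm_num)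
  rw [h1] at this
  nlinarith [mul_nonneg (sqrt_nonneg 2) (sub_nonneg.mpr h3)]

/-- Exclusion of a branch point on an edge with label `4`. -/
lemma not_B3 (h : PosDef M J) {x y u w : I} (hx : x ∈ J) (hy : y ∈ J) (hu : u ∈ J) (hw : w ∈ J)
    (hxu : x ≠ u) (hyu : y ≠ u) (hxw : x ≠ w) (hyw : y ≠ w) (huw : u ≠ w)
    (h1 : M x y = 4) (h2 : M x u ≠ 2) (h3 : M x w ≠ 2) : False := by
  have h1 := kc_four h1
  have h2 := kc_le_three hxu h2
  have h3 := kc_le_three hxw h3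
  have h4 := kc_nonpos M hyu
  have h5 := kc_nonpos M hyw
  have h6 := kc_nonpos M huw
  have := h.pos (v := (2 : ℝ) • al x + √2 • al y + al u + al w) (add_mem (add_mem (add_mem
    (Submodule.smul_mem _ _ (al_mem_VJ hx)) (Submodule.smul_mem _ _ (al_mem_VJ hy)))
    (al_mem_VJ hu)) (al_mem_VJ hw)) u (by
      simp only [Pi.add_apply, al_same, Pi.smul_apply, smul_eq_mul]
      have := al_nonneg x u; have := al_nonneg y u; have := al_nonneg w u; positivity)
  simp only [map_add, LinearMap.add_apply, map_smul, LinearMap.smul_apply, bil_al, kc_self,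
    smul_eq_mul, kc_symm M y x, kc_symm M u x, kc_symm M u y, kc_symm M w x, kc_symm M w y,
    kc_symm M w u] at this
  have h7 : √2 * √2 = 2 := mul_self_sqrt (by norm_num)
  rw [h1] at this
  nlinarith [mul_nonneg (sqrt_nonneg 2) (neg_nonneg.mpr h4),
    mul_nonneg (sqrt_nonneg 2) (neg_nonneg.mpr h5)]

/-- Exclusion of quadrangles with a label `4`. -/
lemma not_square (h : PosDef M J) {x y u w : I} (hx : x ∈ J) (hy : y ∈ J) (hu : u ∈ J)
    (hw : w ∈ J) (hxu : x ≠ u) (hyu : y ≠ u) (hxw : x ≠ w) (hyw : y ≠ w) (huw : u ≠ w)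
    (h1 : M x y = 4) (h2 : M x u ≠ 2) (h3 : M y w ≠ 2) : M u w = 2 := by
  by_contra hcon
  have h1 := kc_four h1
  have h2 := kc_le_three hxu h2
  have h3 := kc_le_three hyw h3
  have h4 := kc_nonpos M hyu
  have h5 := kc_nonpos M hxw
  have h6 := kc_le_three huw hcon
  have := h.pos (v := al x + al y + al u + al w) (add_mem (add_mem (add_mem
    (al_mem_VJ hx) (al_mem_VJ hy)) (al_mem_VJ hu)) (al_mem_VJ hw)) u (by
      simp only [Pi.add_apply, al_same, Pi.smul_apply, smul_eq_mul]
      have := al_nonneg x u; have := al_nonneg y u; have := al_nonneg w u; positivity)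
  simp only [map_add, LinearMap.add_apply, map_smul, LinearMap.smul_apply, bil_al, kc_self,
    smul_eq_mul, kc_symm M y x, kc_symm M u x, kc_symm M u y, kc_symm M w x, kc_symm M w y,
    kc_symm M w u] at this
  have h7 : √2 * √2 = 2 := mul_self_sqrt (by norm_num)
  rw [h1] at this
  nlinarith [sqrt_nonneg 2]

/-- Exclusion of the affine diagram of type `F̃₄`. -/
lemma not_F4 (h : PosDef M J) {x y u w v : I} (hx : x ∈ J) (hy : y ∈ J) (hu : u ∈ J)
    (hw : w ∈ J) (hv : v ∈ J) (hxu : x ≠ u) (hyu : y ≠ u) (hxw : x ≠ w) (hyw : y ≠ w)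
    (huw : u ≠ w) (hxv : x ≠ v) (hyv : y ≠ v) (huv : u ≠ v) (hwv : w ≠ v)
    (h1 : M x y = 4) (h2 : M x u ≠ 2) (h3 : M y w ≠ 2) (h4 : M u v ≠ 2) : False := by
  have h1 := kc_four h1
  have h2 := kc_le_three hxu h2
  have h3 := kc_le_three hyw h3
  have h4 := kc_le_three huv h4
  have := kc_nonpos M hyu
  have := kc_nonpos M hxw
  have := kc_nonpos M huw
  have := kc_nonpos M hxv
  have := kc_nonpos M hyv
  have := kc_nonpos M hwv
  have key := h.pos (v := (3 : ℝ) • al x + (2 * √2) • al y + (2 : ℝ) • al u + √2 • al w + al v)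
    (add_mem (add_mem (add_mem (add_mem
    (Submodule.smul_mem _ _ (al_mem_VJ hx)) (Submodule.smul_mem _ _ (al_mem_VJ hy)))
    (Submodule.smul_mem _ _ (al_mem_VJ hu))) (Submodule.smul_mem _ _ (al_mem_VJ hw)))
    (al_mem_VJ hv)) v (by
      simp only [Pi.add_apply, al_same, Pi.smul_apply, smul_eq_mul]
      have := al_nonneg x v; have := al_nonneg y v; have := al_nonneg w v; have := al_nonneg u v
      positivity)
  simp only [map_add, LinearMap.add_apply, map_smul, LinearMap.smul_apply, bil_al, kc_self,
    smul_eq_mul, kc_symm M y x, kc_symm M u x, kc_symm M u y, kc_symm M w x, kc_symm M w y,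
    kc_symm M w u, kc_symm M v x, kc_symm M v y, kc_symm M v u, kc_symm M v w] at key
  have h7 : √2 * √2 = 2 := mul_self_sqrt (by norm_num)
  rw [h1] at key
  have hs : ∀ r : ℝ, r ≤ 0 → √2 * r ≤ 0 := fun r hr =>
    mul_nonpos_of_nonneg_of_nonpos (sqrt_nonneg 2) hr
  have := hs _ ‹kc M y u ≤ 0›
  have := hs _ ‹kc M x w ≤ 0›
  have := hs _ ‹kc M u w ≤ 0›
  have := hs _ ‹kc M y v ≤ 0›
  have := hs _ ‹kc M w v ≤ 0›
  have h8 : √2 * √2 * kc M y w = 2 * kc M y w := by rw [h7]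
  nlinarith

end Diagram
end CoxGeom

/-! ### Chains with labels `4, 3, …, 3` -/

namespace CoxGeom

open Real CoxeterSystem

section Chain

variable {I : Type*} [Fintype I] [DecidableEq I] {M : CoxeterMatrix I}

variable (M) in
/-- The nodes `p 0, …, p (n - 1)` of `J` are distinct and span a linear diagram with labels
`4, 3, …, 3`. -/
structure Chain (J : Set I) (p : ℕ → I) (n : ℕ) : Prop where
  two : 2 ≤ n
  mem : ∀ i, p i ∈ J
  inj : ∀ i < n, ∀ j < n, p i = p j → i = j
  four : M (p 0) (p 1) = 4
  three : ∀ i, 1 ≤ i → i + 1 < n → M (p i) (p (i + 1)) = 3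
  far : ∀ i j, i + 1 < j → j < n → M (p i) (p j) = 2

/-- An orthonormal basis for a chain with labels `4, 3, …, 3`: up to sign, the reflection in `p 0`
changes the sign of the first vector and the one in `p (j + 1)` swaps the `j`-th vector with the
next one. -/
noncomputable def eps (p : ℕ → I) : ℕ → (I → ℝ)
  | 0 => al (p 0)
  | (j + 1) => eps p j + √2 • al (p (j + 1))

lemma eps_nonneg (p : ℕ → I) (j : ℕ) (i : I) : 0 ≤ eps p j i := by
  induction j with
  | zero => exact al_nonneg _ _
  | succ j ih =>
    have := al_nonneg (p (j + 1)) i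
    simp only [eps, Pi.add_apply, Pi.smul_apply, smul_eq_mul]
    positivity

lemma sqrt_two_mul : √2 * √2 = 2 := mul_self_sqrt (by norm_num)

variable {J : Set I} {p : ℕ → I} {n : ℕ}

lemma Chain.eps_mem (h : Chain M J p n) {j : ℕ} (hj : j < n) : eps p j ∈ VJ J := by
  induction j with
  | zero => exact al_mem_VJ (h.mem 0)
  | succ j ih =>
    exact add_mem (ih (by omega)) (Submodule.smul_mem _ _ (al_mem_VJ (h.mem _)))

lemma Chain.bil_far (h : Chain M J p n) {j k : ℕ} (hjk : j + 1 < k) (hk : k < n) :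
    bil M (eps p j) (al (p k)) = 0 := by
  induction j with
  | zero => rw [eps, bil_al, kc_two M (h.far 0 k hjk hk)]
  | succ j ih =>
    rw [eps, map_add, LinearMap.add_apply, ih (by omega), map_smul, LinearMap.smul_apply, bil_al,
      kc_two M (h.far _ k hjk hk)]
    simp

lemma Chain.bil_next (h : Chain M J p n) {j : ℕ} (hj : j + 1 < n) :
    bil M (eps p j) (al (p (j + 1))) = -(√2 / 2) := by
  cases j with
  | zero => rw [eps, bil_al, kc_four h.four]
  | succ j =>
    rw [eps, map_add, LinearMap.add_apply, h.bil_far (by omega) hj, map_smul,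
      LinearMap.smul_apply, bil_al, kc_three (h.three _ (by omega) hj), smul_eq_mul]
    ring

lemma Chain.bil_eps (h : Chain M J p n) {j : ℕ} (hj : j < n) :
    bil M (eps p j) (eps p j) = 1 := by
  induction j with
  | zero => rw [eps, bil_al, kc_self]
  | succ j ih =>
    simp only [eps, map_add, LinearMap.add_apply, map_smul, LinearMap.smul_apply, smul_eq_mul,
      ih (by omega), h.bil_next hj, bil_symm M (al (p (j + 1))), bil_al, kc_self]
    linear_combination (0 : ℝ) * sqrt_two_mul

lemma Chain.bil_prev (h : Chain M J p n) {j k : ℕ} (hkj : k < j) (hj : j < n) :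
    bil M (eps p j) (al (p k)) = 0 := by
  induction j with
  | zero => omega
  | succ j ih =>
    rw [eps, map_add, LinearMap.add_apply, map_smul, LinearMap.smul_apply, bil_al, smul_eq_mul,
      kc_symm]
    rcases Nat.lt_succ_iff_lt_or_eq.mp hkj with hk | rfl
    · rw [ih hk (by omega), kc_two M (h.far k (j + 1) (by omega) hj)]; simp
    · cases k with
      | zero =>
        rw [eps, bil_al, kc_self, kc_four h.four]
        linear_combination (-1 / 2 : ℝ) * sqrt_two_mul
      | succ k =>
        rw [eps, map_add, LinearMap.add_apply, h.bil_next (by omega), map_smul,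
          LinearMap.smul_apply, bil_al, kc_self, kc_three (h.three _ (by omega) hj), smul_eq_mul]
        ring

lemma eps_bil_out_nonpos {w : I} (hw : ∀ i < n, p i ≠ w) {j : ℕ}
    (hj : j < n) : bil M (eps p j) (al w) ≤ 0 := by
  induction j with
  | zero => rw [eps, bil_al]; exact kc_nonpos M (hw _ hj)
  | succ j ih =>
    rw [eps, map_add, LinearMap.add_apply, map_smul, LinearMap.smul_apply, bil_al, smul_eq_mul]
    have := mul_nonpos_of_nonneg_of_nonpos (sqrt_nonneg 2) (kc_nonpos M (hw _ hj))
    have := ih (by omega)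
    linarith

lemma eps_bil_out {w : I} (hw : ∀ i < n, p i ≠ w) {i j : ℕ} (hi : 1 ≤ i)
    (hij : i ≤ j) (hj : j < n) : bil M (eps p j) (al w) ≤ √2 * kc M (p i) w := by
  induction j with
  | zero => omega
  | succ j ih =>
    rw [eps, map_add, LinearMap.add_apply, map_smul, LinearMap.smul_apply, bil_al, smul_eq_mul]
    rcases Nat.lt_or_eq_of_le hij with h1 | rfl
    · have := mul_nonpos_of_nonneg_of_nonpos (sqrt_nonneg 2) (kc_nonpos M (hw _ hj))
      have := ih (by omega) (by omega)
      linarith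
    · have := eps_bil_out_nonpos (M := M) hw (j := j) (by omega)
      linarith

/-- A chain whose first node is a leaf of `J` can be extended as long as it is not all of `J`,
since the affine diagrams of types `B̃ₙ` and `C̃ₙ` are not positive definite. -/
lemma Chain.extend (hJ : PosDef M J) (hirr : Irr M J) (h : Chain M J p n)
    (hleaf : ∀ u ∈ J, p 0 ≠ u → M (p 0) u ≠ 2 → u = p 1) (hcov : ¬ ∀ u ∈ J, ∃ i < n, p i = u) :
    ∃ w, Chain M J (Function.update p n w) (n + 1) := by
  have h2 := h.two
  obtain ⟨i, hi, w, hwJ, hw, hM⟩ : ∃ i < n, ∃ w ∈ J, (∀ i < n, p i ≠ w) ∧ M (p i) w ≠ 2 := by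
    by_contra hcon
    push Not at hcon
    refine hcov (hirr.induct (h.mem 0) ⟨0, by omega, rfl⟩ ?_)
    rintro x - y hy - hxy ⟨i, hi, rfl⟩
    by_contra h3
    push Not at h3
    exact hxy (hcon i hi y hy h3)
  have hadj : ∀ i < n, M (p i) w ≠ 2 → i = n - 1 := by
    intro i hi hM
    by_contra hne
    have hi0 : 1 ≤ i := by
      by_contra h0
      obtain rfl : i = 0 := by omega
      exact hw 1 (by omega) (hleaf w hwJ (hw 0 hi) hM).symm
    have h3 := kc_le_three (hw i hi) hM
    have h4 := eps_bil_out (M := M) hw hi0 le_rfl hi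
    have h5 := kc_nonpos M (hw (i + 1) (by omega))
    have key := hJ.pos (v := eps p i + (√2 / 2) • (al (p (i + 1)) + al w)) (add_mem (h.eps_mem hi)
      (Submodule.smul_mem _ _ (add_mem (al_mem_VJ (h.mem _)) (al_mem_VJ hwJ)))) w (by
        simp only [Pi.add_apply, al_same, Pi.smul_apply, smul_eq_mul]
        have := al_nonneg (p (i + 1)) w; have := eps_nonneg p i w
        positivity)
    simp only [map_add, LinearMap.add_apply, map_smul, LinearMap.smul_apply, smul_eq_mul,
      h.bil_eps hi, h.bil_next (show i + 1 < n by omega), bil_symm M (al (p (i + 1))) (eps p i),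
      bil_symm M (al w) (eps p i), bil_al, kc_self, kc_symm M w] at key
    have h6 := sqrt_two_mul
    have h7 := sqrt_nonneg 2
    have h8 : √2 * bil M (eps p i) (al w) ≤ -1 := by
      nlinarith [mul_nonneg h7 (sub_nonneg.mpr h4)]
    have h9 : √2 / 2 * (√2 / 2 * (1 + kc M (p (i + 1)) w) + √2 / 2 * (kc M (p (i + 1)) w + 1))
      = 1 + kc M (p (i + 1)) w := by linear_combination (1 + kc M (p (i + 1)) w) / 2 * h6
    nlinarith
  obtain rfl := hadj i hi hM
  have h3 : M (p (n - 1)) w = 3 := by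
    by_contra hcon
    have h3 := kc_le_four (hw _ hi) hM hcon
    have h4 := eps_bil_out (M := M) hw (i := n - 1) (by omega) le_rfl hi
    have key := hJ.pos (v := eps p (n - 1) + al w) (add_mem (h.eps_mem hi) (al_mem_VJ hwJ)) w (by
        simp only [Pi.add_apply, al_same]
        have := eps_nonneg p (n - 1) w
        positivity)
    simp only [map_add, LinearMap.add_apply, h.bil_eps hi, bil_symm M (al w) (eps p (n - 1)),
      bil_al, kc_self] at key
    nlinarith [sqrt_two_mul, sqrt_nonneg 2]
  have e : ∀ i < n, Function.update p n w i = p i := fun i hi =>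
    Function.update_of_ne (by omega) _ _
  have en : Function.update p n w n = w := Function.update_self _ _ _
  refine ⟨w, by omega, fun i => ?_, fun i hi j hj hij => ?_, ?_, fun i hi hi' => ?_,
    fun i j hij hj => ?_⟩
  · rcases eq_or_ne i n with rfl | hi
    · rwa [en]
    · rw [Function.update_of_ne hi]; exact h.mem i
  · rcases Nat.lt_succ_iff_lt_or_eq.mp hi with hi | rfl <;>
      rcases Nat.lt_succ_iff_lt_or_eq.mp hj with hj | rfl
    · rw [e i hi, e j hj] at hij; exact h.inj i hi j hj hij
    · rw [e i hi, en] at hij; exact absurd hij (hw i hi)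
    · rw [e j hj, en] at hij; exact absurd hij.symm (hw j hj)
    · rfl
  · rw [e 0 (by omega), e 1 (by omega)]; exact h.four
  · rw [e i (by omega)]
    rcases Nat.lt_succ_iff_lt_or_eq.mp hi' with hi' | rfl
    · rw [e _ hi']; exact h.three i hi hi'
    · rw [en]; exact h3
  · rw [e i (by omega)]
    rcases Nat.lt_succ_iff_lt_or_eq.mp hj with hj | rfl
    · rw [e j hj]; exact h.far i j hij hj
    · rw [en]
      by_contra hcon
      have := hadj i (by omega) hcon
      omega

/-- A positive definite irreducible diagram having an edge with label `4` one of whose ends is a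
leaf is a chain with labels `4, 3, …, 3`. -/
lemma exists_chain (hJ : PosDef M J) (hirr : Irr M J) {a b : I} (ha : a ∈ J) (hb : b ∈ J)
    (hab : M a b = 4) (hleaf : ∀ u ∈ J, a ≠ u → M a u ≠ 2 → u = b) :
    ∃ p n, Chain M J p n ∧ ∀ u ∈ J, ∃ i < n, p i = u := by
  by_contra hcon
  push Not at hcon
  have hne : a ≠ b := by rintro rfl; simp at hab
  have key : ∀ n, ∃ p, Chain M J p (n + 2) ∧ p 0 = a ∧ p 1 = b := by
    intro n
    induction n with
    | zero =>
      refine ⟨fun i => if i = 0 then a else b, ⟨le_rfl, fun i => ?_, fun i hi j hj hij => ?_,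
        by simpa using hab, fun i hi hi' => by omega, fun i j h h' => by omega⟩, by simp, by simp⟩
      · split_ifs <;> assumption
      · by_contra hij'
        have : (i = 0 ∧ j = 1) ∨ (i = 1 ∧ j = 0) := by omega
        rcases this with ⟨rfl, rfl⟩ | ⟨rfl, rfl⟩ <;> simp [hne, Ne.symm hne] at hij
    | succ n ih =>
      obtain ⟨p, hp, rfl, rfl⟩ := ih
      obtain ⟨w, hw⟩ := hp.extend hJ hirr hleaf (by
        push Not; exact hcon p _ hp)
      exact ⟨_, hw, Function.update_of_ne (by omega) _ _, Function.update_of_ne (by omega) _ _⟩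
  obtain ⟨p, hp, -⟩ := key (Fintype.card I)
  have h1 : Function.Injective fun i : Fin (Fintype.card I + 2) => p i := fun i j hij =>
    Fin.ext (hp.inj i i.2 j j.2 hij)
  have := Fintype.card_le_of_injective _ h1
  simp at this

/-- A positive definite irreducible diagram with an edge with label `4` both of whose ends have
further neighbours is of type `F₄`. -/
lemma F4_cover (hJ : PosDef M J) (hirr : Irr M J) {x y u w : I} (hx : x ∈ J) (hy : y ∈ J)
    (hu : u ∈ J) (hw : w ∈ J) (hxu : x ≠ u) (hyu : y ≠ u) (hxw : x ≠ w) (hyw : y ≠ w)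
    (h1 : M x y = 4) (h2 : M x u ≠ 2) (h3 : M y w ≠ 2) :
    u ≠ w ∧ M x u = 3 ∧ M y w = 3 ∧ M x w = 2 ∧ M y u = 2 ∧ M u w = 2 ∧
      ∀ v ∈ J, v = x ∨ v = y ∨ v = u ∨ v = w := by
  have h1' : M y x = 4 := by rw [M.symmetric]; exact h1
  have hyu2 : M y u = 2 := by
    by_contra hcon
    exact not_triangle hJ hx hy hu hxu hyu h1 hcon h2
  have hxw2 : M x w = 2 := by
    by_contra hcon
    exact not_triangle hJ hx hy hw hxw hyw h1 h3 hcon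
  have huw : u ≠ w := by rintro rfl; exact h3 hyu2
  refine ⟨huw, not_C2 hJ hx hy hu hxu hyu h1 h2, not_C2 hJ hy hx hw hyw hxw h1' h3, hxw2, hyu2,
    not_square hJ hx hy hu hw hxu hyu hxw hyw huw h1 h2 h3, ?_⟩
  refine hirr.induct hx (Or.inl rfl) fun s _ t ht hst hM hs => ?_
  by_contra hcon
  push Not at hcon
  obtain ⟨htx, hty, htu, htw⟩ := hcon
  rcases hs with rfl | rfl | rfl | rfl
  · exact not_B3 hJ hx hy hu ht hxu hyu (Ne.symm htx) (Ne.symm hty) (Ne.symm htu) h1 h2 hM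
  · exact not_B3 hJ hy hx hw ht hyw hxw (Ne.symm hty) (Ne.symm htx) (Ne.symm htw) h1' h3 hM
  · exact not_F4 hJ hx hy hu hw ht hxu hyu hxw hyw huw (Ne.symm htx) (Ne.symm hty) (Ne.symm htu)
      (Ne.symm htw) h1 h2 h3 hM
  · exact not_F4 hJ hy hx hw hu ht hyw hxw hyu hxu (Ne.symm huw) (Ne.symm hty) (Ne.symm htx)
      (Ne.symm htw) (Ne.symm htu) h1' h3 h2 hM

end Chain
end CoxGeom

/-! ### Elements acting as `-1` -/

namespace CoxGeom

open Real CoxeterSystem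

section Minus

variable {I : Type*} [Fintype I] [DecidableEq I] {M : CoxeterMatrix I} (cs : CoxeterSystem M W)

/-- The product `g 0 * ⋯ * g (n - 1)`. -/
def word {G : Type*} [Group G] (g : ℕ → G) (n : ℕ) : G := ((List.range n).map g).prod

lemma word_succ {G : Type*} [Group G] (g : ℕ → G) (n : ℕ) : word g (n + 1) = word g n * g n :=
  List.prod_range_succ g n

lemma map_word {G H : Type*} [Group G] [Group H] (f : G →* H) (g : ℕ → G) (n : ℕ) :
    f (word g n) = word (fun i => f (g i)) n := by
  simp [word, map_list_prod, Function.comp_def]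

lemma rep_neg_of_al {J : Set I} {g : W} (h : ∀ j ∈ J, rep cs g (al j) = -al j) :
    ∀ v ∈ VJ J, rep cs g v = -v := fun v hv => by
  have : VJ J ≤ LinearMap.ker (rep cs g + LinearMap.id) := VJ_induction fun j hj => by
    simp [h j hj]
  have h1 := this hv
  rw [LinearMap.mem_ker, LinearMap.add_apply, LinearMap.id_apply] at h1
  exact eq_neg_of_add_eq_zero_left h1

/-- In a dihedral group of order `4k`, the rotation by a half turn acts as `-1`. -/
lemma dihedral_neg {x y : I} {k : ℕ} (hk : 1 ≤ k) (hM : M x y = 2 * k) :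
    ∀ v ∈ VJ {x, y}, rep cs ((cs.simple x * cs.simple y) ^ k) v = -v := by
  have h2 : 2 ≤ M x y := by omega
  have hs := sin_pi_div_pos h2
  have hm0 : (M x y : ℝ) ≠ 0 := by positivity
  have e1 : xs (-kc M x y) (2 * k) = 0 := by
    have h := xs_mul_sin (π / M x y) (M x y)
    rw [mul_div_cancel₀ _ hm0, sin_pi] at h
    rw [kc, neg_neg, ← hM]
    exact (mul_eq_zero.mp h).resolve_right hs.ne'
  have e2 : xs (-kc M x y) (2 * k + 1) = -1 := by
    have h := xs_mul_sin (π / M x y) (M x y + 1)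
    rw [Nat.cast_add, add_mul, mul_div_cancel₀ _ hm0, Nat.cast_one, one_mul, add_comm π, sin_add_pi,
      ← neg_one_mul] at h
    rw [kc, neg_neg, ← hM]
    exact mul_right_cancel₀ hs.ne' h
  obtain ⟨h1, h2⟩ := sig_pow_al (M := M) (s := x) (t := y) k
  rw [e1, e2] at h1 h2
  apply rep_neg_of_al
  rintro j (rfl | rfl)
  · rw [map_pow, map_mul, rep_simple, rep_simple, h1]; simp
  · rw [map_pow, map_mul, rep_simple, rep_simple, h2]; simp

lemma Chain.sig_eps_next {J : Set I} {p : ℕ → I} {n : ℕ} (h : Chain M J p n) {j : ℕ}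
    (hj : j + 1 < n) : sig M (p (j + 1)) (eps p j) = eps p (j + 1) := by
  rw [sig_apply, bil_symm, h.bil_next hj, eps]
  module

lemma Chain.sig_eps_prev {J : Set I} {p : ℕ → I} {n : ℕ} (h : Chain M J p n) {j : ℕ}
    (hj : j + 1 < n) : sig M (p (j + 1)) (eps p (j + 1)) = eps p j := by
  rw [← h.sig_eps_next hj, ← Module.End.mul_apply, sig_sq, Module.End.one_apply]

/-- The action of `p 0 * ⋯ * p (m - 1)` on the orthonormal basis. -/
lemma Chain.word_eps {J : Set I} {p : ℕ → I} {n : ℕ} (h : Chain M J p n) {m : ℕ} (hm : m < n) :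
    (∀ j < m, rep cs (word (fun i => cs.simple (p i)) (m + 1)) (eps p j) = eps p (j + 1)) ∧
    rep cs (word (fun i => cs.simple (p i)) (m + 1)) (eps p m) = -eps p 0 ∧
    ∀ j, m < j → j < n → rep cs (word (fun i => cs.simple (p i)) (m + 1)) (eps p j) = eps p j := by
  induction m with
  | zero =>
    have e : word (fun i => cs.simple (p i)) (0 + 1) = cs.simple (p 0) := by simp [word]
    rw [e]
    refine ⟨by omega, ?_, fun j hj hjn => ?_⟩
    · rw [rep_simple]; exact sig_al_self M _
    · rw [rep_simple, sig_apply, bil_symm, h.bil_prev hj hjn]; simp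
  | succ m ih =>
    obtain ⟨h1, h2, h3⟩ := ih (by omega)
    rw [word_succ]
    refine ⟨fun j hj => ?_, ?_, fun j hj hjn => ?_⟩
    · rw [rep_mul, rep_simple]
      rcases Nat.lt_succ_iff_lt_or_eq.mp hj with hj | rfl
      · rw [sig_apply, bil_symm, h.bil_far (by omega) hm]
        simpa using h1 j hj
      · rw [h.sig_eps_next hm, h3 _ (by omega) hm]
    · rw [rep_mul, rep_simple, h.sig_eps_prev hm, h2]
    · rw [rep_mul, rep_simple, sig_apply, bil_symm, h.bil_prev hj hjn]
      simpa using h3 j (by omega) hjn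

/-- For a chain with labels `4, 3, …, 3`, the `n`-th power of the product of the simple
reflections acts as `-1`, this product being a signed cyclic permutation of an orthonormal
basis. -/
lemma Chain.neg {J : Set I} {p : ℕ → I} {n : ℕ} (h : Chain M J p n)
    (hcov : ∀ u ∈ J, ∃ i < n, p i = u) :
    ∀ v ∈ VJ J, rep cs (word (fun i => cs.simple (p i)) n ^ n) v = -v := by
  have hn := h.two
  obtain ⟨m, rfl⟩ : ∃ m, n = m + 1 := ⟨n - 1, by omega⟩
  obtain ⟨h1, h2, -⟩ := h.word_eps cs (m := m) (by omega)
  set c := word (fun i => cs.simple (p i)) (m + 1)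
  have h3 : ∀ k ≤ m, rep cs (c ^ k) (eps p 0) = eps p k := by
    intro k
    induction k with
    | zero => simp
    | succ k ih => intro hk; rw [pow_succ', rep_mul, ih (by omega), h1 k (by omega)]
  have h4 : rep cs (c ^ (m + 1)) (eps p 0) = -eps p 0 := by
    rw [pow_succ', rep_mul, h3 m le_rfl, h2]
  have h5 : ∀ j ≤ m, rep cs (c ^ (m + 1)) (eps p j) = -eps p j := fun j hj => by
    rw [← h3 j hj, ← rep_mul, ← pow_add, add_comm, pow_add, rep_mul, h4, map_neg]
  apply rep_neg_of_al
  intro u hu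
  obtain ⟨i, hi, rfl⟩ := hcov u hu
  cases i with
  | zero => exact h4
  | succ i =>
    have e : (al (p (i + 1)) : I → ℝ) = (√2)⁻¹ • (eps p (i + 1) - eps p i) := by
      rw [eps, add_sub_cancel_left, smul_smul, inv_mul_cancel₀ (by positivity), one_smul]
    rw [e, map_smul, map_sub, h5 _ (by omega), h5 _ (by omega)]
    module

/-- In type `F₄` with chain `u, x, y, w`, the element `(u x y w)⁶` acts as `-1`. -/
lemma F4_neg {x y u w : I} (hxy : M x y = 4) (hxu : M x u = 3) (hyw : M y w = 3)
    (hxw : M x w = 2) (hyu : M y u = 2) (huw : M u w = 2) :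
    ∀ v ∈ VJ {x, y, u, w},
      rep cs ((cs.simple u * cs.simple x * cs.simple y * cs.simple w) ^ 6) v = -v := by
  let V : ℝ → ℝ → ℝ → ℝ → (I → ℝ) := fun a b c d =>
    a • al u + b • al x + (c * √2) • al y + (d * √2) • al w
  have step : ∀ a b c d, rep cs (cs.simple u * cs.simple x * cs.simple y * cs.simple w)
      (V a b c d) = V (b - 2 * d) (a + b - 2 * d) (b - d) (c - d) := by
    intro a b c d
    have k1 := kc_four hxy
    have k2 := kc_three hxu
    have k3 := kc_three hyw
    have k4 := kc_two M hxw
    have k5 := kc_two M hyu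
    have k6 := kc_two M huw
    have k1' := kc_symm M y x
    have k2' := kc_symm M u x
    have k3' := kc_symm M w y
    have k4' := kc_symm M w x
    have k5' := kc_symm M u y
    have k6' := kc_symm M w u
    rw [k1] at k1'; rw [k2] at k2'; rw [k3] at k3'; rw [k4] at k4'; rw [k5] at k5'; rw [k6] at k6'
    have hb : ∀ s a b c d, bil M (al s) (V a b c d) =
        a * kc M s u + b * kc M s x + (c * √2) * kc M s y + (d * √2) * kc M s w := by
      intro s a b c d
      simp only [V, map_add, map_smul, bil_al, smul_eq_mul]
    have s2 := sqrt_two_mul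
    have hw : sig M w (V a b c d) = V a b c (c - d) := by
      rw [sig_apply, hb, k6', k4', k3', kc_self]; simp only [V]; module
    have hy : ∀ d, sig M y (V a b c d) = V a b (b - c + d) d := by
      intro d
      rw [sig_apply, hb, k5, k1', k3, kc_self]; simp only [V]; module
    have hx : ∀ c d, sig M x (V a b c d) = V a (a - b + 2 * c) c d := by
      intro c d
      rw [sig_apply, hb, k2, k1, k4, kc_self]; simp only [V]
      rw [show 2 * (a * -(1 / 2) + b * 1 + c * √2 * -(√2 / 2) + d * √2 * 0) = -a + 2 * b - 2 * c by
        linear_combination (-c) * s2]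
      module
    have hu : ∀ b c d, sig M u (V a b c d) = V (b - a) b c d := by
      intro b c d
      rw [sig_apply, hb, k2', k5', k6, kc_self]; simp only [V]; module
    rw [rep_mul, rep_mul, rep_mul, rep_simple, rep_simple, rep_simple, rep_simple, hw, hy, hx, hu]
    congr 1 <;> ring
  have hpow : ∀ a b c d, rep cs ((cs.simple u * cs.simple x * cs.simple y * cs.simple w) ^ 6)
      (V a b c d) = -V a b c d := by
    intro a b c d
    simp only [pow_succ', pow_zero, mul_one, rep_mul cs
      (cs.simple u * cs.simple x * cs.simple y * cs.simple w), step]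
    simp only [V]
    module
  have hr : √2 ≠ 0 := by positivity
  apply rep_neg_of_al
  rintro j (rfl | rfl | rfl | rfl)
  · simpa [V] using hpow 0 1 0 0
  · simpa [V, hr] using hpow 0 0 (√2)⁻¹ 0
  · simpa [V] using hpow 1 0 0 0
  · simpa [V, hr] using hpow 0 0 0 (√2)⁻¹

end Minus
end CoxGeom

/-! ### Unreduced bases satisfy one of the two conditions -/

namespace CoxGeom

open Real CoxeterSystem
open scoped commutatorElement

section Forward

variable {I : Type*} [Fintype I] [DecidableEq I] {M : CoxeterMatrix I} (cs : CoxeterSystem M W)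

lemma units_sq (u : ℤˣ) : u * u = 1 := by rcases Int.units_eq_one_or u with rfl | rfl <;> rfl

lemma units_pow_even (u : ℤˣ) {n : ℕ} (hn : Even n) : u ^ n = 1 := by
  obtain ⟨k, rfl⟩ := hn
  rw [pow_add, units_sq]

lemma units_pow_odd (u : ℤˣ) {n : ℕ} (hn : Odd n) : u ^ n = u := by
  obtain ⟨k, rfl⟩ := hn
  rw [pow_succ, units_pow_even u ⟨k, two_mul k⟩, one_mul]

lemma units_ne {u v : ℤˣ} (h : u * v = -1) : u = -1 ∨ v = -1 := by
  rcases Int.units_eq_one_or u with rfl | rfl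
  · exact Or.inr (by simpa using h)
  · exact Or.inl rfl

variable (J : Set I) in
/-- The generator of `par cs J` attached to `s ∈ J`. -/
def gen {s : I} (hs : s ∈ J) : par cs J := ⟨cs.simple s, simple_mem_par cs hs⟩

/-- Two linear characters of `par cs J` which agree on the generators are equal. -/
lemma char_ext {J : Set I} {φ ψ : par cs J →* ℤˣ}
    (h : ∀ s (hs : s ∈ J), φ (gen cs J hs) = ψ (gen cs J hs)) : φ = ψ := by
  ext1 ⟨g, hg⟩
  have key : ∀ g ∈ par cs J, ∃ hg : g ∈ par cs J, φ ⟨g, hg⟩ = ψ ⟨g, hg⟩ := fun g hg => by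
    refine par_induction cs (p := fun g => ∃ hg : g ∈ par cs J, φ ⟨g, hg⟩ = ψ ⟨g, hg⟩)
      ⟨one_mem _, ?_⟩ (fun s hs g hg ih => ?_) hg
    · exact (map_one φ).trans (map_one ψ).symm
    · obtain ⟨h1, h2⟩ := ih
      refine ⟨mul_mem (simple_mem_par cs hs) hg, ?_⟩
      have e : (⟨cs.simple s * g, mul_mem (simple_mem_par cs hs) hg⟩ : par cs J)
        = gen cs J hs * ⟨g, hg⟩ := rfl
      rw [e, map_mul, map_mul, h, h2]
  exact (key g hg).2

lemma char_odd {J : Set I} (φ : par cs J →* ℤˣ) {s t : I} (hs : s ∈ J) (ht : t ∈ J)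
    (h : Odd (M s t)) : φ (gen cs J hs) = φ (gen cs J ht) := by
  have h1 : (gen cs J hs * gen cs J ht) ^ M s t = 1 :=
    Subtype.ext (cs.simple_mul_simple_pow s t)
  have h2 := congrArg φ h1
  rw [map_pow, units_pow_odd _ h, map_mul, map_one] at h2
  rw [← mul_one (φ (gen cs J hs)), ← units_sq (φ (gen cs J ht)), ← mul_assoc, h2, one_mul]

variable {I' : Type*} [Fintype I'] [DecidableEq I'] {M' : CoxeterMatrix I'}
  (cs' : CoxeterSystem M' W)

/-- A base with the same commutator subgroup as some smaller base is a chain of odd rank with labels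
`4, 3, …, 3` or has type `D₂(4q + 2)`; a generator with finite label at the relevant end of the
diagram lies in the base or commutes with it. -/
theorem forward {J : Set I} {J' : Set I'} (hJ : Base cs J) (hJ' : Base cs' J')
    (hK : ⁅par cs J, par cs J⁆ = ⁅par cs' J', par cs' J'⁆)
    (hcard : Nat.card (par cs' J') < Nat.card (par cs J)) :
    (∃ p n, Odd n ∧ 3 ≤ n ∧ Chain M J p n ∧ (∀ u ∈ J, ∃ i < n, p i = u) ∧
      ∀ s, s ∉ J → M s (p 0) ≠ 0 → s ∈ perp M J) ∨
    (∃ x y, x ≠ y ∧ J = {x, y} ∧ (∃ q, 1 ≤ q ∧ M x y = 4 * q + 2) ∧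
      ∀ s, s ∉ J → M s x ≠ 0 → s ∈ perp M J) := by
  obtain ⟨z, φ, ψ, hz, hφ, hψ, ⟨a, ha⟩, hcond⟩ := exists_characters cs cs' hJ hJ' hK hcard
  have hpd : PosDef M J := fun v hv hv0 => posDef cs hJ.irr hJ.fin hv hv0
  have huniq : ∀ g : par cs J, (∀ v ∈ VJ J, rep cs (g : W) v = -v) → φ g = -1 := fun g hg => by
    rw [← hφ]
    congr 1
    exact Subtype.ext (par_eq_of_rep cs g.2 z.2 fun v hv => by rw [hg v hv, hz v hv])
  -- if all labels of edges were odd, then `φ` and `ψ` would both be the sign character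
  obtain ⟨x, hx, y, hy, hxy, hM2, hev⟩ : ∃ x ∈ J, ∃ y ∈ J, x ≠ y ∧ M x y ≠ 2 ∧ Even (M x y) := by
    by_contra hcon
    push Not at hcon
    obtain ⟨s, hs⟩ := hJ.irr.1
    have hconst : ∀ χ : par cs J →* ℤˣ, (∃ a, χ a = -1) → ∀ t (ht : t ∈ J),
        χ (gen cs J ht) = -1 := by
      intro χ hχ
      have h1 : ∀ t ∈ J, ∃ ht : t ∈ J, χ (gen cs J ht) = χ (gen cs J hs) :=
        hJ.irr.induct hs ⟨hs, rfl⟩ fun x hx y hy hxy hM ⟨hx', ih⟩ => ⟨hy, by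
          rw [← ih]
          exact (char_odd cs χ hx hy (Nat.not_even_iff_odd.mp (hcon x hx y hy hxy hM))).symm⟩
      rcases Int.units_eq_one_or (χ (gen cs J hs)) with h2 | h2
      · obtain ⟨a, ha⟩ := hχ
        have : χ = 1 := char_ext cs fun t ht => by rw [(h1 t ht).2, h2]; rfl
        rw [this, MonoidHom.one_apply] at ha
        exact absurd ha (by decide)
      · intro t ht
        rw [(h1 t ht).2, h2]
    have : φ = ψ := char_ext cs fun t ht => by
      rw [hconst φ ⟨z, hφ⟩, hconst ψ ⟨a, ha⟩]
    rw [this, hψ] at hφ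
    exact absurd hφ (by decide)
  have hM0 := ne_zero_of_finite cs hJ.fin hx hy
  obtain ⟨k, hk⟩ : ∃ k, M x y = 2 * k := hev.two_dvd
  by_cases hrk : ∀ u ∈ J, u = x ∨ u = y
  · -- rank two
    right
    have hJe : J = {x, y} := Set.Subset.antisymm hrk (by
      rintro u (rfl | rfl) <;> assumption)
    have h1 : φ ((gen cs J hx * gen cs J hy) ^ k) = -1 := huniq _ fun v hv =>
      dihedral_neg cs (by omega) hk v (by rwa [← hJe])
    have hodd : Odd k := by
      by_contra hcon
      rw [map_pow, units_pow_even _ (Nat.not_odd_iff_even.mp hcon)] at h1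
      exact absurd h1 (by decide)
    rw [map_pow, units_pow_odd _ hodd, map_mul] at h1
    obtain ⟨q, rfl⟩ := hodd
    rcases units_ne h1 with h2 | h2
    · exact ⟨x, y, hxy, hJe, ⟨q, by omega, by omega⟩, hcond x hx h2⟩
    · exact ⟨y, x, hxy.symm, by rw [hJe, Set.pair_comm],
        ⟨q, by omega, by rw [M.symmetric]; omega⟩, hcond y hy h2⟩
  left
  push Not at hrk
  obtain ⟨u₀, hu₀, hu₀x, hu₀y⟩ := hrk
  -- the label of the edge is `4`
  obtain ⟨c, hc, hcx, hcy, hadj⟩ : ∃ c ∈ J, c ≠ x ∧ c ≠ y ∧ (M x c ≠ 2 ∨ M y c ≠ 2) := by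
    by_contra hcon
    push Not at hcon
    have : ∀ u ∈ J, u = x ∨ u = y := by
      refine hJ.irr.induct hx (Or.inl rfl) ?_
      rintro s - t ht - hM hs
      by_contra h
      push Not at h
      have := hcon t ht h.1 h.2
      rcases hs with rfl | rfl
      · exact hM this.1
      · exact hM this.2
    rcases this u₀ hu₀ with h | h
    · exact hu₀x h
    · exact hu₀y h
  have h4 : M x y = 4 := by
    by_contra hne
    have h6 : 6 ≤ M x y := by omega
    rcases hadj with h | h
    · exact not_G2 hpd hy hx hc hcy.symm hcx.symm h (by rwa [M.symmetric])
    · exact not_G2 hpd hx hy hc hcx.symm hcy.symm h h6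
  -- the case where one end of the edge is a leaf
  have hleafcase : ∀ a ∈ J, ∀ b ∈ J, M a b = 4 → (∀ u ∈ J, a ≠ u → M a u ≠ 2 → u = b) →
      ∃ p n, Odd n ∧ 3 ≤ n ∧ Chain M J p n ∧ (∀ u ∈ J, ∃ i < n, p i = u) ∧
        ∀ s, s ∉ J → M s (p 0) ≠ 0 → s ∈ perp M J := by
    intro a ha b hb hab hleaf
    obtain ⟨p, n, hp, hcov⟩ := exists_chain hpd hJ.irr ha hb hab hleaf
    have hn := hp.two
    let g : ℕ → par cs J := fun i => gen cs J (hp.mem i)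
    have h1 : φ (word g n ^ n) = -1 := huniq _ fun v hv => by
      have e : ((word g n ^ n : par cs J) : W) = word (fun i => cs.simple (p i)) n ^ n := by
        have := map_word (par cs J).subtype g n
        rw [Subgroup.coe_pow]
        congr 1
      rw [e]
      exact hp.neg cs hcov v hv
    -- the values of `φ` on the nodes other than the first one coincide
    have h2 : ∀ m, m + 1 ≤ n → φ (word g (m + 1)) = φ (g 0) * φ (g 1) ^ m := by
      intro m
      induction m with
      | zero => intro _; simp [word]
      | succ m ih =>
        intro hm
        have h3 : ∀ i, 1 ≤ i → i < n → φ (g i) = φ (g 1) := by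
          intro i hi
          induction i, hi using Nat.le_induction with
          | base => intro _; rfl
          | succ i hi ih =>
            intro hin
            rw [← ih (by omega)]
            exact (char_odd cs φ _ _ (by rw [hp.three i hi hin]; decide)).symm
        rw [word_succ, map_mul, ih (by omega), h3 (m + 1) (by omega) (by omega), pow_succ,
          mul_assoc]
    have h3 := h2 (n - 1) (by omega)
    rw [Nat.sub_add_cancel (by omega)] at h3
    rw [map_pow, h3, mul_pow, ← pow_mul, units_pow_even _ (n := (n - 1) * n)
      (by rw [mul_comm]; exact Nat.even_mul_pred_self n), mul_one] at h1
    -- now `h1` says that `φ (p 0) ^ n = -1`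
    have hodd : Odd n := by
      by_contra hcon
      rw [units_pow_even _ (Nat.not_odd_iff_even.mp hcon)] at h1
      exact absurd h1 (by decide)
    rw [units_pow_odd _ hodd] at h1
    refine ⟨p, n, hodd, ?_, hp, hcov, hcond _ (hp.mem 0) h1⟩
    obtain ⟨k, rfl⟩ := hodd
    omega
  by_cases hlx : ∀ u ∈ J, x ≠ u → M x u ≠ 2 → u = y
  · exact hleafcase x hx y hy h4 hlx
  by_cases hly : ∀ u ∈ J, y ≠ u → M y u ≠ 2 → u = x
  · exact hleafcase y hy x hx (by rw [M.symmetric]; exact h4) hly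
  -- type `F₄`: here `-1` is the square of an element of the group
  exfalso
  push Not at hlx hly
  obtain ⟨u, hu, hxu, hMxu, huy⟩ := hlx
  obtain ⟨w, hw, hyw, hMyw, hwx⟩ := hly
  obtain ⟨huw, k1, k2, k3, k4, k5, hcov⟩ := F4_cover hpd hJ.irr hx hy hu hw hxu huy.symm hwx.symm
    hyw h4 hMxu hMyw
  have hJe : J = {x, y, u, w} := Set.Subset.antisymm hcov (by
    rintro v (rfl | rfl | rfl | rfl) <;> assumption)
  have h1 : φ ((gen cs J hu * gen cs J hx * gen cs J hy * gen cs J hw) ^ 6) = -1 :=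
    huniq _ fun v hv => F4_neg cs h4 k1 k2 k3 k4 k5 v (by rwa [← hJe])
  rw [map_pow, units_pow_even _ (by decide)] at h1
  exact absurd h1 (by decide)

end Forward
end CoxGeom

/-! ### Subsets of the group and subsets of the index type -/

namespace CoxGeom

open CoxeterSystem

lemma lift_chain {α β : Type*} {r : α → α → Prop} {q : β → β → Prop} (f : α → β)
    (h : ∀ x y, r x y → q (f x) (f y)) {x y : α} (hxy : Relation.ReflTransGen r x y) :
    Relation.ReflTransGen q (f x) (f y) := by
  induction hxy with
  | refl => exact .refl
  | tail _ hbc ih => exact ih.tail (h _ _ hbc)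

section Translate

variable {I : Type*} [Fintype I] [DecidableEq I] {M : CoxeterMatrix I} (cs : CoxeterSystem M W)

lemma image_subset {J K : Set I} : cs.simple '' J ⊆ cs.simple '' K ↔ J ⊆ K :=
  Set.image_subset_image_iff fun _ _ h => simple_inj cs h

lemma simple_mem_image {J : Set I} {s : I} : cs.simple s ∈ cs.simple '' J ↔ s ∈ J :=
  ⟨fun ⟨_, ht, h⟩ => simple_inj cs h ▸ ht, fun h => ⟨s, h, rfl⟩⟩

lemma isIrreducibleOn_iff {m : W → W → ℕ} (hm : ∀ s t, m (cs.simple s) (cs.simple t) = M s t)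
    {J : Set I} : IsIrreducibleOn m (cs.simple '' J) ↔ Irr M J := by
  have hrel : ∀ x y : I, (cs.simple x ∈ cs.simple '' J ∧ cs.simple y ∈ cs.simple '' J ∧
      cs.simple x ≠ cs.simple y ∧
      (m (cs.simple x) (cs.simple y) = 0 ∨ 2 < m (cs.simple x) (cs.simple y))) ↔
      (x ∈ J ∧ y ∈ J ∧ x ≠ y ∧ M x y ≠ 2) := by
    intro x y
    rw [simple_mem_image, simple_mem_image, hm]
    constructor
    · rintro ⟨h1, h2, h3, h4⟩
      exact ⟨h1, h2, fun h => h3 (by rw [h]), by omega⟩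
    · rintro ⟨h1, h2, h3, h4⟩
      have := M_ne_one M h3
      exact ⟨h1, h2, fun h => h3 (simple_inj cs h), by omega⟩
  constructor
  · rintro ⟨h1, h2⟩
    have hne : J.Nonempty := by simpa using h1
    have : Nonempty I := ⟨hne.some⟩
    refine ⟨hne, fun u hu v hv => ?_⟩
    have hinv := Function.leftInverse_invFun (fun _ _ h => simple_inj cs h : cs.simple.Injective)
    have := lift_chain (Function.invFun cs.simple)
      (q := fun x y => x ∈ J ∧ y ∈ J ∧ x ≠ y ∧ M x y ≠ 2) ?_
      (h2 _ (Set.mem_image_of_mem _ hu) _ (Set.mem_image_of_mem _ hv))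
    · rwa [hinv, hinv] at this
    · rintro _ _ ⟨⟨x, hx, rfl⟩, ⟨y, hy, rfl⟩, h⟩
      simp only [hinv _]
      exact (hrel x y).1 ⟨⟨x, hx, rfl⟩, ⟨y, hy, rfl⟩, h⟩
  · rintro ⟨h1, h2⟩
    refine ⟨h1.image _, ?_⟩
    rintro _ ⟨u, hu, rfl⟩ _ ⟨v, hv, rfl⟩
    exact lift_chain cs.simple (fun x y h => (hrel x y).2 h) (h2 u hu v hv)

/-- Adjoining a generator which does not commute with all of `J` preserves irreducibility. -/
lemma Irr.adjoin {J : Set I} (h : Irr M J) {s t : I} (ht : t ∈ J) (hst : s ≠ t)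
    (h2 : M s t ≠ 2) : Irr M (insert s J) := by
  have hmono : ∀ u ∈ J, ∀ v ∈ J, Relation.ReflTransGen
      (fun x y => x ∈ insert s J ∧ y ∈ insert s J ∧ x ≠ y ∧ M x y ≠ 2) u v := fun u hu v hv =>
    lift_chain id (fun x y ⟨hx, hy, h⟩ => ⟨Or.inr hx, Or.inr hy, h⟩) (h.2 u hu v hv)
  refine ⟨⟨s, Or.inl rfl⟩, ?_⟩
  have h2' : M t s ≠ 2 := by rwa [M.symmetric]
  rintro u (rfl | hu) v (rfl | hv)
  · exact .refl
  · exact .head ⟨Or.inl rfl, Or.inr ht, hst, h2⟩ (hmono t ht v hv)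
  · exact .tail (hmono u hu t ht) ⟨Or.inr ht, Or.inl rfl, hst.symm, h2'⟩
  · exact hmono u hu v hv

lemma not_isCyclic {J : Set I} (h : Irr M J) (h2 : J.Nontrivial) : ¬ IsCyclic (par cs J) := by
  intro hc
  obtain ⟨s, hs⟩ := h.1
  obtain ⟨t, ht, hst, h3⟩ := h.exists_edge h2 hs
  refine not_commute cs hst h3 ?_
  have := IsCyclic.commGroup (α := par cs J) |>.mul_comm
    ⟨_, simple_mem_par cs hs⟩ ⟨_, simple_mem_par cs ht⟩
  exact congrArg Subtype.val this

/-- Bases as subsets of `W` and bases as sets of indices are the same thing. -/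
theorem isBase_iff {m : W → W → ℕ} (hm : ∀ s t, m (cs.simple s) (cs.simple t) = M s t)
    {J : Set I} : IsBase m (Set.range cs.simple) (cs.simple '' J) ↔ Base cs J := by
  unfold IsBase
  rw [isIrreducibleOn_iff cs hm]
  constructor
  · rintro ⟨-, hirr, hfin, hcyc, hmax⟩
    refine ⟨hirr, hfin, ?_, fun s hs hs2 t ht => ?_⟩
    · by_contra h
      obtain ⟨s, hs⟩ : ∃ s, J = {s} := by
        obtain ⟨s, hs⟩ := hirr.1
        exact ⟨s, (Set.not_nontrivial_iff.1 h).eq_singleton_of_mem hs⟩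
      refine hcyc ?_
      rw [hs, Set.image_singleton, ← Subgroup.zpowers_eq_closure]
      infer_instance
    · by_contra h2
      have hne : s ≠ t := fun h => hs (h ▸ ht)
      have := hmax (cs.simple '' insert s J) (Set.image_subset_range _ _)
        ((image_subset cs).2 (Set.subset_insert s J))
        ((isIrreducibleOn_iff cs hm).2 (hirr.adjoin ht hne h2)) hs2
      exact hs ((image_subset cs).1 this.subset (Set.mem_insert s J))
  · rintro ⟨hirr, hfin, htwo, hmax⟩
    refine ⟨Set.image_subset_range _ _, hirr, hfin, not_isCyclic cs hirr htwo, ?_⟩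
    intro B' hB' hJB hirr' hfin'
    obtain ⟨K, rfl⟩ : ∃ K, cs.simple '' K = B' := Set.subset_range_iff_exists_image_eq.1 hB'
    rw [image_subset] at hJB
    rw [isIrreducibleOn_iff cs hm] at hirr'
    congr 1
    refine Set.Subset.antisymm ?_ hJB
    obtain ⟨s, hs⟩ := hirr.1
    refine fun t ht => hirr'.induct (p := fun t => t ∈ J) (hJB hs) hs ?_ t ht
    intro x hxK y hy hxy hM hx
    by_contra hyJ
    refine hM ?_
    rw [M.symmetric]
    refine hmax y hyJ (hfin'.subset ?_) x hx
    exact par_mono cs (Set.insert_subset hy hJB)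

/-- The Coxeter matrix of an indexed Coxeter system, transported to its set of generators. -/
lemma isCoxeterSystemOn_range {m : W → W → ℕ}
    (hm : ∀ s t, m (cs.simple s) (cs.simple t) = M s t) :
    IsCoxeterSystemOn m (Set.range cs.simple) := by
  have hinj : cs.simple.Injective := fun _ _ h => simple_inj cs h
  refine ⟨M.reindex (Equiv.ofInjective _ hinj), cs.reindex (Equiv.ofInjective _ hinj), ?_, ?_⟩
  · intro s
    rw [reindex_simple, Equiv.apply_ofInjective_symm hinj]
  · intro s t
    rw [CoxeterMatrix.reindex_apply, ← hm, Equiv.apply_ofInjective_symm hinj, Equiv.apply_ofInjective_symm hinj]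

/-- A function on `W × W` restricting to the Coxeter matrix. -/
lemma exists_matrix : ∃ m : W → W → ℕ, ∀ s t, m (cs.simple s) (cs.simple t) = M s t := by
  have hinj : cs.simple.Injective := fun _ _ h => simple_inj cs h
  rcases isEmpty_or_nonempty I with h | h
  · exact ⟨fun _ _ => 0, fun s => h.elim s⟩
  · refine ⟨fun x y => M (Function.invFun cs.simple x) (Function.invFun cs.simple y), fun s t => ?_⟩
    simp only [Function.leftInverse_invFun hinj _]

lemma par_map (e : W ≃* W) (J : Set I) :
    par (cs.map e) J = (par cs J).map e.toMonoidHom := by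
  unfold par
  rw [MonoidHom.map_closure, ← Set.image_comp]
  rfl

lemma Base.map {J : Set I} (h : Base cs J) (e : W ≃* W) : Base (cs.map e) J := by
  have key : ∀ K : Set I, (par (cs.map e) K : Set W).Finite ↔ (par cs K : Set W).Finite := by
    intro K
    rw [par_map, Subgroup.coe_map]
    exact Set.finite_image_iff e.injective.injOn
  exact ⟨h.irr, (key J).2 h.fin, h.two, fun s hs hf => h.max s hs ((key _).1 hf)⟩

end Translate

/-- A set of Coxeter generators, as an indexed Coxeter system. -/
lemma exists_index {m : W → W → ℕ} {S : Set W} (h : IsCoxeterSystemOn m S) :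
    ∃ (M : CoxeterMatrix S) (cs : CoxeterSystem M W), (∀ s : S, cs.simple s = s) ∧
      ∀ s t : S, m (cs.simple s) (cs.simple t) = M s t := by
  obtain ⟨M, cs, h1, h2⟩ := h
  exact ⟨M, cs, h1, fun s t => by rw [h1, h1]; exact (h2 s t).symm⟩

lemma image_preimage {S B : Set W} (hBS : B ⊆ S) {M : CoxeterMatrix S} {cs : CoxeterSystem M W}
    (h : ∀ s : S, cs.simple s = s) : cs.simple '' {s : S | (s : W) ∈ B} = B := by
  ext x
  constructor
  · rintro ⟨s, hs, rfl⟩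
    rw [h]; exact hs
  · intro hx
    exact ⟨⟨x, hBS hx⟩, hx, h _⟩

lemma range_simple {S : Set W} {M : CoxeterMatrix S} {cs : CoxeterSystem M W}
    (h : ∀ s : S, cs.simple s = s) : Set.range cs.simple = S := by
  ext x
  constructor
  · rintro ⟨s, rfl⟩
    rw [h]; exact s.2
  · intro hx
    exact ⟨⟨x, hx⟩, h _⟩

end CoxGeom

/-! ### The forward implication for sets of generators -/

namespace CoxGeom

open CoxeterSystem

section ForwardSet

variable {I : Type*} [Fintype I] [DecidableEq I] {M : CoxeterMatrix I} (cs : CoxeterSystem M W)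

variable {cs} in
lemma Chain.entry {J : Set I} {p : ℕ → I} {n : ℕ} (h : Chain M J p n) {i j : ℕ} (hi : i < n)
    (hj : j < n) : M (p i) (p j) = if i = j then 1 else if i + 1 = j ∨ j + 1 = i then
      (if i = 0 ∨ j = 0 then 4 else 3) else 2 := by
  have key : ∀ i j : ℕ, i < j → j < n → M (p i) (p j) = if i + 1 = j then
      (if i = 0 then 4 else 3) else 2 := by
    intro i j hij hj
    split_ifs with h1 h2
    · subst h2; subst h1; exact h.four
    · subst h1; exact h.three i (by omega) hj
    · exact h.far i j (by omega) hj
  rcases lt_trichotomy i j with hij | rfl | hij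
  · rw [key i j hij hj]; split_ifs <;> omega
  · simp
  · rw [M.symmetric, key j i hij hi]; split_ifs <;> omega

/-- A chain covering `J` yields the type `C_n`, its elements being numbered from the far end. -/
lemma Chain.hasType {m : W → W → ℕ} (hm : ∀ s t, m (cs.simple s) (cs.simple t) = M s t)
    {J : Set I} {p : ℕ → I} {n : ℕ} (h : Chain M J p n) (hcov : ∀ u ∈ J, ∃ i < n, p i = u) :
    HasType m (cs.simple '' J) (cMat n) := by
  let f : Fin n → ↥(cs.simple '' J) := fun i => ⟨cs.simple (p (n - 1 - i)), _, h.mem _, rfl⟩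
  have hf : Function.Bijective f := by
    constructor
    · intro i j hij
      have h1 := h.inj _ (by omega) _ (by omega) (simple_inj cs (congrArg Subtype.val hij))
      exact Fin.ext (by omega)
    · rintro ⟨_, u, hu, rfl⟩
      obtain ⟨i, hi, rfl⟩ := hcov u hu
      refine ⟨⟨n - 1 - i, by omega⟩, Subtype.ext ?_⟩
      have : n - 1 - (n - 1 - i) = i := by omega
      change cs.simple (p (n - 1 - (n - 1 - i))) = _
      rw [this]
  refine ⟨(Equiv.ofBijective f hf).symm, fun u v => ?_⟩
  obtain ⟨i, rfl⟩ := hf.2 u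
  obtain ⟨j, rfl⟩ := hf.2 v
  have hi : (Equiv.ofBijective f hf).symm (f i) = i := Equiv.ofBijective_symm_apply_apply f hf i
  have hj : (Equiv.ofBijective f hf).symm (f j) = j := Equiv.ofBijective_symm_apply_apply f hf j
  rw [hi, hj]
  change m (cs.simple _) (cs.simple _) = _
  rw [hm, h.entry (by omega) (by omega)]
  unfold cMat
  have := i.2
  have := j.2
  simp only [Fin.ext_iff]
  split_ifs <;> omega

end ForwardSet

/-- An unreduced base satisfies one of the two conditions. -/
theorem forward_set {m : W → W → ℕ} {S : Set W} (hcs : IsCoxeterSystemOn m S) (hfin : S.Finite)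
    {B : Set W} (hB : IsBase m S B) (hred : ¬ IsReducedBase m S B) :
    (∃ q : ℕ, 1 ≤ q ∧ HasType m B (cMat (2 * q + 1)) ∧
          ∃ a ∈ B, (∃ b ∈ B, ∃ c ∈ B, m a b = 4 ∧ m b c = 3) ∧
            ∀ s ∈ S, s ∉ B → ∀ t ∈ B, m s a ≠ 0 → m s t = 2) ∨
       (∃ q : ℕ, 1 ≤ q ∧ ∃ a b : W, B = {a, b} ∧ a ≠ b ∧ m a b = 4 * q + 2 ∧
          ((∀ s ∈ S, s ∉ B → m s a ≠ 0 → m s a = 2 ∧ m s b = 2) ∨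
           (∀ s ∈ S, s ∉ B → m s b ≠ 0 → m s a = 2 ∧ m s b = 2))) := by
  classical
  unfold IsReducedBase at hred
  push Not at hred
  obtain ⟨S', m', B', hcs', hfin', hB', ⟨w, hw⟩, hcard⟩ := hred
  haveI := hfin.fintype
  haveI := hfin'.fintype
  obtain ⟨M, cs, h1, hm⟩ := exists_index hcs
  obtain ⟨M', cs', h1', hm'⟩ := exists_index hcs'
  obtain ⟨J, rfl⟩ : ∃ J, cs.simple '' J = B := ⟨_, image_preimage hB.1 h1⟩
  obtain ⟨J', rfl⟩ : ∃ J', cs'.simple '' J' = B' := ⟨_, image_preimage hB'.1 h1'⟩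
  have hJ : Base cs J := by
    rw [← isBase_iff cs hm, range_simple h1]; exact hB
  have hJ' : Base cs' J' := by
    rw [← isBase_iff cs' hm', range_simple h1']; exact hB'
  have hmap := par_map cs' (MulAut.conj w⁻¹) J'
  have hK : ⁅par cs J, par cs J⁆ =
      ⁅par (cs'.map (MulAut.conj w⁻¹)) J', par (cs'.map (MulAut.conj w⁻¹)) J'⁆ := by
    rw [hmap, ← Subgroup.map_commutator]
    change _ = Subgroup.map _ ⁅Subgroup.closure _, Subgroup.closure _⁆
    rw [← hw, Subgroup.map_map]
    have : (MulAut.conj w⁻¹).toMonoidHom.comp (MulAut.conj w).toMonoidHom = MonoidHom.id W := by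
      ext x; simp [mul_assoc]
    rw [this, Subgroup.map_id]
    rfl
  have hc : Nat.card (par (cs'.map (MulAut.conj w⁻¹)) J') < Nat.card (par cs J) := by
    rw [hmap, Subgroup.card_map_of_injective (MulAut.conj w⁻¹).injective]
    exact hcard
  have hmem : ∀ s ∈ S, s ∉ cs.simple '' J → ∃ i : S, cs.simple i = s ∧ i ∉ J := fun s hs hsJ =>
    ⟨⟨s, hs⟩, h1 _, fun h => hsJ ⟨_, h, h1 _⟩⟩
  rcases forward cs (cs'.map _) hJ (hJ'.map cs' _) hK hc with
    ⟨p, n, hodd, hn, hch, hcov, hperp⟩ | ⟨x, y, hxy, rfl, ⟨q, hq, hq2⟩, hperp⟩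
  · left
    obtain ⟨q, rfl⟩ := hodd
    refine ⟨q, by omega, hch.hasType cs hm hcov, _, ⟨p 0, hch.mem 0, rfl⟩,
      ⟨_, ⟨p 1, hch.mem 1, rfl⟩, _, ⟨p 2, hch.mem 2, rfl⟩, ?_, ?_⟩, ?_⟩
    · rw [hm]; exact hch.four
    · rw [hm]; exact hch.three 1 le_rfl (by omega)
    · rintro s hs hsJ _ ⟨t, ht, rfl⟩ h0
      obtain ⟨i, rfl, hi⟩ := hmem s hs hsJ
      rw [hm] at h0 ⊢
      exact hperp i hi h0 t ht
  · right
    refine ⟨q, hq, cs.simple x, cs.simple y, Set.image_pair _ _ _, fun h => hxy (simple_inj cs h),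
      by rw [hm, hq2], Or.inl fun s hs hsJ h0 => ?_⟩
    obtain ⟨i, rfl, hi⟩ := hmem s hs hsJ
    rw [hm] at h0
    rw [hm, hm]
    exact ⟨hperp i hi h0 x (by simp), hperp i hi h0 y (by simp)⟩

end CoxGeom

/-! ### Splitting off a reflection whose Coxeter labels are even -/

namespace CoxGeom

open CoxeterSystem

/-- `Δ` arises from `N` by replacing the generator `a`, which commutes with all others except `b`,
by `aba`: this is the Coxeter matrix of the kernel of the character with `a ↦ -1` and all other
generators mapping to `1`. -/
structure Fold {K : Type*} (N Δ : CoxeterMatrix K) (a b : K) (k : ℕ) : Prop where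
  ne : a ≠ b
  edge : N a b = 2 * k
  two : ∀ c, c ≠ a → c ≠ b → N a c = 2
  edge' : Δ a b = k
  two' : ∀ c, c ≠ a → c ≠ b → Δ a c = N b c
  rest : ∀ c c', c ≠ a → c' ≠ a → Δ c c' = N c c'

section Twist

variable {K : Type*} [DecidableEq K] {N Δ : CoxeterMatrix K} {a b : K} {k : ℕ}
  {G D : Type*} [Group G] [Group D] (cg : CoxeterSystem N G) (cd : CoxeterSystem Δ D)

lemma Fold.swap (h : Fold N Δ a b k) (u v : K) :
    Δ (Equiv.swap a b u) (Equiv.swap a b v) = Δ u v := by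
  have hab := h.ne
  have key : ∀ c, c ≠ a → c ≠ b → Δ b c = Δ a c := fun c h1 h2 => by
    rw [h.two' c h1 h2, h.rest b c hab.symm h1]
  rcases eq_or_ne u a with rfl | hua
  · rcases eq_or_ne v u with rfl | hva
    · simp
    · rcases eq_or_ne v b with rfl | hvb
      · simp [Δ.symmetric]
      · rw [Equiv.swap_apply_left, Equiv.swap_apply_of_ne_of_ne hva hvb, key v hva hvb]
  · rcases eq_or_ne u b with rfl | hub
    · rcases eq_or_ne v a with rfl | hva
      · simp [Δ.symmetric]
      · rcases eq_or_ne v u with rfl | hvb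
        · simp
        · rw [Equiv.swap_apply_right, Equiv.swap_apply_of_ne_of_ne hva hvb, key v hva hvb]
    · rw [Equiv.swap_apply_of_ne_of_ne hua hub]
      rcases eq_or_ne v a with rfl | hva
      · rw [Equiv.swap_apply_left, Δ.symmetric, key u hua hub, Δ.symmetric]
      · rcases eq_or_ne v b with rfl | hvb
        · rw [Equiv.swap_apply_right, Δ.symmetric, ← key u hua hub, Δ.symmetric]
        · rw [Equiv.swap_apply_of_ne_of_ne hva hvb]

/-- The automorphism interchanging the generators `a` and `b`. -/
noncomputable def tau (h : Fold N Δ a b k) : D →* D :=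
  cd.lift ⟨fun c => cd.simple (Equiv.swap a b c), fun u v => by
    rw [← h.swap u v]; exact cd.simple_mul_simple_pow _ _⟩

lemma tau_simple (h : Fold N Δ a b k) (c : K) :
    tau cd h (cd.simple c) = cd.simple (Equiv.swap a b c) :=
  cd.lift_apply_simple _ c

lemma tau_tau (h : Fold N Δ a b k) (e : D) : tau cd h (tau cd h e) = e := by
  have : (tau cd h).comp (tau cd h) = MonoidHom.id D := cd.ext_simple fun c => by
    simp [tau_simple]
  exact DFunLike.congr_fun this e

/-- A recipe for homomorphisms out of `G`: the generator `a` goes to an involution `x`, the others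
to their images under a homomorphism `j` out of `D` which `x` intertwines with `tau`. -/
lemma liftable {X : Type*} [Monoid X] (h : Fold N Δ a b k) (j : D →* X) {x : X} (hx : x * x = 1)
    (hxj : ∀ e, x * j e = j (tau cd h e) * x) :
    N.IsLiftable (fun c => if c = a then x else j (cd.simple c)) := by
  have hjx : ∀ e, j e * x = x * j (tau cd h e) := fun e => by rw [hxj, tau_tau]
  have hb : (j (cd.simple b) * x) ^ (2 * k) = 1 := by
    rw [pow_mul, pow_two]
    have : j (cd.simple b) * x * (j (cd.simple b) * x) = j (cd.simple b * cd.simple a) := by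
      calc _ = j (cd.simple b) * x * (x * j (tau cd h (cd.simple b))) := by rw [← hjx]
        _ = j (cd.simple b) * (x * x) * j (tau cd h (cd.simple b)) := by simp only [mul_assoc]
        _ = _ := by rw [hx, mul_one, tau_simple, Equiv.swap_apply_right, map_mul]
    rw [this, ← map_pow, ← h.edge', Δ.symmetric, cd.simple_mul_simple_pow, map_one]
  have hc : ∀ c, c ≠ a → c ≠ b → (j (cd.simple c) * x) ^ 2 = 1 := fun c h1 h2 => by
    rw [pow_two]
    nth_rw 1 [hjx]
    rw [tau_simple, Equiv.swap_apply_of_ne_of_ne h1 h2, mul_assoc, ← mul_assoc (j _) (j _),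
      ← map_mul, cd.simple_mul_simple_self, map_one, one_mul, hx]
  have hflip : ∀ (y : X) (n : ℕ), y * y = 1 → (y * x) ^ n = 1 → (x * y) ^ n = 1 := by
    intro y n hy hyx
    have : ∀ n : ℕ, (x * y) ^ n = x * (y * x) ^ n * x := by
      intro n
      induction n with
      | zero => simp [hx]
      | succ n ih => rw [pow_succ, ih, pow_succ]; simp only [mul_assoc]; rw [← mul_assoc x x, hx]; simp
    rw [this, hyx, mul_one, hx]
  have hsq : ∀ c, j (cd.simple c) * j (cd.simple c) = 1 := fun c => by
    rw [← map_mul, cd.simple_mul_simple_self, map_one]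
  have main : ∀ c, c ≠ a → (j (cd.simple c) * x) ^ N a c = 1 := fun c hca => by
    rcases eq_or_ne c b with rfl | hcb
    · rw [h.edge, hb]
    · rw [h.two c hca hcb, hc c hca hcb]
  intro u v
  simp only
  split_ifs with hu hv hv
  · subst hu; subst hv; simp [hx]
  · subst hu; exact hflip _ _ (hsq v) (main v hv)
  · subst hv; rw [N.symmetric]; exact main u hu
  · rw [← map_mul, ← map_pow, ← h.rest u v hu hv, cd.simple_mul_simple_pow, map_one]

/-- `tau` as a self-map of `D`. -/
noncomputable def tauEnd (h : Fold N Δ a b k) : Function.End D := fun e => tau cd h e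

/-- The action of `G` on the set `D` in which `a` acts by `tau` and the other generators act by
left translations. -/
noncomputable def act (h : Fold N Δ a b k) : G →* Function.End D :=
  cg.lift ⟨_, liftable cd h (MulAction.toEndHom (M := D) (α := D)) (x := tauEnd cd h)
    (funext fun e => tau_tau cd h e)
    (fun e => funext fun e' => map_mul (tau cd h) e e')⟩

lemma act_a (h : Fold N Δ a b k) (e : D) : act cg cd h (cg.simple a) e = tau cd h e := by
  unfold act
  rw [cg.lift_apply_simple]
  simp [tauEnd]

lemma act_ne (h : Fold N Δ a b k) {c : K} (hc : c ≠ a) (e : D) :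
    act cg cd h (cg.simple c) e = cd.simple c * e := by
  unfold act
  rw [cg.lift_apply_simple]
  simp only [hc, if_false]
  rfl

/-- The first component of an element of `G`, written as a product of an element of `D` and a power
of `a`. -/
noncomputable def comp (h : Fold N Δ a b k) (g : G) : D := act cg cd h g 1

/-- A homomorphism given by the recipe of `liftable` sends an element of `G` to the image of its
first component, times `x` if the character `χ` of the element is `-1`. -/
theorem eval {X : Type*} [Monoid X] (h : Fold N Δ a b k) (j : D →* X) {x : X} (hx : x * x = 1)
    (hxj : ∀ e, x * j e = j (tau cd h e) * x) (lam : G →* X) (hla : lam (cg.simple a) = x)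
    (hlc : ∀ c, c ≠ a → lam (cg.simple c) = j (cd.simple c)) (χ : G →* ℤˣ)
    (hχa : χ (cg.simple a) = -1) (hχ : ∀ c, c ≠ a → χ (cg.simple c) = 1) (g : G) :
    (χ g = 1 ∧ lam g = j (comp cg cd h g)) ∨ (χ g = -1 ∧ lam g = j (comp cg cd h g) * x) := by
  induction g using cg.simple_induction_left with
  | one =>
    left
    have : comp cg cd h 1 = 1 := by unfold comp; rw [map_one]; rfl
    simp [this]
  | mul_simple_left g c ih =>
    have hc : comp cg cd h (cg.simple c * g) = act cg cd h (cg.simple c) (comp cg cd h g) := by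
      unfold comp; rw [map_mul]; rfl
    rw [hc, map_mul, map_mul]
    rcases eq_or_ne c a with rfl | hca
    · rw [act_a, hχa, hla]
      rcases ih with ⟨h1, h2⟩ | ⟨h1, h2⟩
      · right; rw [h1, h2, hxj]; simp
      · left; rw [h1, h2, ← mul_assoc, hxj, mul_assoc, hx]; simp
    · rw [act_ne _ _ _ hca, hχ c hca, hlc c hca, map_mul]
      rcases ih with ⟨h1, h2⟩ | ⟨h1, h2⟩
      · left; rw [h1, h2]; simp
      · right; rw [h1, h2]; simp [mul_assoc]

section Central

variable (h : Fold N Δ a b k) {ζ : G} (hζc : ∀ g, ζ * g = g * ζ) (hζ2 : ζ * ζ = 1) (χ : G →* ℤˣ)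
  (hχa : χ (cg.simple a) = -1) (hχ : ∀ c, c ≠ a → χ (cg.simple c) = 1) (hχζ : χ ζ = -1)

include hχa hχ hχζ in
lemma eval_central {X : Type*} [Monoid X] (j : D →* X) {x : X} (hx : x * x = 1)
    (hxj : ∀ e, x * j e = j (tau cd h e) * x) (lam : G →* X) (hla : lam (cg.simple a) = x)
    (hlc : ∀ c, c ≠ a → lam (cg.simple c) = j (cd.simple c)) :
    lam ζ = j (comp cg cd h ζ) * x := by
  rcases eval cg cd h j hx hxj lam hla hlc χ hχa hχ ζ with ⟨h1, _⟩ | ⟨_, h2⟩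
  · rw [hχζ] at h1; exact absurd h1 (by decide)
  · exact h2

include hχa hχ hχζ in
lemma act_central (e : D) : act cg cd h ζ e = comp cg cd h ζ * tau cd h e := by
  have := eval_central cg cd h χ hχa hχ hχζ (MulAction.toEndHom (M := D) (α := D))
    (x := tauEnd cd h) (funext fun e => tau_tau cd h e)
    (fun e => funext fun e' => map_mul (tau cd h) e e') (act cg cd h)
    (funext fun e => act_a cg cd h e) (fun c hc => funext fun e => act_ne cg cd h hc e)
  rw [this]; rfl

include hζc hχa hχ hχζ in
lemma tau_comp : tau cd h (comp cg cd h ζ) = comp cg cd h ζ := by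
  have h1 := congrFun (congrArg (act cg cd h) (hζc (cg.simple a))) 1
  rw [map_mul, map_mul] at h1
  change act cg cd h ζ (act cg cd h (cg.simple a) 1) =
    act cg cd h (cg.simple a) (act cg cd h ζ 1) at h1
  rw [act_a, act_a, map_one] at h1
  exact h1.symm

include hζc hζ2 hχa hχ hχζ in
lemma comp_sq : comp cg cd h ζ * comp cg cd h ζ = 1 := by
  have h1 := congrFun (congrArg (act cg cd h) hζ2) 1
  rw [map_mul, map_one] at h1
  change act cg cd h ζ (comp cg cd h ζ) = 1 at h1
  rwa [act_central cg cd h χ hχa hχ hχζ, tau_comp cg cd h hζc χ hχa hχ hχζ] at h1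

include hζc hζ2 hχa hχ hχζ in
/-- The first component of a central involution realises `tau` as an inner automorphism. -/
lemma comp_conj (e : D) : comp cg cd h ζ * e = tau cd h e * comp cg cd h ζ := by
  have hne : ∀ c, c ≠ a → comp cg cd h ζ * tau cd h (cd.simple c) =
      cd.simple c * comp cg cd h ζ := by
    intro c hc
    have h1 := congrFun (congrArg (act cg cd h) (hζc (cg.simple c))) 1
    rw [map_mul, map_mul] at h1
    change act cg cd h ζ (act cg cd h (cg.simple c) 1) =
      act cg cd h (cg.simple c) (comp cg cd h ζ) at h1
    rwa [act_ne _ _ _ hc, act_ne _ _ _ hc, act_central cg cd h χ hχa hχ hχζ, mul_one] at h1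
  have hsq := comp_sq cg cd h hζc hζ2 χ hχa hχ hχζ
  have hne' : ∀ c, c ≠ a → tau cd h (cd.simple c) * comp cg cd h ζ =
      comp cg cd h ζ * cd.simple c := by
    intro c hc
    have h1 := hne c hc
    calc _ = comp cg cd h ζ * (comp cg cd h ζ * tau cd h (cd.simple c)) * comp cg cd h ζ := by
          rw [← mul_assoc, hsq, one_mul]
      _ = _ := by rw [h1, mul_assoc, mul_assoc, hsq, mul_one]
  induction e using cd.simple_induction_left with
  | one => simp
  | mul_simple_left e c ih =>
    have hs : comp cg cd h ζ * cd.simple c = tau cd h (cd.simple c) * comp cg cd h ζ := by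
      rcases eq_or_ne c a with rfl | hc
      · have := hne b h.ne.symm
        rw [tau_simple, Equiv.swap_apply_right] at this
        rw [this, tau_simple, Equiv.swap_apply_left]
      · exact (hne' c hc).symm
    rw [← mul_assoc, hs, mul_assoc, ih, map_mul, mul_assoc]

end Central

end Twist

end CoxGeom

/-! ### The modified Coxeter generators -/

namespace CoxGeom

open CoxeterSystem

/-- The restriction of a Coxeter matrix along an embedding. -/
def pull {I K : Type*} (M : CoxeterMatrix I) (f : K ↪ I) : CoxeterMatrix K where
  M := fun u v => M (f u) (f v)
  isSymm := by ext u v; exact M.symmetric _ _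
  diagonal u := M.diagonal _
  off_diagonal u v h := M.off_diagonal _ _ (f.injective.ne h)

lemma pull_apply {I K : Type*} (M : CoxeterMatrix I) (f : K ↪ I) (u v : K) :
    pull M f u v = M (f u) (f v) := rfl

section NewMatrix

variable {I : Type*} [DecidableEq I] (M : CoxeterMatrix I) (a b : I) (k : ℕ)

/-- The label joining `aba` to the generator `c ≠ a`. -/
def leg (c : I) : ℕ := if c = b then k else if M c a = 0 then 0 else M b c

/-- The labels of the generators other than the central one. -/
def lab (c d : I) : ℕ :=
  if c = d then 1 else if c = a then leg M a b k d else if d = a then leg M a b k c else M c d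

/-- The Coxeter matrix of the modified generators: `some c` stands for `c` if `c ≠ a`, `some a`
for `aba`, and `none` for the central involution of the base. -/
def newM (hk : k ≠ 1) : CoxeterMatrix (Option I) where
  M := fun
    | none, none => 1
    | none, some c => if M c a = 0 then 0 else 2
    | some c, none => if M c a = 0 then 0 else 2
    | some c, some c' => lab M a b k c c'
  isSymm := by
    ext u v
    rcases u with - | u <;> rcases v with - | v
    · rfl
    · rfl
    · rfl
    change lab M a b k v u = lab M a b k u v
    unfold lab
    rcases eq_or_ne u v with rfl | huv
    · rfl
    · rw [M.symmetric u v]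
      split_ifs <;> simp_all
  diagonal u := by rcases u with - | u <;> simp [lab]
  off_diagonal u v h := by
    have hleg : ∀ c, leg M a b k c ≠ 1 := by
      intro c
      unfold leg
      split_ifs with h1
      · exact hk
      · omega
      · exact M.off_diagonal _ _ (Ne.symm h1)
    rcases u with - | u <;> rcases v with - | v
    · exact absurd rfl h
    · simp only; split_ifs <;> omega
    · simp only; split_ifs <;> omega
    · have huv : u ≠ v := fun h' => h (by rw [h'])
      simp only
      unfold lab
      rw [if_neg huv]
      split_ifs
      · exact hleg _
      · exact hleg _
      · exact M.off_diagonal _ _ huv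

variable {M a b k} (hk : k ≠ 1)

lemma newM_none (c : I) : newM M a b k hk none (some c) = if M c a = 0 then 0 else 2 := rfl

lemma newM_ne {c c' : I} (h : c ≠ a) (h' : c' ≠ a) :
    newM M a b k hk (some c) (some c') = M c c' := by
  change lab M a b k c c' = _
  unfold lab
  split_ifs with h1
  · rw [h1, M.diagonal]
  · rfl

lemma newM_a {c : I} (h : c ≠ a) : newM M a b k hk (some a) (some c) = leg M a b k c := by
  change lab M a b k a c = _
  unfold lab
  simp [h.symm]

end NewMatrix

section New

variable {I : Type*} [Fintype I] [DecidableEq I] {M : CoxeterMatrix I} (cs : CoxeterSystem M W)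

/-- The common shape of the two kinds of unreduced bases `J`: the end `a` of the diagram of `J` is
joined only to `b`, by an edge labelled `2 * k`, and the generators outside `J` are free from `a`
or commute with `J`. -/
structure Leaf (J : Set I) (a b : I) (k : ℕ) : Prop where
  base : Base cs J
  ha : a ∈ J
  hb : b ∈ J
  ne : a ≠ b
  edge : M a b = 2 * k
  k_ne : k ≠ 1
  two : ∀ c ∈ J, c ≠ a → c ≠ b → M a c = 2
  out : ∀ s, s ∉ J → M s a ≠ 0 → s ∈ perp M J
  big : k ≠ 2 ∨ ∃ c ∈ J, c ≠ a ∧ c ≠ b ∧ M b c ≠ 2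

variable {cs} {J : Set I} {a b : I} {k : ℕ}

/-- The Coxeter matrix of the base `J`. -/
abbrev baseM (M : CoxeterMatrix I) (J : Set I) : CoxeterMatrix J := pull M (.subtype _)

/-- The Coxeter matrix of the modified base. -/
abbrev foldM (M : CoxeterMatrix I) (J : Set I) (a b : I) (k : ℕ) (hk : k ≠ 1) : CoxeterMatrix J :=
  pull (newM M a b k hk) ((Function.Embedding.subtype _).trans .some)

/-- `ζ` is a central involution of the abstract Coxeter group of `J`, involving the generator `a`
an odd number of times. -/
structure Cen (M : CoxeterMatrix I) (J : Set I) (a : I) (ζ : (baseM M J).Group) : Prop where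
  comm : ∀ g, ζ * g = g * ζ
  sq : ζ * ζ = 1
  chi : ∀ χ : (baseM M J).Group →* ℤˣ,
    (∀ c : J, χ ((baseM M J).toCoxeterSystem.simple c) = if (c : I) = a then -1 else 1) → χ ζ = -1

namespace Leaf

variable (L : Leaf cs J a b k)
include L

lemma label_ne_zero {c : I} (hc : c ∈ J) : M c a ≠ 0 := ne_zero_of_finite cs L.base.fin hc L.ha

lemma leg_eq {c : I} (hc : c ∈ J) (h : c ≠ b) : leg M a b k c = M b c := by
  unfold leg
  rw [if_neg h, if_neg (L.label_ne_zero hc)]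

lemma fold : Fold (baseM M J) (foldM M J a b k L.k_ne) ⟨a, L.ha⟩ ⟨b, L.hb⟩ k where
  ne := fun h => L.ne (congrArg Subtype.val h)
  edge := L.edge
  two c h1 h2 := L.two c c.2 (fun h => h1 (Subtype.ext h)) (fun h => h2 (Subtype.ext h))
  edge' := by
    rw [pull_apply]
    refine (newM_a L.k_ne L.ne.symm).trans ?_
    simp [leg]
  two' c h1 h2 := by
    have h1' : (c : I) ≠ a := fun h => h1 (Subtype.ext h)
    have h2' : (c : I) ≠ b := fun h => h2 (Subtype.ext h)
    rw [pull_apply]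
    refine (newM_a L.k_ne h1').trans ?_
    rw [L.leg_eq c.2 h2']
    rfl
  rest c c' h1 h2 := newM_ne L.k_ne (fun h => h1 (Subtype.ext h)) (fun h => h2 (Subtype.ext h))

/-- The modified Coxeter group. -/
abbrev sys (L : Leaf cs J a b k) : CoxeterSystem (newM M a b k L.k_ne) (newM M a b k L.k_ne).Group :=
  (newM M a b k L.k_ne).toCoxeterSystem

/-- The abstract Coxeter group of the modified base, mapped to the modified Coxeter group. -/
noncomputable def inc (L : Leaf cs J a b k) :
    (foldM M J a b k L.k_ne).Group →* (newM M a b k L.k_ne).Group :=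
  (foldM M J a b k L.k_ne).toCoxeterSystem.lift
    ⟨fun c => L.sys.simple (some c), fun _ _ => L.sys.simple_mul_simple_pow _ _⟩

omit [Fintype I] in
lemma inc_simple [Fintype I] (c : J) : L.inc ((foldM M J a b k L.k_ne).toCoxeterSystem.simple c) =
    L.sys.simple (some (c : I)) :=
  CoxeterSystem.lift_apply_simple _ _ c

/-- The abstract Coxeter group of the base, mapped to `W`. -/
noncomputable def toW (_ : Leaf cs J a b k) : (baseM M J).Group →* W :=
  (baseM M J).toCoxeterSystem.lift
    ⟨fun c => cs.simple c, fun _ _ => cs.simple_mul_simple_pow _ _⟩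

lemma toW_simple (c : J) : L.toW ((baseM M J).toCoxeterSystem.simple c) = cs.simple c :=
  CoxeterSystem.lift_apply_simple _ _ c

lemma toW_mem (g : (baseM M J).Group) : L.toW g ∈ par cs J := by
  induction g using (baseM M J).toCoxeterSystem.simple_induction with
  | one => rw [map_one]; exact one_mem _
  | simple c => rw [toW_simple]; exact simple_mem_par cs c.2
  | mul g g' h h' => rw [map_mul]; exact mul_mem h h'

lemma newM_none_J {c : I} (hc : c ∈ J) : newM M a b k L.k_ne none (some c) = 2 := by
  rw [newM_none, if_neg (L.label_ne_zero hc)]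

lemma newM_out {s c : I} (hs : s ∉ J) (hsa : M s a ≠ 0) (hc : c ∈ J) :
    newM M a b k L.k_ne (some s) (some c) = 2 := by
  have hne : s ≠ a := fun h => hs (h ▸ L.ha)
  have hperp := L.out s hs hsa
  rcases eq_or_ne c a with rfl | hca
  · rw [CoxeterMatrix.symmetric, newM_a L.k_ne hne]
    unfold leg
    rw [if_neg (fun h : s = b => hs (h ▸ L.hb)), if_neg hsa, M.symmetric]
    exact hperp b L.hb
  · rw [newM_ne L.k_ne hne hca]; exact hperp c hc

/-- Generators whose labels with the modified base are all `2` commute with it. -/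
lemma comm_inc {u : Option I} (h : ∀ c ∈ J, newM M a b k L.k_ne u (some c) = 2)
    (e : (foldM M J a b k L.k_ne).Group) : Commute (L.sys.simple u) (L.inc e) := by
  induction e using (foldM M J a b k L.k_ne).toCoxeterSystem.simple_induction with
  | one => rw [map_one]; exact Commute.one_right _
  | simple c => rw [inc_simple]; exact commute_of_two L.sys (h c c.2)
  | mul g g' h h' => rw [map_mul]; exact h.mul_right h'

end Leaf

end New

end CoxGeom

/-! ### Relations between the modified generators -/

namespace CoxGeom

open CoxeterSystem

section NewSystem

variable {I : Type*} [Fintype I] [DecidableEq I] {M : CoxeterMatrix I} {cs : CoxeterSystem M W}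
  {J : Set I} {a b : I} {k : ℕ}

/-- A character of `W` with `a ↦ -1` and all other generators mapping to `1`; it exists because
the finite labels at `a` are even. -/
lemma Leaf.exists_char (L : Leaf cs J a b k) :
    ∃ χ : W →* ℤˣ, ∀ c, χ (cs.simple c) = if c = a then -1 else 1 := by
  have hev : ∀ c, c ≠ a → Even (M a c) := by
    intro c hca
    by_cases hc : c ∈ J
    · rcases eq_or_ne c b with rfl | hcb
      · rw [L.edge]; exact even_two_mul k
      · rw [L.two c hc hca hcb]; exact even_two
    · by_cases h0 : M c a = 0
      · rw [M.symmetric, h0]; exact ⟨0, rfl⟩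
      · rw [M.symmetric, L.out c hc h0 a L.ha]; exact even_two
  refine ⟨cs.lift ⟨fun c => if c = a then -1 else 1, fun u v => ?_⟩,
    fun c => cs.lift_apply_simple _ c⟩
  simp only
  rcases eq_or_ne u v with rfl | huv
  · rw [M.diagonal, pow_one, units_sq]
  · split_ifs with hu hv hv
    · exact absurd (hu.trans hv.symm) huv
    · subst hu; exact units_pow_even _ (hev v hv)
    · subst hv; rw [M.symmetric]; exact units_pow_even _ (hev u hu)
    · simp

/-- A family of involutions satisfying the relations of a Coxeter matrix for ordered pairs, up to
exchanging the two entries. -/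
lemma liftable_of_symm {X K : Type*} [Group X] (N : CoxeterMatrix K) (f : K → X)
    (hsq : ∀ u, f u * f u = 1) (P : K → K → Prop) (hP : ∀ u v, u ≠ v → P u v ∨ P v u)
    (h : ∀ u v, u ≠ v → P u v → (f u * f v) ^ N u v = 1) : N.IsLiftable f := by
  intro u v
  rcases eq_or_ne u v with rfl | huv
  · rw [N.diagonal, pow_one, hsq]
  rcases hP u v huv with h1 | h1
  · exact h u v huv h1
  · have h2 := h v u huv.symm h1
    have hinv : ∀ u, (f u)⁻¹ = f u := fun u => inv_eq_of_mul_eq_one_left (hsq u)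
    rw [← inv_inj, ← inv_pow, mul_inv_rev, hinv, hinv, _root_.inv_one, N.symmetric, h2]

lemma pow_two_of_commute {X : Type*} [Group X] {x y : X} (h : Commute x y) (hx : x * x = 1)
    (hy : y * y = 1) : (x * y) ^ 2 = 1 := by
  rw [h.mul_pow, pow_two, pow_two, hx, hy, one_mul]

namespace Leaf

variable (L : Leaf cs J a b k) {ζ : (baseM M J).Group} (hζ : Cen M J a ζ)
include hζ

lemma toW_sq : L.toW ζ * L.toW ζ = 1 := by rw [← map_mul, hζ.sq, map_one]

lemma toW_comm {c : I} (hc : c ∈ J) : Commute (L.toW ζ) (cs.simple c) := by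
  have := congrArg L.toW (hζ.comm ((baseM M J).toCoxeterSystem.simple ⟨c, hc⟩))
  rwa [map_mul, map_mul, toW_simple] at this

lemma toW_comm' {c : I} (hc : M c a ≠ 0) : Commute (L.toW ζ) (cs.simple c) := by
  by_cases hcJ : c ∈ J
  · exact L.toW_comm hζ hcJ
  · exact commute_perp cs (L.toW_mem ζ) (simple_mem_par cs (L.out c hcJ hc))

/-- The images of the modified generators in `W`. -/
noncomputable def img (L : Leaf cs J a b k) (ζ : (baseM M J).Group) : Option I → W
  | none => L.toW ζ
  | some c => if c = a then cs.simple a * cs.simple b * cs.simple a else cs.simple c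

omit hζ in
lemma img_a : L.img ζ (some a) = cs.simple a * cs.simple b * cs.simple a := if_pos rfl

omit hζ in
lemma img_ne {c : I} (h : c ≠ a) : L.img ζ (some c) = cs.simple c := if_neg h

lemma img_sq (u : Option I) : L.img ζ u * L.img ζ u = 1 := by
  rcases u with - | c
  · exact L.toW_sq hζ
  · rcases eq_or_ne c a with rfl | h
    · rw [img_a]; simp [mul_assoc]
    · rw [L.img_ne h]; simp

/-- The modified generators satisfy the relations of the modified Coxeter matrix. -/
lemma img_liftable : (newM M a b k L.k_ne).IsLiftable (L.img ζ) := by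
  refine liftable_of_symm _ _ (L.img_sq hζ)
    (fun u v => u = none ∨ (u = some a ∧ ∃ c, v = some c) ∨ ∃ c c', c ≠ a ∧ c' ≠ a ∧ u = some c ∧
      v = some c') ?_ ?_
  · intro u v huv
    rcases u with - | u
    · exact Or.inl (Or.inl rfl)
    rcases v with - | v
    · exact Or.inr (Or.inl rfl)
    rcases eq_or_ne u a with rfl | hu
    · exact Or.inl (Or.inr (Or.inl ⟨rfl, v, rfl⟩))
    rcases eq_or_ne v a with rfl | hv
    · exact Or.inr (Or.inr (Or.inl ⟨rfl, u, rfl⟩))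
    · exact Or.inl (Or.inr (Or.inr ⟨u, v, hu, hv, rfl, rfl⟩))
  · rintro u v huv (rfl | ⟨rfl, c, rfl⟩ | ⟨c, c', hc, hc', rfl, rfl⟩)
    · rcases v with - | c
      · exact absurd rfl huv
      rw [newM_none]
      split_ifs with h0
      · exact pow_zero _
      refine pow_two_of_commute ?_ (L.img_sq hζ _) (L.img_sq hζ _)
      change Commute (L.toW ζ) _
      rcases eq_or_ne c a with rfl | hca
      · rw [img_a]
        exact ((L.toW_comm hζ L.ha).mul_right (L.toW_comm hζ L.hb)).mul_right (L.toW_comm hζ L.ha)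
      · rw [L.img_ne hca]; exact L.toW_comm' hζ h0
    · have hca : c ≠ a := fun h => huv (by rw [h])
      rw [newM_a _ hca, img_a, L.img_ne hca]
      unfold leg
      split_ifs with h1 h0
      · subst h1
        have := cs.simple_mul_simple_pow a c
        rw [L.edge, pow_mul, pow_two] at this
        rw [← this]; simp only [mul_assoc]
      · exact pow_zero _
      · have hcomm : Commute (cs.simple a) (cs.simple c) := by
          refine commute_of_two cs ?_
          by_cases hcJ : c ∈ J
          · exact L.two c hcJ hca h1
          · rw [M.symmetric]; exact L.out c hcJ h0 a L.ha
        have h2 : cs.simple a * cs.simple b * cs.simple a * cs.simple c =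
            cs.simple a * (cs.simple b * cs.simple c) * (cs.simple a)⁻¹ := by
          rw [inv_simple, mul_assoc _ (cs.simple a) (cs.simple c), hcomm.eq]
          simp only [mul_assoc]
        rw [h2, conj_pow, cs.simple_mul_simple_pow]; simp
    · rw [newM_ne _ hc hc', L.img_ne hc, L.img_ne hc', cs.simple_mul_simple_pow]

/-- The homomorphism from the modified Coxeter group to `W`. -/
noncomputable def fromNew : (newM M a b k L.k_ne).Group →* W :=
  L.sys.lift ⟨L.img ζ, L.img_liftable hζ⟩

lemma fromNew_simple (u : Option I) : L.fromNew hζ (L.sys.simple u) = L.img ζ u :=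
  CoxeterSystem.lift_apply_simple _ _ u

/-- The element of the modified base group which, multiplied by the central generator, plays the
role of the generator `a`. -/
noncomputable def dd (L : Leaf cs J a b k) (ζ : (baseM M J).Group) :
    (foldM M J a b k L.k_ne).Group :=
  comp (baseM M J).toCoxeterSystem (foldM M J a b k L.k_ne).toCoxeterSystem L.fold ζ

lemma exists_chi : ∃ χ : (baseM M J).Group →* ℤˣ,
    χ ((baseM M J).toCoxeterSystem.simple ⟨a, L.ha⟩) = -1 ∧
    (∀ c, c ≠ ⟨a, L.ha⟩ → χ ((baseM M J).toCoxeterSystem.simple c) = 1) ∧ χ ζ = -1 := by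
  obtain ⟨χ, hχ⟩ := L.exists_char
  have h : ∀ c : J, χ.comp L.toW ((baseM M J).toCoxeterSystem.simple c) =
      if (c : I) = a then -1 else 1 := fun c => by
    rw [MonoidHom.comp_apply, toW_simple, hχ]
  refine ⟨χ.comp L.toW, ?_, fun c hc => ?_, hζ.chi _ h⟩
  · rw [h]; exact if_pos rfl
  · rw [h]; exact if_neg fun h' => hc (Subtype.ext h')

lemma dd_sq : L.dd ζ * L.dd ζ = 1 := by
  obtain ⟨χ, h1, h2, h3⟩ := L.exists_chi hζ
  exact comp_sq _ _ L.fold hζ.comm hζ.sq χ h1 h2 h3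

lemma dd_conj (e : (foldM M J a b k L.k_ne).Group) : L.dd ζ * e =
    tau (foldM M J a b k L.k_ne).toCoxeterSystem L.fold e * L.dd ζ := by
  obtain ⟨χ, h1, h2, h3⟩ := L.exists_chi hζ
  exact comp_conj _ _ L.fold hζ.comm hζ.sq χ h1 h2 h3 e

lemma eval_zeta {X : Type*} [Group X] (j : (foldM M J a b k L.k_ne).Group →* X) {x : X}
    (hx : x * x = 1) (hxj : ∀ e, x * j e =
      j (tau (foldM M J a b k L.k_ne).toCoxeterSystem L.fold e) * x)
    (lam : (baseM M J).Group →* X)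
    (hla : lam ((baseM M J).toCoxeterSystem.simple ⟨a, L.ha⟩) = x)
    (hlc : ∀ c, c ≠ ⟨a, L.ha⟩ → lam ((baseM M J).toCoxeterSystem.simple c) =
      j ((foldM M J a b k L.k_ne).toCoxeterSystem.simple c)) :
    lam ζ = j (L.dd ζ) * x := by
  obtain ⟨χ, h1, h2, h3⟩ := L.exists_chi hζ
  exact eval_central _ _ L.fold χ h1 h2 h3 j hx hxj lam hla hlc

/-- The image of the generator `a` in the modified Coxeter group. -/
noncomputable def newA (L : Leaf cs J a b k) (ζ : (baseM M J).Group) :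
    (newM M a b k L.k_ne).Group := L.sys.simple none * L.inc (L.dd ζ)

omit hζ in
lemma none_comm (e : (foldM M J a b k L.k_ne).Group) :
    Commute (L.sys.simple none) (L.inc e) :=
  L.comm_inc (fun _ hc => L.newM_none_J hc) e

lemma newA_sq : L.newA ζ * L.newA ζ = 1 := by
  unfold newA
  have h := L.none_comm (L.dd ζ)
  rw [h.symm.mul_mul_mul_comm, simple_mul_simple_self, ← map_mul, L.dd_sq hζ, map_one, one_mul]

lemma newA_conj (e : (foldM M J a b k L.k_ne).Group) : L.newA ζ * L.inc e =
    L.inc (tau (foldM M J a b k L.k_ne).toCoxeterSystem L.fold e) * L.newA ζ := by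
  unfold newA
  rw [mul_assoc, ← map_mul, L.dd_conj hζ, map_mul, ← mul_assoc, (L.none_comm _).eq, mul_assoc]

end Leaf

end NewSystem

end CoxGeom

/-! ### The group with the modified generators is `W` -/

namespace CoxGeom

open CoxeterSystem
open scoped commutatorElement

section NewBase

variable {I : Type*} [Fintype I] [DecidableEq I] {M : CoxeterMatrix I} {cs : CoxeterSystem M W}
  {J : Set I} {a b : I} {k : ℕ}

namespace Leaf

variable (L : Leaf cs J a b k) {ζ : (baseM M J).Group} (hζ : Cen M J a ζ)
include hζ

/-- The images of the old generators in the modified Coxeter group satisfy the old relations. -/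
lemma toNew_liftable :
    M.IsLiftable (fun c => if c = a then L.newA ζ else L.sys.simple (some c)) := by
  have hsq : ∀ c, (if c = a then L.newA ζ else L.sys.simple (some c)) *
      (if c = a then L.newA ζ else L.sys.simple (some c)) = 1 := by
    intro c
    split_ifs
    · exact L.newA_sq hζ
    · exact simple_mul_simple_self _ _
  refine liftable_of_symm _ _ hsq (fun u v => u = a ∨ (u ≠ a ∧ v ≠ a)) (fun u v _ => ?_) ?_
  · by_cases h : u = a
    · exact Or.inl (Or.inl h)
    · by_cases h' : v = a
      · exact Or.inr (Or.inl h')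
      · exact Or.inl (Or.inr ⟨h, h'⟩)
  · rintro u v huv (rfl | ⟨hu, hv⟩)
    · rw [if_pos rfl, if_neg huv.symm]
      by_cases hv : v ∈ J
      · have h1 := L.newA_conj hζ ((foldM M J u b k L.k_ne).toCoxeterSystem.simple ⟨v, hv⟩)
        rw [tau_simple, inc_simple, inc_simple] at h1
        rcases eq_or_ne v b with rfl | hvb
        · rw [Equiv.swap_apply_right] at h1
          rw [L.edge, pow_mul, pow_two, ← mul_assoc]
          nth_rw 1 [h1]
          rw [mul_assoc (L.sys.simple _), L.newA_sq hζ, mul_one]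
          have h2 := L.sys.simple_mul_simple_pow (some u) (some v)
          rw [newM_a _ huv.symm] at h2
          simpa [leg] using h2
        · rw [Equiv.swap_apply_of_ne_of_ne (fun h => huv (congrArg Subtype.val h).symm)
            (fun h => hvb (congrArg Subtype.val h))] at h1
          rw [L.two v hv huv.symm hvb]
          exact pow_two_of_commute h1 (L.newA_sq hζ) (simple_mul_simple_self _ _)
      · by_cases h0 : M v u = 0
        · rw [M.symmetric, h0, pow_zero]
        · rw [M.symmetric, L.out v hv h0 u L.ha]
          refine pow_two_of_commute ?_ (L.newA_sq hζ) (simple_mul_simple_self _ _)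
          refine Commute.mul_left ?_ ?_
          · refine commute_of_two L.sys ?_
            rw [newM_none, if_neg h0]
          · exact (L.comm_inc (fun c hc => L.newM_out hv h0 hc) _).symm
    · rw [if_neg hu, if_neg hv, ← newM_ne L.k_ne hu hv]
      exact L.sys.simple_mul_simple_pow _ _

/-- The homomorphism from `W` to the modified Coxeter group. -/
noncomputable def toNew : W →* (newM M a b k L.k_ne).Group :=
  cs.lift ⟨_, L.toNew_liftable hζ⟩

lemma toNew_a : L.toNew hζ (cs.simple a) = L.newA ζ := by
  unfold toNew; rw [cs.lift_apply_simple, if_pos rfl]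

lemma toNew_ne {c : I} (h : c ≠ a) : L.toNew hζ (cs.simple c) = L.sys.simple (some c) := by
  unfold toNew; rw [cs.lift_apply_simple, if_neg h]

/-- In `W`, the central involution of the base is the product of `a` and an element of the modified
base group. -/
lemma toW_zeta : L.toW ζ = L.fromNew hζ (L.inc (L.dd ζ)) * cs.simple a := by
  refine L.eval_zeta hζ ((L.fromNew hζ).comp L.inc) (cs.simple_mul_simple_self a) ?_ L.toW
    (L.toW_simple _) ?_
  · intro e
    induction e using (foldM M J a b k L.k_ne).toCoxeterSystem.simple_induction with
    | one => simp
    | mul g g' h h' => rw [map_mul, ← mul_assoc, h, mul_assoc, h', map_mul, map_mul, mul_assoc]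
    | simple c =>
      rw [tau_simple, MonoidHom.comp_apply, MonoidHom.comp_apply, inc_simple, inc_simple,
        fromNew_simple, fromNew_simple]
      rcases eq_or_ne c ⟨a, L.ha⟩ with rfl | hca
      · rw [Equiv.swap_apply_left, img_a, L.img_ne L.ne.symm]
        simp only [← mul_assoc]
        simp
      · have hca' : (c : I) ≠ a := fun h => hca (Subtype.ext h)
        rcases eq_or_ne c ⟨b, L.hb⟩ with rfl | hcb
        · rw [Equiv.swap_apply_right, img_a, L.img_ne L.ne.symm]
          simp [mul_assoc]
        · have hcb' : (c : I) ≠ b := fun h => hcb (Subtype.ext h)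
          rw [Equiv.swap_apply_of_ne_of_ne hca hcb, L.img_ne hca']
          exact commute_of_two cs (L.two c c.2 hca' hcb')
  · intro c hc
    rw [MonoidHom.comp_apply, inc_simple, fromNew_simple, toW_simple,
      L.img_ne (fun h => hc (Subtype.ext h))]

/-- The modified Coxeter group sees the central involution of the base as its generator `none`. -/
lemma toNew_zeta : L.toNew hζ (L.toW ζ) = L.sys.simple none := by
  have h : (L.toNew hζ).comp L.toW ζ = L.inc (L.dd ζ) * L.newA ζ := by
    refine L.eval_zeta hζ L.inc (L.newA_sq hζ) (L.newA_conj hζ) _ ?_ ?_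
    · rw [MonoidHom.comp_apply, toW_simple, L.toNew_a hζ]
    · intro c hc
      rw [MonoidHom.comp_apply, toW_simple, L.toNew_ne hζ (fun h => hc (Subtype.ext h)),
        inc_simple]
  rw [MonoidHom.comp_apply] at h
  rw [h, newA, (L.none_comm _).eq, ← mul_assoc, ← map_mul, L.dd_sq hζ, map_one, one_mul]

lemma fromNew_newA : L.fromNew hζ (L.newA ζ) = cs.simple a := by
  have h := L.toW_zeta hζ
  have h2 : L.fromNew hζ (L.inc (L.dd ζ)) = L.toW ζ * cs.simple a := by
    rw [h, mul_assoc, simple_mul_simple_self, mul_one]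
  rw [newA, map_mul, fromNew_simple, h2]
  change L.toW ζ * _ = _
  rw [← mul_assoc, L.toW_sq hζ, one_mul]

/-- `W` is isomorphic to the modified Coxeter group. -/
noncomputable def newEquiv : (newM M a b k L.k_ne).Group ≃* W :=
  MonoidHom.toMulEquiv (L.fromNew hζ) (L.toNew hζ)
    (by
      refine L.sys.ext_simple fun u => ?_
      rw [MonoidHom.comp_apply, fromNew_simple, MonoidHom.id_apply]
      rcases u with - | c
      · exact L.toNew_zeta hζ
      · rcases eq_or_ne c a with rfl | h
        · rw [img_a, map_mul, map_mul, L.toNew_a hζ, L.toNew_ne hζ L.ne.symm]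
          have := L.newA_conj hζ ((foldM M J c b k L.k_ne).toCoxeterSystem.simple ⟨b, L.hb⟩)
          rw [tau_simple, inc_simple, inc_simple, Equiv.swap_apply_right] at this
          rw [this, mul_assoc, L.newA_sq hζ, mul_one]
        · rw [L.img_ne h, L.toNew_ne hζ h])
    (by
      refine cs.ext_simple fun c => ?_
      rw [MonoidHom.comp_apply, MonoidHom.id_apply]
      rcases eq_or_ne c a with rfl | h
      · rw [L.toNew_a hζ, L.fromNew_newA hζ]
      · rw [L.toNew_ne hζ h, fromNew_simple, L.img_ne h])

/-- The modified Coxeter generators of `W`. -/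
noncomputable def newSys : CoxeterSystem (newM M a b k L.k_ne) W :=
  L.sys.map (L.newEquiv hζ)

lemma newSys_simple (u : Option I) : (L.newSys hζ).simple u = L.img ζ u :=
  L.fromNew_simple hζ u

end Leaf

end NewBase

end CoxGeom

/-! ### The modified base -/

namespace CoxGeom

open CoxeterSystem
open scoped commutatorElement

section NewBase

variable {I : Type*} [Fintype I] [DecidableEq I] {M : CoxeterMatrix I} {cs : CoxeterSystem M W}
  {J : Set I} {a b : I} {k : ℕ}

namespace Leaf

variable (L : Leaf cs J a b k) {ζ : (baseM M J).Group} (hζ : Cen M J a ζ)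

/-- Contracting the leaf `a` onto `b` shows that the modified base is irreducible without the
generator `aba`; the latter is adjoined by means of one of its edges. -/
lemma new_irr : Irr (newM M a b k L.k_ne) (some '' J) := by
  set M' := newM M a b k L.k_ne
  have hb' : b ∈ J \ {a} := ⟨L.hb, L.ne.symm⟩
  have h1 : Irr M (J \ {a}) := by
    refine ⟨⟨b, hb'⟩, fun u hu v hv => ?_⟩
    have h := L.base.irr.2 u hu.1 v hv.1
    have key : ∀ x y, x ∈ J → y ∈ J → x ≠ y → M x y ≠ 2 → Relation.ReflTransGen
        (fun x y => x ∈ J \ {a} ∧ y ∈ J \ {a} ∧ x ≠ y ∧ M x y ≠ 2)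
        (if x = a then b else x) (if y = a then b else y) := by
      intro x y hx hy hxy h2
      split_ifs with hxa hya hya
      · exact .refl
      · subst hxa
        have : y = b := by
          by_contra hyb
          exact h2 (L.two y hy hya hyb)
        rw [this]
      · subst hya
        have : x = b := by
          by_contra hxb
          rw [M.symmetric] at h2
          exact h2 (L.two x hx hxa hxb)
        rw [this]
      · exact .single ⟨⟨hx, hxa⟩, ⟨hy, hya⟩, hxy, h2⟩
    have h' : Relation.ReflTransGen (fun x y => x ∈ J \ {a} ∧ y ∈ J \ {a} ∧ x ≠ y ∧ M x y ≠ 2)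
        (if u = a then b else u) (if v = a then b else v) := by
      clear hv
      induction h with
      | refl => exact .refl
      | tail _ hbc ih => exact ih.trans (key _ _ hbc.1 hbc.2.1 hbc.2.2.1 hbc.2.2.2)
    have hua : u ≠ a := hu.2
    have hva : v ≠ a := hv.2
    rwa [if_neg hua, if_neg hva] at h'
  have h2 : Irr M' (some '' (J \ {a})) := by
    refine ⟨h1.1.image _, ?_⟩
    rintro _ ⟨u, hu, rfl⟩ _ ⟨v, hv, rfl⟩
    refine lift_chain some (fun x y h => ⟨⟨x, h.1, rfl⟩, ⟨y, h.2.1, rfl⟩, ?_, ?_⟩) (h1.2 u hu v hv)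
    · exact fun h' => h.2.2.1 (Option.some.inj h')
    · rw [newM_ne L.k_ne h.1.2 h.2.1.2]; exact h.2.2.2
  have h3 : (some '' J : Set (Option I)) = insert (some a) (some '' (J \ {a})) := by
    rw [← Set.image_insert_eq, Set.insert_sdiff_singleton, Set.insert_eq_of_mem L.ha]
  rw [h3]
  obtain ⟨c, hc, hca, hc2⟩ : ∃ c ∈ J, c ≠ a ∧ leg M a b k c ≠ 2 := by
    by_cases hk : k = 2
    · obtain ⟨c, hc, hca, hcb, h⟩ := L.big.resolve_left (not_not_intro hk)
      exact ⟨c, hc, hca, by rwa [L.leg_eq hc hcb]⟩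
    · exact ⟨b, L.hb, L.ne.symm, by simpa [leg] using hk⟩
  refine h2.adjoin (t := some c) ⟨c, ⟨hc, hca⟩, rfl⟩ (fun h => hca (Option.some.inj h).symm) ?_
  rw [newM_a L.k_ne hca]
  exact hc2

include hζ

lemma img_mem {c : I} (hc : c ∈ J) : L.img ζ (some c) ∈ par cs J := by
  have h := fun c hc => simple_mem_par cs (J := J) (s := c) hc
  rcases eq_or_ne c a with rfl | hca
  · rw [img_a]; exact mul_mem (mul_mem (h _ hc) (h _ L.hb)) (h _ hc)
  · rw [L.img_ne hca]; exact h _ hc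

lemma new_par_le : par (L.newSys hζ) (some '' J) ≤ par cs J := by
  refine par_le _ ?_
  rintro _ ⟨c, hc, rfl⟩
  rw [newSys_simple]
  exact L.img_mem hζ hc

lemma new_base : Base (L.newSys hζ) (some '' J) where
  irr := L.new_irr
  fin := L.base.fin.subset (L.new_par_le hζ)
  two := L.base.two.image (Option.some_injective I)
  max s hs hf := by
    rcases s with - | s
    · rintro _ ⟨c, hc, rfl⟩
      exact L.newM_none_J hc
    · have hsJ : s ∉ J := fun h => hs ⟨s, h, rfl⟩
      have hsa : s ≠ a := fun h => hsJ (h ▸ L.ha)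
      have h0 := ne_zero_of_finite (L.newSys hζ) hf (s := some a) (t := some s)
        (Or.inr ⟨a, L.ha, rfl⟩) (Or.inl rfl)
      rw [newM_a L.k_ne hsa, leg, if_neg (fun h : s = b => hsJ (h ▸ L.hb))] at h0
      have h1 : M s a ≠ 0 := fun h => h0 (if_pos h)
      rintro _ ⟨c, hc, rfl⟩
      exact L.newM_out hsJ h1 hc

lemma fromNew_inc_mem (e : (foldM M J a b k L.k_ne).Group) :
    L.fromNew hζ (L.inc e) ∈ par (L.newSys hζ) (some '' J) := by
  induction e using (foldM M J a b k L.k_ne).toCoxeterSystem.simple_induction with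
  | one => rw [map_one, map_one]; exact one_mem _
  | simple c =>
    rw [inc_simple, fromNew_simple, ← L.newSys_simple hζ]
    exact simple_mem_par _ ⟨c, c.2, rfl⟩
  | mul g g' h h' => rw [map_mul, map_mul]; exact mul_mem h h'

lemma toW_central {g : W} (hg : g ∈ par cs J) : Commute (L.toW ζ) g :=
  par_induction cs (p := fun g => Commute (L.toW ζ) g) (Commute.one_right _)
    (fun _ hs _ _ ih => (L.toW_comm hζ hs).mul_right ih) hg

/-- The finite Coxeter group of the base is generated by that of the modified base and the central
involution. -/
lemma par_decomp {g : W} (hg : g ∈ par cs J) :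
    g ∈ par (L.newSys hζ) (some '' J) ∨ L.toW ζ * g ∈ par (L.newSys hζ) (some '' J) := by
  set P := par (L.newSys hζ) (some '' J)
  have hsq := L.toW_sq hζ
  refine par_induction cs (p := fun g => g ∈ P ∨ L.toW ζ * g ∈ P) (Or.inl (one_mem _)) ?_ hg
  intro s hs w hw ih
  rcases eq_or_ne s a with rfl | hsa
  · have h1 : L.toW ζ * cs.simple s ∈ P := by
      have := L.fromNew_inc_mem hζ (L.dd ζ)
      rwa [L.toW_zeta hζ, mul_assoc, simple_mul_simple_self, mul_one]
    rcases ih with ih | ih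
    · right; rw [← mul_assoc]; exact mul_mem h1 ih
    · left
      have := mul_mem h1 ih
      rwa [mul_assoc, ← mul_assoc (cs.simple s), ← (L.toW_comm hζ hs).eq, mul_assoc, ← mul_assoc,
        hsq, one_mul] at this
  · have h1 : cs.simple s ∈ P := by
      rw [← L.img_ne (ζ := ζ) hsa, ← L.newSys_simple hζ]
      exact simple_mem_par _ ⟨s, hs, rfl⟩
    rcases ih with ih | ih
    · exact Or.inl (mul_mem h1 ih)
    · right
      rw [← mul_assoc, (L.toW_comm hζ hs).eq, mul_assoc]
      exact mul_mem h1 ih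

/-- Since `⟨J⟩` is generated by the modified base group and a central element, both have the same
commutator subgroup. -/
lemma new_commutator : ⁅par cs J, par cs J⁆ =
    ⁅par (L.newSys hζ) (some '' J), par (L.newSys hζ) (some '' J)⁆ := by
  refine le_antisymm ?_ (Subgroup.commutator_mono (L.new_par_le hζ) (L.new_par_le hζ))
  have hdec : ∀ g ∈ par cs J, ∃ p ∈ par (L.newSys hζ) (some '' J), ∃ z, z * z = 1 ∧
      (∀ x ∈ par cs J, Commute z x) ∧ g = z * p := by
    intro g hg
    rcases L.par_decomp hζ hg with h | h
    · exact ⟨g, h, 1, one_mul 1, fun _ _ => Commute.one_left _, (one_mul g).symm⟩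
    · refine ⟨_, h, L.toW ζ, L.toW_sq hζ, fun x hx => L.toW_central hζ hx, ?_⟩
      rw [← mul_assoc, L.toW_sq hζ, one_mul]
  refine Subgroup.commutator_le.2 fun g hg h hh => ?_
  obtain ⟨p, hp, z, -, hz, rfl⟩ := hdec g hg
  obtain ⟨p', hp', z', -, hz', rfl⟩ := hdec h hh
  have hpJ := L.new_par_le hζ hp
  have hpJ' := L.new_par_le hζ hp'
  have e1 : ⁅z * p, z' * p'⁆ = ⁅p, z' * p'⁆ := by
    have := (hz _ hh).eq
    simp only [commutatorElement_def, mul_inv_rev]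
    have h2 := (hz _ (mul_mem (mul_mem hpJ hh) (inv_mem hpJ))).eq
    calc z * p * (z' * p') * (p⁻¹ * z⁻¹) * (p'⁻¹ * z'⁻¹)
        = z * (p * (z' * p') * p⁻¹) * z⁻¹ * (p'⁻¹ * z'⁻¹) := by group
      _ = p * (z' * p') * p⁻¹ * (p'⁻¹ * z'⁻¹) := by rw [h2, mul_inv_cancel_right]
  have e2 : ⁅p, z' * p'⁆ = ⁅p, p'⁆ := by
    simp only [commutatorElement_def, mul_inv_rev]
    have h2 := (hz' _ hpJ).eq
    have h3 := (hz' _ (mul_mem (mul_mem (mul_mem hpJ hpJ') (inv_mem hpJ)) (inv_mem hpJ'))).eq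
    calc p * (z' * p') * p⁻¹ * (p'⁻¹ * z'⁻¹)
        = (p * z') * p' * p⁻¹ * p'⁻¹ * z'⁻¹ := by group
      _ = z' * (p * p' * p⁻¹ * p'⁻¹) * z'⁻¹ := by rw [← h2]; group
      _ = p * p' * p⁻¹ * p'⁻¹ := by rw [h3, mul_inv_cancel_right]
  rw [e1, e2]
  exact Subgroup.commutator_mem_commutator hp hp'

/-- The character with `a ↦ -1` is trivial on the modified base group. -/
lemma new_card : Nat.card (par (L.newSys hζ) (some '' J)) < Nat.card (par cs J) := by
  have hfin : (par cs J : Set W).Finite := L.base.fin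
  refine Set.ncard_lt_ncard (ssubset_of_subset_of_ne (L.new_par_le hζ) fun h => ?_) hfin
  obtain ⟨χ, hχ⟩ := L.exists_char
  have hker : par (L.newSys hζ) (some '' J) ≤ χ.ker := by
    refine par_le _ ?_
    rintro _ ⟨c, hc, rfl⟩
    rw [newSys_simple, MonoidHom.mem_ker]
    rcases eq_or_ne c a with rfl | hca
    · rw [img_a, map_mul, map_mul, hχ, hχ, if_pos rfl, if_neg L.ne.symm]; rfl
    · rw [L.img_ne hca, hχ, if_neg hca]
  have ha : cs.simple a ∈ (par (L.newSys hζ) (some '' J) : Set W) := by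
    rw [h]; exact simple_mem_par cs L.ha
  have h1 := MonoidHom.mem_ker.1 (hker ha)
  rw [hχ, if_pos rfl] at h1
  exact absurd h1 (by decide)

omit L hζ in
/-- The modified base matches `J` and generates a smaller group. -/
theorem not_reduced (L : Leaf cs J a b k) {ζ : (baseM M J).Group} (hζ : Cen M J a ζ)
    (m : W → W → ℕ) (S : Set W) : ¬ IsReducedBase m S (cs.simple '' J) := by
  intro h
  obtain ⟨m', hm'⟩ := exists_matrix (L.newSys hζ)
  refine (h _ m' _ (isCoxeterSystemOn_range _ hm') (Set.finite_range _)
    ((isBase_iff _ hm').2 (L.new_base hζ)) ⟨1, ?_⟩).not_gt (L.new_card hζ)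
  rw [map_one]
  exact (Subgroup.map_id _).trans (L.new_commutator hζ)

end Leaf

end NewBase

end CoxGeom

/-! ### The unreduced bases -/

namespace CoxGeom

open CoxeterSystem

section Reverse

variable {I : Type*} [Fintype I] [DecidableEq I] {M : CoxeterMatrix I} (cs : CoxeterSystem M W)

/-- An element acting as `-1` in the geometric representation is a central involution. -/
lemma neg_central {ζ : W} (h : ∀ v, rep cs ζ v = -v) : (∀ g, ζ * g = g * ζ) ∧ ζ * ζ = 1 :=
  ⟨fun g => eq_of_rep_al cs fun s => by rw [rep_mul, rep_mul, h, h, map_neg],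
    eq_of_rep_al cs fun s => by rw [rep_mul, h, h, neg_neg, rep_one]⟩

/-- The half turn of the dihedral group is the central involution needed in `Leaf.not_reduced`. -/
lemma Base.dihedral_not_reduced {x y : I} (hJ : Base cs {x, y}) {q : ℕ} (hq : 1 ≤ q)
    (hM : M x y = 4 * q + 2) (hout : ∀ s ∉ ({x, y} : Set I), M s x ≠ 0 → s ∈ perp M {x, y})
    (m : W → W → ℕ) (S : Set W) : ¬ IsReducedBase m S (cs.simple '' {x, y}) := by
  classical
  have hxy : x ≠ y := by rintro rfl; rw [M.diagonal] at hM; omega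
  have hx : x ∈ ({x, y} : Set I) := Or.inl rfl
  have hy : y ∈ ({x, y} : Set I) := Or.inr rfl
  have L : Leaf cs {x, y} x y (2 * q + 1) :=
    { base := hJ, ha := hx, hb := hy, ne := hxy, edge := by omega, k_ne := by omega
      two := by
        rintro c (rfl | rfl) h1 h2
        · exact absurd rfl h1
        · exact absurd rfl h2
      out := hout
      big := Or.inl (by omega) }
  set B := (baseM M {x, y}).toCoxeterSystem
  set ζ := (B.simple ⟨x, hx⟩ * B.simple ⟨y, hy⟩) ^ (2 * q + 1) with hζ
  have hneg : ∀ v, rep B ζ v = -v := fun v =>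
    dihedral_neg B (x := ⟨x, hx⟩) (y := ⟨y, hy⟩) (by omega)
      ((by omega : M x y = 2 * (2 * q + 1))) v
      (by
        rintro ⟨c, rfl | rfl⟩ hc
        · exact absurd (Or.inl rfl) hc
        · exact absurd (Or.inr rfl) hc)
  obtain ⟨h1, h2⟩ := neg_central B hneg
  refine L.not_reduced (ζ := ζ) ⟨h1, h2, fun χ hχ => ?_⟩ m S
  rw [hζ, map_pow, map_mul, hχ, hχ, if_pos rfl, if_neg hxy.symm, mul_one]
  exact units_pow_odd _ ⟨q, rfl⟩

/-- In odd rank, the element acting as `-1` is the central involution needed in `Leaf.not_reduced`. -/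
lemma Base.chain_not_reduced {J : Set I} (hJ : Base cs J) {p : ℕ → I} {q : ℕ} (hq : 1 ≤ q)
    (hp : Chain M J p (2 * q + 1)) (hcov : ∀ u ∈ J, ∃ i < 2 * q + 1, p i = u)
    (hout : ∀ s ∉ J, M s (p 0) ≠ 0 → s ∈ perp M J)
    (m : W → W → ℕ) (S : Set W) : ¬ IsReducedBase m S (cs.simple '' J) := by
  classical
  have hne : ∀ i < 2 * q + 1, ∀ j < 2 * q + 1, i ≠ j → p i ≠ p j := fun i hi j hj hij h =>
    hij (hp.inj i hi j hj h)
  have L : Leaf cs J (p 0) (p 1) 2 :=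
    { base := hJ, ha := hp.mem 0, hb := hp.mem 1, ne := hne _ (by omega) _ (by omega) (by omega)
      edge := hp.four, k_ne := by omega
      two := by
        intro c hc h1 h2
        obtain ⟨i, hi, rfl⟩ := hcov c hc
        have hi0 : i ≠ 0 := by rintro rfl; exact h1 rfl
        have hi1 : i ≠ 1 := by rintro rfl; exact h2 rfl
        exact hp.far 0 i (by omega) hi
      out := hout
      big := Or.inr ⟨p 2, hp.mem 2, hne _ (by omega) _ (by omega) (by omega),
        hne _ (by omega) _ (by omega) (by omega), by
          have : M (p 1) (p 2) = 3 := hp.three 1 le_rfl (by omega)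
          omega⟩ }
  set B := (baseM M J).toCoxeterSystem
  have hp' : Chain (baseM M J) Set.univ (fun i => ⟨p i, hp.mem i⟩) (2 * q + 1) :=
    { two := hp.two, mem := fun _ => trivial
      inj := fun i hi j hj h => hp.inj i hi j hj (congrArg Subtype.val h)
      four := hp.four, three := hp.three, far := hp.far }
  have hneg := fun v => hp'.neg B (fun u _ => by
    obtain ⟨i, hi, h⟩ := hcov u u.2
    exact ⟨i, hi, Subtype.ext h⟩) v (fun i hi => absurd trivial hi)
  obtain ⟨h1, h2⟩ := neg_central B hneg
  refine L.not_reduced ⟨h1, h2, fun χ hχ => ?_⟩ m S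
  rw [map_pow, units_pow_odd _ ⟨q, rfl⟩, map_word]
  -- only the first letter of the word is mapped to `-1`
  have key : ∀ n, n + 1 ≤ 2 * q + 1 → word (fun i => χ (B.simple ⟨p i, hp.mem i⟩)) (n + 1) = -1 := by
    intro n hn
    induction n with
    | zero =>
      have h0 : χ (B.simple ⟨p 0, hp.mem 0⟩) = -1 := (hχ _).trans (if_pos rfl)
      simpa [word] using h0
    | succ n ih =>
      rw [word_succ, ih (by omega), hχ, if_neg, mul_one]
      exact hne _ (by omega) _ (by omega) (by omega)
  exact key _ le_rfl

/-- An enumeration of type `C_n` as a chain starting at the end `a` of the edge labelled `4`. -/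
lemma chain_of_hasType {J : Set I} {n : ℕ} (hn : 3 ≤ n) (e : J ≃ Fin n)
    (he : ∀ u v : J, M u v = cMat n (e u) (e v)) {a b c : I} (ha : a ∈ J) (hb : b ∈ J) (hc : c ∈ J)
    (hab : M a b = 4) (hbc : M b c = 3) :
    ∃ p, Chain M J p n ∧ (∀ u ∈ J, ∃ i < n, p i = u) ∧ p 0 = a := by
  have hlt : ∀ i, n - 1 - i < n := by omega
  have hent : ∀ i j : Fin n, M (e.symm i) (e.symm j) = cMat n i j := fun i j => by
    rw [he, e.apply_symm_apply, e.apply_symm_apply]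
  refine ⟨fun i => e.symm ⟨n - 1 - i, hlt i⟩, ⟨by omega, fun i => (e.symm _).2, ?_, ?_, ?_, ?_⟩,
    ?_, ?_⟩
  · intro i hi j hj h
    have := congrArg Fin.val (e.symm.injective (Subtype.ext h))
    simp only at this
    omega
  · rw [hent]; simp only [cMat, Fin.ext_iff]; split_ifs <;> omega
  · intro i h1 h2
    rw [hent]; simp only [cMat, Fin.ext_iff]; split_ifs <;> omega
  · intro i j h1 h2
    rw [hent]; simp only [cMat, Fin.ext_iff]; split_ifs <;> omega
  · intro u hu
    have hlt' := (e ⟨u, hu⟩).2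
    refine ⟨n - 1 - (e ⟨u, hu⟩ : ℕ), by omega, ?_⟩
    have : (⟨n - 1 - (n - 1 - (e ⟨u, hu⟩ : ℕ)), hlt _⟩ : Fin n) = e ⟨u, hu⟩ :=
      Fin.ext (by simp only; omega)
    simp only [this, e.symm_apply_apply]
  · have h1 := he ⟨a, ha⟩ ⟨b, hb⟩
    have h2 := he ⟨b, hb⟩ ⟨c, hc⟩
    simp only [hab, hbc, cMat, Fin.ext_iff] at h1 h2
    have l1 := (e ⟨a, ha⟩).2
    have l2 := (e ⟨b, hb⟩).2
    have l3 := (e ⟨c, hc⟩).2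
    have : (⟨n - 1 - 0, hlt 0⟩ : Fin n) = e ⟨a, ha⟩ := by
      refine Fin.ext ?_
      simp only
      split_ifs at h1 h2 <;> omega
    simp only [this, e.symm_apply_apply]

end Reverse

theorem reverse_dihedral {m : W → W → ℕ} {S : Set W} (hcs : IsCoxeterSystemOn m S)
    (hfin : S.Finite) {a b : W} (hB : IsBase m S {a, b}) {q : ℕ} (hq : 1 ≤ q)
    (hab : m a b = 4 * q + 2)
    (h : (∀ s ∈ S, s ∉ ({a, b} : Set W) → m s a ≠ 0 → m s a = 2 ∧ m s b = 2) ∨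
      (∀ s ∈ S, s ∉ ({a, b} : Set W) → m s b ≠ 0 → m s a = 2 ∧ m s b = 2)) :
    ¬ IsReducedBase m S {a, b} := by
  classical
  have := hfin.fintype
  obtain ⟨M, cs, h1, hm⟩ := exists_index hcs
  obtain ⟨a, rfl⟩ : ∃ i, cs.simple i = a := ⟨⟨a, hB.1 (Or.inl rfl)⟩, h1 _⟩
  obtain ⟨b, rfl⟩ : ∃ i, cs.simple i = b := ⟨⟨b, hB.1 (Or.inr rfl)⟩, h1 _⟩
  rw [← Set.image_pair] at hB h ⊢
  rw [hm] at hab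
  have hJ : Base cs {a, b} := by
    rw [← isBase_iff cs hm, range_simple h1]; exact hB
  have hs : ∀ s : S, s ∉ ({a, b} : Set S) → cs.simple s ∈ S ∧ cs.simple s ∉ cs.simple '' {a, b} :=
    fun s hs => ⟨by rw [h1]; exact s.2, fun h => hs ((simple_mem_image cs).1 h)⟩
  have hout : ∀ s : S, m (cs.simple s) (cs.simple a) = 2 ∧ m (cs.simple s) (cs.simple b) = 2 →
      s ∈ perp M {a, b} := by
    rintro s ⟨h2, h3⟩ t (rfl | rfl)
    · rw [← hm]; exact h2
    · rw [← hm]; exact h3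
  rcases h with h | h
  · exact hJ.dihedral_not_reduced cs hq hab
      (fun s hs' h0 => hout s (h _ (hs s hs').1 (hs s hs').2 (by rwa [hm]))) m S
  · rw [Set.pair_comm] at hJ ⊢
    rw [M.symmetric] at hab
    refine hJ.dihedral_not_reduced cs hq hab (fun s hs' h0 => ?_) m S
    rw [Set.pair_comm] at hs' ⊢
    exact hout s (h _ (hs s hs').1 (hs s hs').2 (by rwa [hm]))

theorem reverse_chain {m : W → W → ℕ} {S : Set W} (hcs : IsCoxeterSystemOn m S)
    (hfin : S.Finite) {B : Set W} (hB : IsBase m S B) {q : ℕ} (hq : 1 ≤ q)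
    (htype : HasType m B (cMat (2 * q + 1))) {a b c : W} (ha : a ∈ B) (hb : b ∈ B) (hc : c ∈ B)
    (hab : m a b = 4) (hbc : m b c = 3)
    (h : ∀ s ∈ S, s ∉ B → ∀ t ∈ B, m s a ≠ 0 → m s t = 2) : ¬ IsReducedBase m S B := by
  classical
  have := hfin.fintype
  obtain ⟨M, cs, h1, hm⟩ := exists_index hcs
  obtain ⟨J, rfl⟩ : ∃ J, cs.simple '' J = B := ⟨_, image_preimage hB.1 h1⟩
  have hJ : Base cs J := by
    rw [← isBase_iff cs hm, range_simple h1]; exact hB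
  obtain ⟨a, ha, rfl⟩ := ha
  obtain ⟨b, hb, rfl⟩ := hb
  obtain ⟨c, hc, rfl⟩ := hc
  rw [hm] at hab hbc
  obtain ⟨e, he⟩ := htype
  let f : J ≃ ↥(cs.simple '' J) :=
    Equiv.Set.image cs.simple J (fun _ _ h => simple_inj cs h)
  obtain ⟨p, hp, hcov, rfl⟩ := chain_of_hasType (M := M) (n := 2 * q + 1) (by omega) (f.trans e)
    (fun u v => by rw [← hm]; exact he (f u) (f v)) ha hb hc hab hbc
  refine hJ.chain_not_reduced cs hq hp hcov (fun s hs h0 t ht => ?_) m S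
  rw [← hm] at h0 ⊢
  exact h _ (by rw [h1]; exact s.2) (fun h => hs ((simple_mem_image cs).1 h)) _ ⟨t, ht, rfl⟩ h0

/-- The label of a base of rank two is not `2`. -/
lemma IsBase.pair_ne_two {m : W → W → ℕ} {S : Set W} {a b : W} (hB : IsBase m S {a, b})
    (hab : a ≠ b) : m a b ≠ 2 := by
  intro h
  have h1 := hB.2.1.2 a (Or.inl rfl) b (Or.inr rfl)
  rcases Relation.ReflTransGen.cases_head h1 with h2 | ⟨c, ⟨-, hc, hac, h2⟩, -⟩
  · exact hab h2
  · rcases hc with rfl | rfl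
    · exact hac rfl
    · omega

end CoxGeom

/-- A basic subgroup `⟨B⟩` is unreduced iff `B` satisfies the conditions of
Theorem 5.2 (type `C_{2q+1}`) or of Theorem 5.4 (type `D₂(4q+2)`); in particular every
special base is unreduced. -/
theorem unreduced_characterization (m : W → W → ℕ) (S : Set W)
    (hcs : IsCoxeterSystemOn m S) (hfin : S.Finite)
    (B : Set W) (hB : IsBase m S B) :
    (¬ IsReducedBase m S B ↔
      ((∃ q : ℕ, 1 ≤ q ∧ HasType m B (cMat (2 * q + 1)) ∧
          ∃ a ∈ B, (∃ b ∈ B, ∃ c ∈ B, m a b = 4 ∧ m b c = 3) ∧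
            ∀ s ∈ S, s ∉ B → ∀ t ∈ B, m s a ≠ 0 → m s t = 2) ∨
       (∃ q : ℕ, 1 ≤ q ∧ ∃ a b : W, B = {a, b} ∧ a ≠ b ∧ m a b = 4 * q + 2 ∧
          ((∀ s ∈ S, s ∉ B → m s a ≠ 0 → m s a = 2 ∧ m s b = 2) ∨
           (∀ s ∈ S, s ∉ B → m s b ≠ 0 → m s a = 2 ∧ m s b = 2))))) ∧
    (∀ a b : W, B = {a, b} → IsSpecialPair m S a b → ¬ IsReducedBase m S B) := by
  refine ⟨⟨CoxGeom.forward_set hcs hfin hB, ?_⟩, ?_⟩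
  · rintro (⟨q, hq, htype, a, ha, ⟨b, hb, c, hc, hab, hbc⟩, h⟩ | ⟨q, hq, a, b, rfl, -, hab, h⟩)
    · exact CoxGeom.reverse_chain hcs hfin hB hq htype ha hb hc hab hbc h
    · exact CoxGeom.reverse_dihedral hcs hfin hB hq hab h
  · rintro a b rfl ⟨-, -, hne, hmod, h⟩
    have h2 := CoxGeom.IsBase.pair_ne_two hB hne
    have hout : ∀ s, s ∉ ({a, b} : Set W) → s ≠ a ∧ s ≠ b := fun s hs =>
      ⟨fun h => hs (Or.inl h), fun h => hs (Or.inr h)⟩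
    refine CoxGeom.reverse_dihedral hcs hfin hB (q := m a b / 4) (by omega) (by omega) ?_
    exact h.imp (fun h s hs hsB => h s hs (hout s hsB).1 (hout s hsB).2)
      (fun h s hs hsB => h s hs (hout s hsB).1 (hout s hsB).2)
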